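/- arXiv:2102.00285 — 3 statements merged into one kernel-verified Lean document; each statement's English description precedes it below -/
import Mathlib

section
/- Let A and B be locally indicable groups and let G = A ∗_{⟨p⟩≅⟨q⟩} B be an amalgamated product identifying elements p ∈ A and q ∈ B of infinite order, neither of which is a proper power in its factor. Then G is locally indicable. -/
/-- A group is locally indicable if every non-trivial finitely generated subgroup
surjects onto `ℤ`. -/
def LocallyIndicable (G : Type) [Group G] : Prop :=
  ∀ H : Subgroup G, H ≠ ⊥ → H.FG →
    ∃ f : H →* Multiplicative ℤ, Function.Surjective f

/-- `G` together with `iA`, `iB` is the amalgamated product `A ∗_{⟨p⟩=⟨q⟩} B`. -/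
def IsAmalgam {A B G : Type} [Group A] [Group B] [Group G]
    (iA : A →* G) (iB : B →* G) (p : A) (q : B) : Prop :=
  Function.Injective iA ∧ Function.Injective iB ∧ iA p = iB q ∧
  ∀ (K : Type) [Group K] (fA : A →* K) (fB : B →* K), fA p = fB q →
    ∃! f : G →* K, f.comp iA = fA ∧ f.comp iB = fB

/-!
Let `G` be the amalgam of `A` and `B` along a cyclic group `C`, and let `H` be a finitely generated
subgroup. The `G`-set `X = G ⧸ H` is the covering of the edge of groups of `G` with fundamental
group `H`: a graph of groups whose vertices are the orbits of `A` and of `B` on `X`, and whose edges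
are the orbits of `C`. As `H` is finitely generated, it is carried by finitely many vertices, and we
induct on their number. If paths meet only one of them, `H` lies in a conjugate of `A` or `B`.
Otherwise some edge has both ends among them. If this edge does not separate the graph, counting
passages through it is a nontrivial homomorphism from `H` to `ℤ`. If it separates, `H` is the
amalgam of the groups of the two sides along a cyclic group; each side is finitely generated and
carried by fewer of the vertices, so it is indicable by induction. Finally, an amalgam of two
indicable groups along a cyclic group is indicable, because nontrivial homomorphisms to `ℤ` from the
two factors agree on the cyclic group after passing to suitable multiples.

Groups of the graph of groups are handled inside `G`: a path is an element of `G` written as a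
product of elements of `A` and `B`, and the orbits which it visits are recorded by letting the
factors act in succession on a base point in `X`.
-/

open Function MulAction

universe u

/-- A group which is trivial or has a nontrivial homomorphism to `ℤ`. A nontrivial homomorphism
to `ℤ` is asked for rather than a surjective one, since it is what constructions produce; see
`Indicable.exists_surjective`. -/
def Indicable (G : Type*) [Group G] : Prop :=
  Nontrivial G → ∃ f : G →* Multiplicative ℤ, f ≠ 1

namespace Indicable

variable {G G' : Type*} [Group G] [Group G']

theorem congr (hG : Indicable G) (e : G ≃* G') : Indicable G' := by
  intro _
  obtain ⟨f, hf⟩ := hG e.toEquiv.nontrivial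
  refine ⟨f.comp e.symm.toMonoidHom, fun h => hf (MonoidHom.ext fun x => ?_)⟩
  simpa using DFunLike.congr_fun h (e x)

theorem exists_surjective (hG : Indicable G) [Nontrivial G] :
    ∃ f : G →* Multiplicative ℤ, Surjective f := by
  obtain ⟨f, hf⟩ := hG inferInstance
  have hrange : Nontrivial f.range := (Subgroup.nontrivial_iff_ne_bot _).2 (by
    rwa [Ne, MonoidHom.range_eq_bot_iff])
  have : IsCyclic f.range := isCyclic_of_injective f.range.subtype f.range.subtype_injective
  exact ⟨intCyclicMulEquiv.symm.toMonoidHom.comp f.rangeRestrict,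
    intCyclicMulEquiv.symm.surjective.comp f.rangeRestrict_surjective⟩

end Indicable

theorem locallyIndicable_iff {G : Type} [Group G] :
    LocallyIndicable G ↔ ∀ H : Subgroup G, H.FG → Indicable H := by
  refine ⟨fun hG H hH hnt => ?_, fun hG H hne hH => ?_⟩
  · obtain ⟨f, hf⟩ := hG H ((Subgroup.nontrivial_iff_ne_bot H).1 hnt) hH
    refine ⟨f, ?_⟩
    rintro rfl
    obtain ⟨x, hx⟩ := hf (Multiplicative.ofAdd 1)
    exact one_ne_zero (ofAdd_eq_one.1 hx.symm)
  · have := (Subgroup.nontrivial_iff_ne_bot H).2 hne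
    exact (hG H hH).exists_surjective

theorem fg_of_mulEquiv {G G' : Type*} [Group G] [Group G'] {H : Subgroup G} {H' : Subgroup G'}
    (hH : H.FG) (e : H ≃* H') : H'.FG := by
  rw [← Group.fg_iff_subgroup_fg] at hH ⊢
  exact Group.fg_of_surjective (f := e.toMonoidHom) e.surjective

theorem LocallyIndicable.indicable_of_le_range {A : Type} {G : Type*} [Group A] [Group G]
    (hA : LocallyIndicable A) {f : A →* G} (hf : Injective f) {H : Subgroup G} (hle : H ≤ f.range)
    (hH : H.FG) : Indicable H := by
  have e : H.comap f ≃* H :=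
    ((H.comap f).equivMapOfInjective f hf).trans
      (MulEquiv.subgroupCongr (by rw [Subgroup.map_comap_eq, inf_eq_right.2 hle]))
  exact (locallyIndicable_iff.1 hA _ (fg_of_mulEquiv hH e.symm)).congr e

/-- `G` is the amalgam of its subgroups `S i` along their common subgroup `C`: it is generated by
them, and homomorphisms from the `S i` which agree on `C` have a common extension to `G`. -/
structure IsInternalAmalgam {G : Type} [Group G] {ι : Type*} (C : Subgroup G)
    (S : ι → Subgroup G) : Prop where
  le : ∀ i, C ≤ S i
  iSup_eq_top : ⨆ i, S i = ⊤
  exists_extension : ∀ (K : Type) [Group K] (f : ∀ i, S i →* K),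
    (∀ i j c (hc : c ∈ C), f i ⟨c, le i hc⟩ = f j ⟨c, le j hc⟩) →
      ∃ φ : G →* K, ∀ i (a : S i), φ a = f i a

section Generation

variable {G ι : Type*} [Group G] {S : ι → Subgroup G}

theorem monoidHom_ext_of_iSup_eq_top {K : Type*} [Monoid K] (hS : ⨆ i, S i = ⊤) {φ ψ : G →* K}
    (h : ∀ i, ∀ a ∈ S i, φ a = ψ a) : φ = ψ := by
  have : ⊤ ≤ φ.eqLocus ψ := hS ▸ iSup_le h
  exact MonoidHom.ext fun g => this (Subgroup.mem_top g)

theorem exists_monoidHom_eq_iff_mem {G : Type u} [Group G] (T : Subgroup G) :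
    ∃ (K : Type u) (_ : Group K) (φ ψ : G →* K), ∀ g, φ g = ψ g ↔ g ∈ T := by
  let f := GrpCat.ofHom T.subtype
  refine ⟨_, _, GrpCat.SurjectiveOfEpiAuxs.h f, GrpCat.SurjectiveOfEpiAuxs.g f, fun g => ?_⟩
  simpa [f] using (Set.ext_iff.1 (GrpCat.SurjectiveOfEpiAuxs.agree f) g).symm

theorem fg_of_isCyclic (H : Subgroup G) [IsCyclic H] : H.FG := by
  obtain ⟨g, rfl⟩ := (Subgroup.isCyclic_iff_exists_zpowers_eq_top H).1 ‹_›
  exact (Subgroup.fg_iff _).2 ⟨{g}, (Subgroup.zpowers_eq_closure g).symm, Set.finite_singleton g⟩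

theorem exists_fg_le_of_mem_iSup {g : G} (hg : g ∈ ⨆ i, S i) :
    ∃ T : ι → Subgroup G, (∀ i, T i ≤ S i) ∧ (∀ i, (T i).FG) ∧ g ∈ ⨆ i, T i := by
  classical
  induction hg using Subgroup.iSup_induction' with
  | hp i x hx =>
    refine ⟨fun j => if j = i then Subgroup.zpowers x else ⊥, fun j => ?_, fun j => ?_,
      Subgroup.mem_iSup_of_mem i (by simp)⟩ <;> beta_reduce <;> split_ifs with h
    · simpa [h] using hx
    · exact bot_le
    · exact fg_of_isCyclic _
    · exact Subgroup.FG.bot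
  | h1 => exact ⟨fun _ => ⊥, fun _ => bot_le, fun _ => Subgroup.FG.bot, one_mem _⟩
  | hmul x y _ _ hx hy =>
    obtain ⟨T, hTS, hT, hx⟩ := hx
    obtain ⟨T', hTS', hT', hy⟩ := hy
    refine ⟨T ⊔ T', fun i => sup_le (hTS i) (hTS' i), fun i => (hT i).sup (hT' i), ?_⟩
    simp only [Pi.sup_apply, iSup_sup_eq]
    exact Subgroup.mul_mem_sup hx hy

theorem exists_fg_le_of_iSup_eq_top [hG : Group.FG G] (hS : ⨆ i, S i = ⊤) :
    ∃ T : ι → Subgroup G, (∀ i, T i ≤ S i) ∧ (∀ i, (T i).FG) ∧ ⨆ i, T i = ⊤ := by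
  obtain ⟨W, hW⟩ := Group.fg_def.1 hG
  have hmem (g : G) : g ∈ ⨆ i, S i := hS ▸ Subgroup.mem_top g
  choose T hTS hT hgT using fun g => exists_fg_le_of_mem_iSup (hmem g)
  refine ⟨fun i => ⨆ g ∈ W, T g i, fun i => iSup₂_le fun g _ => hTS g i,
    fun i => Subgroup.FG.biSup_finset W _ fun g _ => hT g i, ?_⟩
  rw [eq_top_iff, ← hW, Subgroup.closure_le]
  intro g hg
  have hle : ⨆ i, T g i ≤ ⨆ i, ⨆ g ∈ W, T g i :=
    iSup_mono fun i => le_iSup₂_of_le (f := fun g _ => T g i) g hg le_rfl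
  exact hle (hgT g)

end Generation

namespace IsInternalAmalgam

section

variable {G : Type} {ι : Type*} [Group G] {C : Subgroup G} {S : ι → Subgroup G}

theorem eq_of_le (h : IsInternalAmalgam C S) {T : ι → Subgroup G} (hCT : ∀ i, C ≤ T i)
    (hTS : ∀ i, T i ≤ S i) (hT : ⨆ i, T i = ⊤) (i : ι) : T i = S i := by
  classical
  obtain ⟨K, _, u, v, huv⟩ := exists_monoidHom_eq_iff_mem (T i)
  obtain ⟨φ, hφ⟩ := h.exists_extension K (fun j => (if j = i then v else u).comp (S j).subtype)
    fun j k c hc => by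
      have : u c = v c := (huv c).2 (hCT i hc)
      split_ifs <;> simp [this]
  have hφu : φ = u := by
    refine monoidHom_ext_of_iSup_eq_top hT fun j a ha => (hφ j ⟨a, hTS j ha⟩).trans ?_
    split_ifs with hj
    · exact ((huv a).2 (hj ▸ ha)).symm
    · rfl
  refine (hTS i).antisymm fun a ha => (huv a).1 ?_
  simpa [hφu] using hφ i ⟨a, ha⟩

theorem fg [Group.FG G] (h : IsInternalAmalgam C S) (hC : C.FG) (i : ι) : (S i).FG := by
  obtain ⟨T, hTS, hT, htop⟩ := exists_fg_le_of_iSup_eq_top h.iSup_eq_top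
  have hsup : ⨆ j, T j ⊔ C = ⊤ := top_le_iff.1 (htop.ge.trans (iSup_mono fun _ => le_sup_left))
  rw [← h.eq_of_le (fun _ => le_sup_right) (fun j => sup_le (hTS j) (h.le j)) hsup]
  exact (hT i).sup hC

theorem indicable_of_trivial_on (h : IsInternalAmalgam C S) {i : ι} {f : S i →* Multiplicative ℤ}
    (hf : f ≠ 1) (hC : ∀ c (hc : c ∈ C), f ⟨c, h.le i hc⟩ = 1) : Indicable G := by
  classical
  obtain ⟨φ, hφ⟩ := h.exists_extension _ (Pi.mulSingle i f) fun j k c hc => by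
    have (l : ι) : (Pi.mulSingle i f : ∀ l, S l →* Multiplicative ℤ) l ⟨c, h.le l hc⟩ = 1 := by
      rcases eq_or_ne l i with rfl | hl
      · simpa using hC c hc
      · simp [hl]
    rw [this, this]
  refine fun _ => ⟨φ, ?_⟩
  rintro rfl
  exact hf (MonoidHom.ext fun a => by simpa using (hφ i a).symm)

end

/-- If both homomorphisms `S b → ℤ` are nontrivial on a generator `c` of `C`, then suitable
multiples of them agree at `c`. -/
theorem indicable_of_isCyclic {G : Type} [Group G] {C : Subgroup G} {S : Bool → Subgroup G}
    [IsCyclic C] (h : IsInternalAmalgam C S) (hS : ∀ b, Indicable (S b)) : Indicable G := by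
  intro hG
  obtain ⟨c, hc⟩ := (Subgroup.isCyclic_iff_exists_zpowers_eq_top C).1 ‹_›
  have hcC : c ∈ C := hc ▸ Subgroup.mem_zpowers c
  have eq_on_C {b b' : Bool} {f : S b →* Multiplicative ℤ} {f' : S b' →* Multiplicative ℤ}
      (hff : f ⟨c, h.le b hcC⟩ = f' ⟨c, h.le b' hcC⟩) (x : G) (hx : x ∈ C) :
      f ⟨x, h.le b hx⟩ = f' ⟨x, h.le b' hx⟩ := by
    obtain ⟨n, rfl⟩ := Subgroup.mem_zpowers_iff.1 (hc.ge hx)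
    exact (map_zpow f ⟨c, h.le b hcC⟩ n).trans
      ((congrArg (· ^ n) hff).trans (map_zpow f' ⟨c, h.le b' hcC⟩ n).symm)
  by_cases hexists : ∃ b, ∃ f : S b →* Multiplicative ℤ, f ≠ 1 ∧ f ⟨c, h.le b hcC⟩ = 1
  · obtain ⟨b, f, hf, hfc⟩ := hexists
    exact h.indicable_of_trivial_on hf (eq_on_C (b' := b) (f' := 1) hfc) hG
  push Not at hexists
  have hc1 : c ≠ 1 := by
    obtain ⟨b, hb⟩ : ∃ b, S b ≠ ⊥ := by
      by_contra! hbot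
      exact top_ne_bot (h.iSup_eq_top.symm.trans (by simp [hbot]))
    obtain ⟨f, hf⟩ := hS b ((Subgroup.nontrivial_iff_ne_bot _).2 hb)
    rintro rfl
    exact hexists b f hf (map_one f)
  have hnt (b : Bool) : Nontrivial (S b) :=
    ⟨⟨c, h.le b hcC⟩, 1, fun hcb => hc1 (congrArg Subtype.val hcb)⟩
  choose f hf using fun b => hS b (hnt b)
  let n (b : Bool) : ℤ := (f b ⟨c, h.le b hcC⟩).toAdd
  have hn (b : Bool) : n b ≠ 0 := hexists b (f b) (hf b)
  have hval (b : Bool) :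
      (f b ^ n (!b)) ⟨c, h.le b hcC⟩ = Multiplicative.ofAdd (n true * n false) := by
    refine Multiplicative.toAdd.injective ?_
    cases b <;> simp [n, mul_comm]
  obtain ⟨φ, hφ⟩ := h.exists_extension _ (fun b => f b ^ n (!b)) fun b b' =>
    eq_on_C ((hval b).trans (hval b').symm)
  refine ⟨φ, ?_⟩
  rintro rfl
  have := (hφ true ⟨c, h.le true hcC⟩).trans (hval true)
  exact mul_ne_zero (hn true) (hn false) (ofAdd_eq_one.1 this.symm)

end IsInternalAmalgam

/-- A `Q`-valued 1-cocycle on the `G`-set `X`: a functor to `Q` from the action groupoid. -/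
def IsCocycle {G X Q : Type*} [Mul G] [SMul G X] [Mul Q] (κ : G → X → Q) : Prop :=
  ∀ g h x, κ (g * h) x = κ g (h • x) * κ h x

/-- The restriction of a cocycle to the stabilizer of a point. -/
def IsCocycle.stabilizerHom {G X Q : Type*} [Group G] [MulAction G X] [Group Q] {κ : G → X → Q}
    (hκ : IsCocycle κ) (x : X) : stabilizer G x →* Q :=
  MonoidHom.mk' (fun g => κ g x) fun g h => by
    rw [Subgroup.coe_mul, hκ, mem_stabilizer_iff.1 h.2]

theorem IsCocycle.exists_potential {G X Q : Type*} [Group G] [MulAction G X] [IsPretransitive G X]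
    [Group Q] {κ : G → X → Q} (hκ : IsCocycle κ) {x : X} (hx : ∀ g ∈ stabilizer G x, κ g x = 1) :
    ∃ f : X → Q, f x = 1 ∧ ∀ g y, f (g • y) = κ g y * f y := by
  choose t ht using exists_smul_eq G x
  refine ⟨fun y => κ (t y) x, hx _ (ht x), fun g y => ?_⟩
  have hmem : (t (g • y))⁻¹ * (g * t y) ∈ stabilizer G x := by
    simp [mul_smul, ht, inv_smul_eq_iff]
  calc κ (t (g • y)) x = κ (t (g • y)) x * κ ((t (g • y))⁻¹ * (g * t y)) x := by
        rw [hx _ hmem, mul_one]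
    _ = κ (g * t y) x := by
        rw [← congrArg (κ _) hmem, ← hκ, mul_inv_cancel_left]
    _ = κ g y * κ (t y) x := by rw [hκ, ht]

/-- A cocycle on `X` is a section of the projection `(X → Q) ⋊ G → G`. -/
theorem IsInternalAmalgam.exists_isCocycle {G : Type} {ι : Type*} [Group G] {C : Subgroup G}
    {S : ι → Subgroup G} (h : IsInternalAmalgam C S) {X Q : Type} [MulAction G X] [Group Q]
    {α : ∀ i, S i → X → Q} (hα : ∀ i, IsCocycle (α i))
    (hC : ∀ i j c (hc : c ∈ C), α i ⟨c, h.le i hc⟩ = α j ⟨c, h.le j hc⟩) :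
    ∃ κ : G → X → Q, IsCocycle κ ∧ ∀ i (a : S i), κ a = α i a := by
  let act : G →* MulAut (X → Q) := mulAutArrow
  have act_apply (g : G) (f : X → Q) (x : X) : act g f x = f (g⁻¹ • x) := rfl
  let f (i : ι) : S i →* (X → Q) ⋊[act] G :=
    MonoidHom.mk' (fun a => ⟨fun x => α i a (a⁻¹ • x), a⟩) fun a b => by
      refine SemidirectProduct.ext (funext fun x => ?_) rfl
      simp only [SemidirectProduct.mul_left, Pi.mul_apply, act_apply, mul_inv_rev, mul_smul,
        hα i a b, smul_inv_smul, Subgroup.smul_def, InvMemClass.coe_inv]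
  obtain ⟨φ, hφ⟩ := h.exists_extension _ f fun i j c hc => by
    refine SemidirectProduct.ext (funext fun x => ?_) rfl
    exact congrFun (hC i j c hc) (c⁻¹ • x)
  have hright (g : G) : (φ g).right = g := by
    have : SemidirectProduct.rightHom.comp φ = MonoidHom.id G :=
      monoidHom_ext_of_iSup_eq_top h.iSup_eq_top fun i a ha =>
        congrArg SemidirectProduct.right (hφ i ⟨a, ha⟩)
    exact DFunLike.congr_fun this g
  refine ⟨fun g x => (φ g).left (g • x), fun g k x => ?_, fun i a => funext fun x => ?_⟩
  · simp only [map_mul, SemidirectProduct.mul_left, Pi.mul_apply, hright, act_apply, mul_smul,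
      inv_smul_smul]
  · simp only [hφ i a, f, MonoidHom.mk'_apply]
    exact congrArg (α i a) (inv_smul_smul a x)

section Paths

variable {G X ι : Type*} [Group G] [MulAction G X] {S : ι → Subgroup G}

/-- The vertices of the graph of groups attached to the `G`-set `X`: the orbits of the subgroups
`S i`. Its edges are the orbits of the common subgroup `C`, the edge of `x` joining the vertices
`vertex i x`. -/
abbrev Vertex (S : ι → Subgroup G) (X : Type*) [MulAction G X] :=
  Σ i, orbitRel.Quotient (S i) X

/-- The orbit of `x` under `S i`. -/
def vertex (i : ι) (x : X) : Vertex S X := ⟨i, Quotient.mk'' x⟩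

theorem vertex_smul {i : ι} {a : G} (ha : a ∈ S i) (x : X) :
    (vertex i (a • x) : Vertex S X) = vertex i x :=
  congrArg (Sigma.mk i) (Quotient.sound' (⟨⟨a, ha⟩, rfl⟩ : a • x ∈ orbit (S i) x))

theorem vertex_eq_iff {i : ι} {x y : X} :
    (vertex i x : Vertex S X) = vertex i y ↔ ∃ a ∈ S i, a • y = x := by
  refine ⟨fun h => ?_, fun ⟨a, ha, hax⟩ => hax ▸ vertex_smul ha y⟩
  obtain ⟨a, ha⟩ : x ∈ orbit (S i) y := Quotient.exact' (eq_of_heq (Sigma.mk.inj h).2)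
  exact ⟨a, a.2, ha⟩

/-- `IsPath P x g` says that `g` is a product of elements of the subgroups `S i` whose successive
application to `x` moves within the orbits belonging to `P`. -/
inductive IsPath (P : Set (Vertex S X)) (x : X) : G → Prop
  | one : IsPath P x 1
  | step {i : ι} {a g : G} (ha : a ∈ S i) (hg : IsPath P x g) (hi : vertex i (g • x) ∈ P) :
      IsPath P x (a * g)

namespace IsPath

variable {P P' : Set (Vertex S X)} {x : X} {g h : G}

theorem mono (hPP' : P ⊆ P') (hg : IsPath P x g) : IsPath P' x g := by
  induction hg with
  | one => exact one
  | step ha _ hi ih => exact step ha ih (hPP' hi)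

theorem of_mem {i : ι} {a : G} (ha : a ∈ S i) (hi : vertex i x ∈ P) : IsPath P x a := by
  simpa using step ha one (by simpa using hi)

theorem mul (hh : IsPath P (g • x) h) (hg : IsPath P x g) : IsPath P x (h * g) := by
  induction hh with
  | one => simpa using hg
  | step ha _ hi ih => simpa only [mul_assoc] using step ha ih (by simpa only [mul_smul] using hi)

theorem inv (hg : IsPath P x g) : IsPath P (g • x) g⁻¹ := by
  induction hg with
  | one => simpa using one
  | @step i a g ha _ hi ih =>
    rw [mul_inv_rev, mul_smul]
    refine mul ?_ (of_mem (inv_mem ha) (by rwa [vertex_smul ha]))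
    simpa using ih

theorem univ (hS : ⨆ i, S i = ⊤) (x : X) (g : G) : IsPath (Set.univ : Set (Vertex S X)) x g := by
  have hg : g ∈ ⨆ i, S i := hS ▸ Subgroup.mem_top g
  induction hg using Subgroup.iSup_induction' generalizing x with
  | hp i a ha => exact of_mem ha trivial
  | h1 => exact one
  | hmul a b _ _ iha ihb => exact (iha _).mul (ihb x)

theorem exists_finite (hg : IsPath P x g) : ∃ P₀ ⊆ P, P₀.Finite ∧ IsPath P₀ x g := by
  induction hg with
  | one => exact ⟨∅, Set.empty_subset P, Set.finite_empty, one⟩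
  | step ha _ hi ih =>
    obtain ⟨P₀, hP₀, hfin, hg⟩ := ih
    exact ⟨insert _ P₀, Set.insert_subset hi hP₀, hfin.insert _,
      step ha (hg.mono (Set.subset_insert _ _)) (Set.mem_insert _ _)⟩

end IsPath

/-- The fundamental group at `x` of the part of the graph of groups of `X` with vertices in `P`. -/
def loops (P : Set (Vertex S X)) (x : X) : Subgroup G where
  carrier := {g | g • x = x ∧ IsPath P x g}
  one_mem' := ⟨one_smul G x, .one⟩
  mul_mem' {g h} hg hh := ⟨by rw [mul_smul, hh.1, hg.1], .mul (by rw [hh.1]; exact hg.2) hh.2⟩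
  inv_mem' {g} hg := ⟨inv_smul_eq_iff.2 hg.1.symm, by simpa only [hg.1] using hg.2.inv⟩

section loops

variable {P P' : Set (Vertex S X)} {x : X} {g h : G}

theorem loops_le_stabilizer : loops P x ≤ stabilizer G x := fun _ hg => hg.1

theorem loops_mono (h : P ⊆ P') : loops P x ≤ loops P' x := fun _ hg => ⟨hg.1, hg.2.mono h⟩

theorem IsPath.inv_mul_mem_loops (hg : IsPath P x g) (hh : IsPath P x h) (hgh : g • x = h • x) :
    h⁻¹ * g ∈ loops P x :=
  ⟨by rw [mul_smul, hgh, inv_smul_smul], .mul (by rw [hgh]; exact hh.inv) hg⟩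

theorem exists_finite_le_loops {H : Subgroup G} (hS : ⨆ i, S i = ⊤) (hH : H.FG)
    (hx : H ≤ stabilizer G x) : ∃ P : Set (Vertex S X), P.Finite ∧ H ≤ loops P x := by
  obtain ⟨W, rfl⟩ := hH
  choose P _ hfin hP using fun g => (IsPath.univ hS x g).exists_finite
  refine ⟨⋃ g ∈ W, P g, W.finite_toSet.biUnion fun g _ => hfin g, ?_⟩
  exact (Subgroup.closure_le _).2 fun g hg =>
    ⟨hx (Subgroup.subset_closure hg), (hP g).mono (Set.subset_biUnion_of_mem (u := P) hg)⟩

end loops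

section Cut

variable {κ : Type*} {C : Subgroup G} {lab : Vertex S X → κ} {P : Set (Vertex S X)} {x : X} {g : G}

/-- The labelling `lab` is constant on the components of the graph with the edge of `x` removed:
the ends of any other edge have equal labels. -/
def SeparatesAt (C : Subgroup G) (lab : Vertex S X → κ) (x : X) : Prop :=
  ∀ y ∉ orbit C x, ∀ j k, lab (vertex j y) = lab (vertex k y)

namespace SeparatesAt

theorem exists_isPath_of_exists (hlab : SeparatesAt C lab x) (hCS : ∀ i, C ≤ S i)
    (hP : ∀ s, ∃ j, vertex j x ∈ P ∧ lab (vertex j x) = s) {i : ι}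
    (hi : ∃ k, IsPath (P ∩ lab ⁻¹' {lab (vertex i (g • x))}) x k ∧ k • x = g • x ∧
      k⁻¹ * g ∈ ⨆ s, loops (P ∩ lab ⁻¹' {s}) x) (j : ι) :
    ∃ k, IsPath (P ∩ lab ⁻¹' {lab (vertex j (g • x))}) x k ∧ k • x = g • x ∧
      k⁻¹ * g ∈ ⨆ s, loops (P ∩ lab ⁻¹' {s}) x := by
  by_cases hg : g • x ∈ orbit C x
  · obtain ⟨⟨z, hz⟩, hzx : z • x = g • x⟩ := hg
    obtain ⟨k, hk, hkx, hkg⟩ := hi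
    have path_z (s : κ) : IsPath (P ∩ lab ⁻¹' {s}) x z := by
      obtain ⟨l, hl⟩ := hP s
      exact .of_mem (hCS l hz) hl
    refine ⟨z, path_z _, hzx, ?_⟩
    have hzk := Subgroup.mem_iSup_of_mem (S := fun s => loops (P ∩ lab ⁻¹' {s}) x) _
      (hk.inv_mul_mem_loops (path_z _) (hkx.trans hzx.symm))
    simpa [mul_assoc] using mul_mem hzk hkg
  · rwa [hlab _ hg j i]

theorem exists_isPath (hlab : SeparatesAt C lab x) (hCS : ∀ i, C ≤ S i)
    (hP : ∀ s, ∃ j, vertex j x ∈ P ∧ lab (vertex j x) = s) (hg : IsPath P x g) (j : ι) :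
    ∃ k, IsPath (P ∩ lab ⁻¹' {lab (vertex j (g • x))}) x k ∧ k • x = g • x ∧
      k⁻¹ * g ∈ ⨆ s, loops (P ∩ lab ⁻¹' {s}) x := by
  induction hg generalizing j with
  | one => exact ⟨1, .one, rfl, by simp⟩
  | @step i a g ha _ hi ih =>
    refine hlab.exists_isPath_of_exists hCS hP (i := i) ?_ j
    obtain ⟨k, hk, hkx, hkg⟩ := ih i
    refine ⟨a * k, ?_, by rw [mul_smul, mul_smul, hkx], by simpa [mul_assoc] using hkg⟩
    rw [mul_smul, vertex_smul ha]
    exact .step ha hk ⟨hkx ▸ hi, by rw [hkx]; rfl⟩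

theorem loops_le_iSup [Nonempty κ] (hlab : SeparatesAt C lab x) (hCS : ∀ i, C ≤ S i)
    (hP : ∀ s, ∃ j, vertex j x ∈ P ∧ lab (vertex j x) = s) :
    loops P x ≤ ⨆ s, loops (P ∩ lab ⁻¹' {s}) x := by
  rintro g ⟨hgx, hg⟩
  obtain ⟨j, -⟩ := hP (Classical.arbitrary κ)
  obtain ⟨k, hk, hkx, hkg⟩ := hlab.exists_isPath hCS hP hg j
  have hkL := Subgroup.mem_iSup_of_mem (S := fun s => loops (P ∩ lab ⁻¹' {s}) x) _
    ⟨hkx.trans hgx, hk⟩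
  simpa using mul_mem hkL hkg

end SeparatesAt

/-- `σ y` is a path from `x` to `y` which stays on the side of the cut at `x` on which `y` lies. It
plays the part of a maximal tree; points on the edge of `x` are reached by elements of `C`. -/
structure IsCutSection (C : Subgroup G) (lab : Vertex S X → κ) (x : X) (σ : X → G) : Prop where
  smul_eq : ∀ y, σ y • x = y
  map_self : σ x = 1
  mem_of_mem_orbit : ∀ y ∈ orbit C x, σ y ∈ C
  isPath : ∀ y j, IsPath (lab ⁻¹' {lab (vertex j y)}) x (σ y)

theorem SeparatesAt.exists_isCutSection [IsPretransitive G X] [Nonempty κ]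
    (hlab : SeparatesAt C lab x) (hCS : ∀ i, C ≤ S i) (hS : ⨆ i, S i = ⊤)
    (hx : ∀ s, ∃ j, lab (vertex j x) = s) : ∃ σ, IsCutSection C lab x σ := by
  have pointwise (y : X) : ∃ g : G, g • x = y ∧ (y = x → g = 1) ∧ (y ∈ orbit C x → g ∈ C) ∧
      ∀ j, IsPath (lab ⁻¹' {lab (vertex j y)}) x g := by
    by_cases hyx : y = x
    · exact ⟨1, by simp [hyx], fun _ => rfl, fun _ => one_mem C, fun _ => .one⟩
    by_cases hy : y ∈ orbit C x
    · obtain ⟨⟨z, hz⟩, rfl⟩ := hy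
      refine ⟨z, rfl, fun h => absurd h hyx, fun _ => hz, fun j => ?_⟩
      obtain ⟨l, hl⟩ := hx (lab (vertex j (z • x)))
      exact .of_mem (hCS l hz) hl
    · obtain ⟨g, rfl⟩ := exists_smul_eq G x y
      obtain ⟨i, -⟩ := hx (Classical.arbitrary κ)
      obtain ⟨k, hk, hkx, -⟩ := hlab.exists_isPath hCS
        (fun s => by simpa only [Set.mem_univ, true_and] using hx s) (.univ hS x g) i
      refine ⟨k, hkx, fun h => absurd h hyx, fun h => absurd h hy, fun j => ?_⟩
      rw [hlab _ hy j i]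
      exact hk.mono Set.inter_subset_right
  choose σ hσ hσx hσC hσP using pointwise
  exact ⟨σ, hσ, hσx x rfl, hσC, hσP⟩

namespace IsCutSection

variable {σ : X → G}

theorem transport_mem (hσ : IsCutSection C lab x σ) {j : ι} {a : G} (ha : a ∈ S j) (y : X) :
    (σ (a • y))⁻¹ * (a * σ y) ∈ loops (lab ⁻¹' {lab (vertex j y)}) x := by
  refine IsPath.inv_mul_mem_loops (.step ha (hσ.isPath y j) (by rw [hσ.smul_eq]; rfl)) ?_
    (by rw [mul_smul, hσ.smul_eq, hσ.smul_eq])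
  simpa only [vertex_smul ha] using hσ.isPath (a • y) j

variable {K : Type*} [Group K] (ψ : ∀ s, loops (lab ⁻¹' {s}) x →* K)

/-- The cocycle on the `S j`-set `X` induced by homomorphisms from the groups of loops on either
side of the edge of `x`, after closing up along `σ`. -/
def localCocycle (hσ : IsCutSection C lab x σ) (j : ι) (a : S j) (y : X) : K :=
  ψ (lab (vertex j y)) ⟨(σ (a • y))⁻¹ * (a * σ y), hσ.transport_mem a.2 y⟩

theorem localCocycle_eq (hσ : IsCutSection C lab x σ) {j : ι} {y : X} {s : κ}
    (hs : lab (vertex j y) = s) (a : S j) {m : loops (lab ⁻¹' {s}) x}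
    (hm : (m : G) = (σ (a • y))⁻¹ * (a * σ y)) : hσ.localCocycle ψ j a y = ψ s m := by
  subst hs
  exact congrArg _ (Subtype.ext hm.symm)

theorem isCocycle_localCocycle (hσ : IsCutSection C lab x σ) (j : ι) :
    IsCocycle (hσ.localCocycle ψ j) := by
  intro a b y
  rw [Subgroup.smul_def, hσ.localCocycle_eq ψ (congrArg lab (vertex_smul b.2 y)) a
      (m := ⟨_, vertex_smul b.2 y ▸ hσ.transport_mem a.2 (b • y)⟩) rfl,
    hσ.localCocycle_eq ψ rfl b (m := ⟨_, hσ.transport_mem b.2 y⟩) rfl, ← map_mul]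
  refine hσ.localCocycle_eq ψ rfl _ ?_
  simp [mul_assoc, mul_smul, Subgroup.smul_def]

theorem localCocycle_eq_of_mem (hσ : IsCutSection C lab x σ) (hlab : SeparatesAt C lab x)
    (hψ : ∀ s t, ∀ c ∈ C, ∀ hs ht, ψ s ⟨c, hs⟩ = ψ t ⟨c, ht⟩) {c : G} (hc : c ∈ C) {i j : ι}
    (hi : c ∈ S i) (hj : c ∈ S j) (y : X) :
    hσ.localCocycle ψ i ⟨c, hi⟩ y = hσ.localCocycle ψ j ⟨c, hj⟩ y := by
  by_cases hy : y ∈ orbit C x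
  · refine hψ _ _ _ (mul_mem (inv_mem (hσ.mem_of_mem_orbit (c • y) ?_))
      (mul_mem hc (hσ.mem_of_mem_orbit y hy))) _ _
    exact mem_orbit_of_mem_orbit (⟨c, hc⟩ : C) hy
  · exact hσ.localCocycle_eq ψ (hlab y hy i j) _ rfl

end IsCutSection

theorem IsCutSection.exists_isCocycle {G : Type} {X : Type} [Group G] [MulAction G X]
    {C : Subgroup G} {S : ι → Subgroup G} {lab : Vertex S X → κ} {x : X} {σ : X → G}
    (h : IsInternalAmalgam C S) (hσ : IsCutSection C lab x σ)
    (hlab : SeparatesAt C lab x) {K : Type} [Group K] (ψ : ∀ s, loops (lab ⁻¹' {s}) x →* K)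
    (hψ : ∀ s t, ∀ c ∈ C, ∀ hs ht, ψ s ⟨c, hs⟩ = ψ t ⟨c, ht⟩) :
    ∃ f : G → X → K, IsCocycle f ∧ ∀ s (m : loops (lab ⁻¹' {s}) x), f m x = ψ s m := by
  obtain ⟨f, hf, hfα⟩ := h.exists_isCocycle (hσ.isCocycle_localCocycle ψ) fun i j c hc =>
    funext fun y => hσ.localCocycle_eq_of_mem ψ hlab hψ hc (h.le i hc) (h.le j hc) y
  have eq_on_paths {s : κ} {g : G} (hg : IsPath (lab ⁻¹' {s}) x g) :
      ∃ hm : (σ (g • x))⁻¹ * g ∈ loops (lab ⁻¹' {s}) x, f g x = ψ s ⟨_, hm⟩ := by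
    induction hg with
    | one =>
      have heq : (σ ((1 : G) • x))⁻¹ * 1 = 1 := by simp [hσ.map_self]
      exact ⟨by rw [heq]; exact one_mem _, (map_one (hf.stabilizerHom x)).trans
        ((map_one (ψ s)).symm.trans (congrArg _ (Subtype.ext heq.symm)))⟩
    | @step i a g ha _ hi ih =>
      obtain ⟨hm, hfg⟩ := ih
      have hs : lab (vertex i (g • x)) = s := hi
      have ht := hσ.transport_mem ha (g • x)
      rw [hs] at ht
      have heq : (σ ((a * g) • x))⁻¹ * (a * g) =
          ((σ (a • g • x))⁻¹ * (a * σ (g • x))) * ((σ (g • x))⁻¹ * g) := by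
        simp [mul_smul, mul_assoc]
      refine ⟨heq ▸ mul_mem ht hm, ?_⟩
      rw [hf, hfg, hfα i ⟨a, ha⟩, hσ.localCocycle_eq ψ hs ⟨a, ha⟩ (m := ⟨_, ht⟩) rfl, ← map_mul]
      exact congrArg _ (Subtype.ext heq.symm)
  refine ⟨f, hf, fun s m => ?_⟩
  obtain ⟨hm, hfm⟩ := eq_on_paths m.2.2
  rw [hfm]
  refine congrArg _ (Subtype.ext ?_)
  simp only [m.2.1, hσ.map_self, inv_one, one_mul]

end Cut

end Paths

section CutAmalgam

variable {G X : Type} {ι κ : Type*} [Group G] [MulAction G X] {C : Subgroup G} {S : ι → Subgroup G}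

theorem iSup_subgroupOf_eq_top {H : Subgroup G} {T : κ → Subgroup G} (hT : ∀ s, T s ≤ H)
    (hH : H ≤ ⨆ s, T s) : ⨆ s, (T s).subgroupOf H = ⊤ := by
  refine Subgroup.map_injective H.subtype_injective ?_
  simp only [Subgroup.map_iSup, Subgroup.map_subgroupOf_eq_of_le (hT _), ← MonoidHom.range_eq_map,
    Subgroup.range_subtype]
  exact (iSup_le hT).antisymm hH

theorem SeparatesAt.isInternalAmalgam_stabilizer [IsPretransitive G X] [Nonempty κ]
    {lab : Vertex S X → κ} {x : X} (hlab : SeparatesAt C lab x) (h : IsInternalAmalgam C S)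
    (hx : ∀ s, ∃ j, lab (vertex j x) = s) :
    IsInternalAmalgam (C.subgroupOf (stabilizer G x))
      fun s => (loops (lab ⁻¹' {s}) x).subgroupOf (stabilizer G x) where
  le s c hc := by
    obtain ⟨j, hj⟩ := hx s
    exact ⟨c.2, .of_mem (h.le j hc) hj⟩
  iSup_eq_top := by
    refine iSup_subgroupOf_eq_top (fun s => loops_le_stabilizer) fun g hg => ?_
    have := hlab.loops_le_iSup h.le (P := Set.univ) (by simpa using hx)
      ⟨hg, .univ h.iSup_eq_top x g⟩
    simpa only [Set.univ_inter] using this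
  exists_extension K _ f hf := by
    obtain ⟨σ, hσ⟩ := hlab.exists_isCutSection h.le h.iSup_eq_top hx
    obtain ⟨k, hk, hkψ⟩ := hσ.exists_isCocycle h hlab
      (fun s => (f s).comp (Subgroup.subgroupOfEquivOfLe (H := loops (lab ⁻¹' {s}) x)
        loops_le_stabilizer).symm.toMonoidHom)
      fun s t c hc hs _ => hf s t ⟨c, hs.1⟩ hc
    exact ⟨hk.stabilizerHom x, fun s a => hkψ s ⟨a, a.2⟩⟩

/-- Subgroups between `C` and the factors which still generate an amalgam are all of the factors.
Hence each side of the cut is already carried by the vertices in `P` on that side. -/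
theorem SeparatesAt.isInternalAmalgam_of_stabilizer_le [IsPretransitive G X] [Nonempty κ]
    {lab : Vertex S X → κ} {P : Set (Vertex S X)} {x : X} (hlab : SeparatesAt C lab x)
    (h : IsInternalAmalgam C S) (hx : ∀ s, ∃ j, vertex j x ∈ P ∧ lab (vertex j x) = s)
    (hP : stabilizer G x ≤ loops P x) :
    IsInternalAmalgam (C.subgroupOf (stabilizer G x))
      fun s => (loops (P ∩ lab ⁻¹' {s}) x).subgroupOf (stabilizer G x) := by
  have hA := hlab.isInternalAmalgam_stabilizer h fun s => (hx s).imp fun _ => And.right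
  convert hA using 1
  refine funext (hA.eq_of_le (fun s c hc => ?_) (fun s => ?_) ?_)
  · obtain ⟨l, hl⟩ := hx s
    exact ⟨c.2, .of_mem (h.le l hc) hl⟩
  · exact Subgroup.comap_mono (loops_mono Set.inter_subset_right)
  · exact iSup_subgroupOf_eq_top (fun s => loops_le_stabilizer)
      (hP.trans (hlab.loops_le_iSup h.le hx))

/-- The cocycle counting the signed passages through the end at `vertex i x` of the edge of `x` is a
coboundary, since the stabilizer of `x` has no nontrivial homomorphism to `ℤ`. Its potential tells
this end from all the others. -/
theorem IsInternalAmalgam.exists_separatesAt [IsPretransitive G X] (h : IsInternalAmalgam C S)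
    {x : X} (hx : ∀ f : stabilizer G x →* Multiplicative ℤ, f = 1) (i : ι) :
    ∃ lab : Vertex S X → Bool, SeparatesAt C lab x ∧ ∀ j, lab (vertex j x) = true ↔ j = i := by
  classical
  let e (j : ι) (y : X) : Multiplicative ℤ :=
    if j = i ∧ y ∈ orbit C x then Multiplicative.ofAdd 1 else 1
  have he (j : ι) (c : G) (hc : c ∈ C) (y : X) : e j (c • y) / e j y = 1 := by
    have : c • y ∈ orbit C x ↔ y ∈ orbit C x := by
      rw [← orbit_eq_iff, ← orbit_eq_iff, ← orbit_smul (⟨c, hc⟩ : C) y]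
      rfl
    simp only [e, this, div_self']
  obtain ⟨k, hk, hke⟩ := h.exists_isCocycle (X := X)
    (α := fun i (a : S i) y => e i (a • y) / e i y) (fun i a b y => by simp [mul_smul])
    fun j l c hc => funext fun y => (he j c hc y).trans (he l c hc y).symm
  obtain ⟨f, hfx, hf⟩ := hk.exists_potential fun g hg =>
    DFunLike.congr_fun (hx (hk.stabilizerHom x)) ⟨g, hg⟩
  have hfe (j : ι) (a : S j) (y : X) : f (a • y) / e j (a • y) = f y / e j y := by
    rw [Subgroup.smul_def, hf, hke, div_mul_eq_mul_div, Subgroup.smul_def, div_right_comm,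
      mul_div_cancel_left]
  let F (v : Vertex S X) : Multiplicative ℤ :=
    Quotient.liftOn v.2 (fun y => f y / e v.1 y) fun _ y ⟨a, ha⟩ => ha ▸ hfe v.1 a y
  have hF (j : ι) (y : X) : F (vertex j y) = f y / e j y := rfl
  refine ⟨fun v => decide (F v ≠ 1), fun y hy j k => ?_, fun j => ?_⟩
  · simp only [hF, e, hy, and_false, if_false]
  · simp [hF, e, hfx, mem_orbit_self]

end CutAmalgam

section Support

variable {G X ι : Type*} [Group G] [MulAction G X] {S : ι → Subgroup G} {P : Set (Vertex S X)}
  {x : X} {g h : G}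

theorem IsPath.vertex_mk_eq {i j : ι} (hg : IsPath P x g) (hh : IsPath P x h)
    (hi : vertex i (g • x) ∈ P) (hij : (vertex i (g • x) : Vertex S X) = vertex j (h • x)) :
    (vertex i (g : G ⧸ loops P x) : Vertex S _) = vertex j (h : G ⧸ loops P x) := by
  obtain rfl : i = j := congrArg Sigma.fst hij
  obtain ⟨a, ha, hax⟩ := vertex_eq_iff.1 hij
  have hmk : (g : G ⧸ loops P x) = (a * h : G) :=
    QuotientGroup.eq.2 (IsPath.inv_mul_mem_loops (.step ha hh (hij ▸ hi)) hg
      (by rw [mul_smul, hax]))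
  rw [hmk, ← smul_eq_mul, ← Quotient.smul_coe, vertex_smul ha]

/-- Let `P₁` be the part of `P` that paths from `x` can visit. The inclusion of `P₁` lifts to the
covering with fundamental group `loops P x`, and `P'` contains the image. -/
theorem exists_loops_le_loops_quotient (hP : P.Finite) (x : X) :
    ∃ P' : Set (Vertex S (G ⧸ loops P x)), P'.Finite ∧ P'.ncard ≤ P.ncard ∧
      loops P x ≤ loops P' ((1 : G) : G ⧸ loops P x) := by
  have lift (v : Vertex S X) : ∃ v' : Vertex S (G ⧸ loops P x), ∀ i g, IsPath P x g →
      vertex i (g • x) ∈ P → vertex i (g • x) = v → vertex i (g : G ⧸ loops P x) = v' := by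
    by_cases hv : ∃ i g, IsPath P x g ∧ vertex i (g • x) ∈ P ∧ vertex i (g • x) = v
    · obtain ⟨i, g, hg, -, hgv⟩ := hv
      exact ⟨vertex i (g : G ⧸ loops P x), fun j h hh hj hhv =>
        hh.vertex_mk_eq hg hj (hhv.trans hgv.symm)⟩
    · exact ⟨vertex v.1 ((1 : G) : G ⧸ loops P x), fun i g hg hi hgv =>
        absurd ⟨i, g, hg, hi, hgv⟩ hv⟩
  choose w hw using lift
  refine ⟨w '' P, hP.image w, Set.ncard_image_le hP, fun m hm => ⟨?_, ?_⟩⟩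
  · rwa [← mem_stabilizer_iff, stabilizer_quotient]
  have isPath_image {g : G} (hg : IsPath P x g) :
      IsPath (w '' P) ((1 : G) : G ⧸ loops P x) g := by
    induction hg with
    | one => exact .one
    | @step i a g ha hg hi ih =>
      refine .step ha ih ⟨_, hi, ?_⟩
      rw [← hw _ i g hg hi rfl, Quotient.smul_coe, smul_eq_mul, mul_one]
  exact isPath_image hm.2

theorem loops_eq_bot_or_le
    (hP : ∀ g, IsPath P x g → ∀ i j, vertex i (g • x) ∈ P → vertex j (g • x) ∈ P → i = j) :
    loops P x = ⊥ ∨ ∃ i, loops P x ≤ S i := by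
  have mem_of_isPath {g : G} (hg : IsPath P x g) : g = 1 ∨ ∃ i, g ∈ S i ∧ vertex i x ∈ P := by
    induction hg with
    | one => exact .inl rfl
    | @step j a g ha hg hj ih =>
      obtain rfl | ⟨i, hgi, hi⟩ := ih
      · exact .inr ⟨j, by simpa using ha, by simpa using hj⟩
      · obtain rfl := hP g hg i j (by rwa [vertex_smul hgi]) hj
        exact .inr ⟨i, mul_mem ha hgi, hi⟩
  by_cases hx : ∃ i, vertex i x ∈ P
  · obtain ⟨i, hi⟩ := hx
    refine .inr ⟨i, fun g hg => ?_⟩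
    obtain rfl | ⟨j, hgj, hj⟩ := mem_of_isPath hg.2
    · exact one_mem _
    · obtain rfl := hP 1 .one i j (by simpa using hi) (by simpa using hj)
      exact hgj
  · refine .inl ((Subgroup.eq_bot_iff_forall _).2 fun g hg => (mem_of_isPath hg.2).resolve_right ?_)
    exact fun ⟨i, hi⟩ => hx ⟨i, hi.2⟩

theorem stabilizer_smul_le_loops (hP : stabilizer G x ≤ loops P x) (hg : IsPath P x g) :
    stabilizer G (g • x) ≤ loops P (g • x) := by
  intro m hm
  have hgm := hP (show g⁻¹ * m * g ∈ stabilizer G x by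
    rw [mem_stabilizer_iff, mul_smul, mul_smul, mem_stabilizer_iff.1 hm, inv_smul_smul])
  have hmg : IsPath P x (m * g) := by
    have hg' : IsPath P ((g⁻¹ * m * g) • x) g := by rwa [hgm.1]
    simpa only [mul_assoc, mul_inv_cancel_left] using hg'.mul hgm.2
  have hmg' : IsPath P (g⁻¹ • g • x) (m * g) := by rwa [inv_smul_smul]
  exact ⟨hm, by simpa only [mul_inv_cancel_right] using hmg'.mul hg.inv⟩

end Support

section Induction

variable {G : Type} {ι : Type*} [Group G] {C : Subgroup G} [IsCyclic C] {S : ι → Subgroup G}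

theorem IsInternalAmalgam.indicable_stabilizer_of_ne {X : Type} [MulAction G X]
    [IsPretransitive G X] (h : IsInternalAmalgam C S) {P : Set (Vertex S X)} {x : X} {i j : ι}
    (hij : i ≠ j) (hi : vertex i x ∈ P) (hj : vertex j x ∈ P) (hP : stabilizer G x ≤ loops P x)
    (hfg : (stabilizer G x).FG) (ih : ∀ Q ⊂ P, (loops Q x).FG → Indicable (loops Q x)) :
    Indicable (stabilizer G x) := by
  by_cases hx : ∀ f : stabilizer G x →* Multiplicative ℤ, f = 1
  swap
  · push Not at hx
    exact fun _ => hx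
  obtain ⟨lab, hlab, hlabx⟩ := h.exists_separatesAt hx i
  have hside (s : Bool) : ∃ l, vertex l x ∈ P ∧ lab (vertex l x) = s := by
    cases s
    · exact ⟨j, hj, Bool.eq_false_iff.2 fun hs => hij ((hlabx j).1 hs).symm⟩
    · exact ⟨i, hi, (hlabx i).2 rfl⟩
  have hA := hlab.isInternalAmalgam_of_stabilizer_le h hside hP
  have : IsCyclic (C.subgroupOf (stabilizer G x)) :=
    isCyclic_of_injective ((stabilizer G x).subtype.subgroupComap C)
      fun _ _ h => Subtype.ext (Subtype.ext (congrArg Subtype.val h :))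
  have : Group.FG (stabilizer G x) := (Group.fg_iff_subgroup_fg _).2 hfg
  refine hA.indicable_of_isCyclic fun s => ?_
  let e := Subgroup.subgroupOfEquivOfLe
    (loops_le_stabilizer : loops (P ∩ lab ⁻¹' {s}) x ≤ stabilizer G x)
  obtain ⟨l, hl, hls⟩ := hside (!s)
  have hssubset : P ∩ lab ⁻¹' {s} ⊂ P :=
    ⟨Set.inter_subset_left, fun hsub => by simpa [hls] using (hsub hl).2⟩
  exact (ih _ hssubset (fg_of_mulEquiv (hA.fg (fg_of_isCyclic _) s) e)).congr e.symm

theorem IsInternalAmalgam.indicable_stabilizer {X : Type} [MulAction G X] [IsPretransitive G X]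
    (h : IsInternalAmalgam C S) (hS : ∀ i, ∀ H ≤ S i, H.FG → Indicable H)
    {P : Set (Vertex S X)} (hPfin : P.Finite) {x : X} (hP : stabilizer G x ≤ loops P x)
    (hfg : (stabilizer G x).FG) : Indicable (stabilizer G x) := by
  induction hn : P.ncard using Nat.strong_induction_on generalizing X with | _ n ih
  by_cases hends : ∀ g, IsPath P x g → ∀ i j, vertex i (g • x) ∈ P → vertex j (g • x) ∈ P → i = j
  · obtain hbot | ⟨i, hi⟩ := loops_eq_bot_or_le hends
    · exact fun hnt => absurd (le_bot_iff.1 (hP.trans hbot.le))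
        ((Subgroup.nontrivial_iff_ne_bot _).1 hnt)
    · exact hS i _ (hP.trans hi) hfg
  push Not at hends
  obtain ⟨g, hg, i, j, hi, hj, hij⟩ := hends
  let e : stabilizer G x ≃* stabilizer G (g • x) := stabilizerEquivStabilizer rfl
  refine (h.indicable_stabilizer_of_ne hij hi hj (stabilizer_smul_le_loops hP hg)
    (fg_of_mulEquiv hfg e) fun Q hQ hQfg => ?_).congr e.symm
  have hQfin := hPfin.subset hQ.subset
  obtain ⟨P', hP', hcard, hle⟩ := exists_loops_le_loops_quotient hQfin (g • x)
  have hstab := stabilizer_quotient (loops Q (g • x))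
  have hindicable := ih P'.ncard (by have := Set.ncard_lt_ncard hQ hPfin; omega) hP'
    (hstab.trans_le hle) (by rwa [hstab]) rfl
  rwa [hstab] at hindicable

theorem IsInternalAmalgam.indicable_of_fg (h : IsInternalAmalgam C S)
    (hS : ∀ i, ∀ H ≤ S i, H.FG → Indicable H) (H : Subgroup G) (hH : H.FG) : Indicable H := by
  have hstab := stabilizer_quotient H
  obtain ⟨P, hP, hHP⟩ := exists_finite_le_loops (X := G ⧸ H) h.iSup_eq_top hH hstab.ge
  have hindicable := h.indicable_stabilizer hS hP (hstab.trans_le hHP) (by rwa [hstab])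
  rwa [hstab] at hindicable

end Induction

section Amalgam

variable {A B G : Type} [Group A] [Group B] [Group G] {iA : A →* G} {iB : B →* G} {p : A} {q : B}

theorem IsAmalgam.range_sup_range_eq_top (hG : IsAmalgam iA iB p q) :
    iA.range ⊔ iB.range = ⊤ := by
  obtain ⟨-, -, hpq, lift⟩ := hG
  have hA (a : A) : iA a ∈ iA.range ⊔ iB.range := Subgroup.mem_sup_left ⟨a, rfl⟩
  have hB (b : B) : iB b ∈ iA.range ⊔ iB.range := Subgroup.mem_sup_right ⟨b, rfl⟩
  obtain ⟨r, ⟨hrA, hrB⟩, -⟩ :=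
    lift _ (iA.codRestrict _ hA) (iB.codRestrict _ hB) (Subtype.ext hpq)
  have hr : (Subgroup.subtype _).comp r = MonoidHom.id G :=
    (lift G iA iB hpq).unique
      ⟨by rw [MonoidHom.comp_assoc, hrA]; rfl, by rw [MonoidHom.comp_assoc, hrB]; rfl⟩
      ⟨rfl, rfl⟩
  refine (Subgroup.eq_top_iff' _).2 fun g => ?_
  rw [← MonoidHom.id_apply G g, ← hr]
  exact (r g).2

theorem IsAmalgam.isInternalAmalgam (hG : IsAmalgam iA iB p q) :
    IsInternalAmalgam (Subgroup.zpowers (iA p)) (fun b : Bool => cond b iA.range iB.range) where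
  le b := by
    rw [Subgroup.zpowers_le]
    cases b
    exacts [⟨q, hG.2.2.1.symm⟩, ⟨p, rfl⟩]
  iSup_eq_top := by rw [← sup_eq_iSup, hG.range_sup_range_eq_top]
  exists_extension K _ f hf := by
    have hpq : f true (iA.rangeRestrict p) = f false (iB.rangeRestrict q) :=
      (hf true false _ (Subgroup.mem_zpowers _)).trans (congrArg _ (Subtype.ext hG.2.2.1))
    obtain ⟨φ, ⟨hφA, hφB⟩, -⟩ :=
      hG.2.2.2 K ((f true).comp iA.rangeRestrict) ((f false).comp iB.rangeRestrict) hpq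
    refine ⟨φ, fun b => ?_⟩
    cases b
    · rintro ⟨_, b, rfl⟩
      exact DFunLike.congr_fun hφB b
    · rintro ⟨_, a, rfl⟩
      exact DFunLike.congr_fun hφA a

end Amalgam

theorem locallyIndicable_amalgam_general {A B G : Type} [Group A] [Group B] [Group G]
    (iA : A →* G) (iB : B →* G) (p : A) (q : B)
    (hG : IsAmalgam iA iB p q) (hA : LocallyIndicable A) (hB : LocallyIndicable B) :
    LocallyIndicable G := by
  refine locallyIndicable_iff.2 (hG.isInternalAmalgam.indicable_of_fg fun b H hle hH => ?_)
  cases b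
  · exact hB.indicable_of_le_range hG.2.1 hle hH
  · exact hA.indicable_of_le_range hG.1 hle hH

/-- The amalgamated product of locally indicable groups over infinite cyclic
subgroups generated by non-proper-powers is locally indicable. -/
theorem locallyIndicable_amalgam {A B G : Type} [Group A] [Group B] [Group G]
    (iA : A →* G) (iB : B →* G) (p : A) (q : B)
    (hG : IsAmalgam iA iB p q)
    (hA : LocallyIndicable A) (hB : LocallyIndicable B)
    (hpo : ¬ IsOfFinOrder p) (hqo : ¬ IsOfFinOrder q)
    (hp : ∀ (s : A) (n : ℕ), 2 ≤ n → p ≠ s ^ n)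
    (hq : ∀ (s : B) (n : ℕ), 2 ≤ n → q ≠ s ^ n) :
    LocallyIndicable G :=
  locallyIndicable_amalgam_general iA iB p q hG hA hB
end

section
/- Let G be a locally indicable group and let w₁,…,w_m be words in G ∗ F(x₁,…,x_n) such that the m × n integer matrix M, whose (i,j)-entry is the exponent sum of x_j in w_i, has rank m. Then the system of equations w₁ = ⋯ = w_m = 1 has a solution over G; equivalently, G embeds canonically into (G ∗ F(x₁,…,x_n))/⟨⟨w₁,…,w_m⟩⟩. -/
/-!
A finite computation in the quotient takes place in a finite labelled graph with 2-cells attached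
along the relations. Suppose that an edge with label `g ≠ 1` in `G` closes up in such a graph. The
finitely many labels of edges in `G`, made trivial on as large a part of the graph as possible by a
change of gauge, generate a nontrivial subgroup, and local indicability yields a nonzero
homomorphism from it to `ℚ`. If the equations can be solved with arbitrary rational right-hand
sides, the homomorphism extends over the edges labelled by variables to a cocycle that vanishes on
the 2-cells, and this cocycle defines a cover in which the image of the lifted tree of paths has
strictly more vertices. Since the tree is finite, this tower of covers stops, and it can only stop
when no edge with a nontrivial label in `G` closes up.

Independence makes the equations solvable on the first graph, and solvability passes to the covers:
a system over a field `k` that is solvable downstairs lifts to a square matrix over the group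
algebra `k[ℚ]` whose augmentation is the identity matrix, so its determinant is nonzero, and since
`k[ℚ]` is a domain, the rows of the matrix are linearly independent.
-/

open Monoid

/-- The exponent sum of the variable `x_j` in a word `w ∈ G ∗ F(x₁,…,xₙ)`. -/
noncomputable def exponentSum {G : Type} [Group G] {n : ℕ} (j : Fin n)
    (w : Coprod G (FreeGroup (Fin n))) : ℤ :=
  Multiplicative.toAdd
    ((Coprod.lift (1 : G →* Multiplicative ℤ)
      (FreeGroup.lift fun k => Multiplicative.ofAdd (if k = j then (1 : ℤ) else 0))) w)

universe u v

namespace Howie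

section LinearAlgebra

open AddMonoidAlgebra

theorem exists_linearMap_apply_eq {k M ι : Type*} [Field k] [AddCommGroup M]
    [Module k M] {v : ι → M} (hv : LinearIndependent k v) (b : ι → k) :
    ∃ γ : M →ₗ[k] k, ∀ i, γ (v i) = b i := by
  obtain ⟨g, hg⟩ := (Finsupp.linearCombination k v).exists_leftInverse_of_injective
    (LinearMap.ker_eq_bot.2 hv)
  refine ⟨Finsupp.linearCombination k b ∘ₗ g, fun i => ?_⟩
  simpa using congrArg (Finsupp.linearCombination k b)
    (LinearMap.congr_fun hg (Finsupp.single i 1))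

theorem linearIndependent_of_map_eq_one {R k S : Type*} [CommRing R] [IsDomain R] [CommRing k]
    [Nontrivial k] [Finite S] [DecidableEq S] (ε : R →+* k) {E : Matrix S S R}
    (hE : E.map ε = 1) : LinearIndependent R (fun s => E s) := by
  have := Fintype.ofFinite S
  refine Matrix.linearIndependent_rows_of_det_ne_zero fun h => ?_
  have hdet := ε.map_det E
  rw [RingHom.mapMatrix_apply, hE, Matrix.det_one, h, map_zero] at hdet
  exact zero_ne_one hdet

theorem linearIndependent_row_of_rank_eq_card {R m n : Type*} [CommRing R] [IsDomain R]
    [IsNoetherianRing R] [Fintype m] [Fintype n] {M : Matrix m n R}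
    (hM : M.rank = Fintype.card m) : LinearIndependent R M.row := by
  classical
  rw [← Matrix.vecMul_injective_iff, ← Matrix.coe_vecMulLinear, ← LinearMap.ker_eq_bot,
    LinearMap.ker_eq_bot']
  intro c hc
  let φ : (m → R) →ₗ[R] R := dotProductBilin R R c
  have hle : LinearMap.range M.mulVecLin ≤ LinearMap.ker φ := by
    rintro _ ⟨v, rfl⟩
    simpa [φ, Matrix.dotProduct_mulVec] using congrArg (· ⬝ᵥ v) hc
  have hrange : Module.finrank R (LinearMap.range φ) = 0 := by
    have hker := Submodule.finrank_mono hle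
    have hsum := Submodule.finrank_quotient_add_finrank (LinearMap.ker φ)
    rw [φ.quotKerEquivRange.finrank_eq, Module.finrank_fintype_fun_eq_card] at hsum
    rw [Matrix.rank] at hM
    omega
  have hφ : φ = 0 := LinearMap.range_eq_bot.1 (Submodule.finrank_eq_zero.1 hrange)
  ext i
  simpa [φ] using LinearMap.congr_fun hφ (Pi.single i 1)

theorem exists_linearCombination_eq {X I : Type*} {v : I → X →₀ ℤ} (hv : LinearIndependent ℤ v)
    (b : I → ℚ) : ∃ y : X → ℚ, ∀ i, Finsupp.linearCombination ℤ y (v i) = b i := by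
  let ι : (X →₀ ℤ) →ₗ[ℤ] (X →₀ ℚ) := Finsupp.mapRange.linearMap (Algebra.linearMap ℤ ℚ)
  have hι : LinearMap.ker ι = ⊥ :=
    LinearMap.ker_eq_bot.2 (Finsupp.mapRange_injective _ (by simp) Int.cast_injective)
  obtain ⟨γ, hγ⟩ := exists_linearMap_apply_eq
    ((LinearIndependent.iff_fractionRing ℤ ℚ).1 (hv.map' ι hι)) b
  have hcomp : Finsupp.linearCombination ℤ (fun x => γ (Finsupp.single x 1)) =
      γ.restrictScalars ℤ ∘ₗ ι := by
    ext x
    simp [ι]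
  exact ⟨fun x => γ (Finsupp.single x 1), fun i => by rw [← hγ i, hcomp]; rfl⟩

/-- The augmentation `k[A] → k` of a monoid algebra, which sums the coefficients. -/
noncomputable def augmentation (k A : Type*) [CommSemiring k] [AddMonoid A] : k[A] →+* k :=
  (AddMonoidAlgebra.lift k k A 1 : k[A] →ₐ[k] k)

@[simp] theorem augmentation_single {k A : Type*} [CommSemiring k] [AddMonoid A] (a : A) (x : k) :
    augmentation k A (single a x) = x := by
  simp [augmentation]

end LinearAlgebra

/-- The function `ψ` restricts to a homomorphism from the subgroup `H` to the additive group `A`. -/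
def IsAdditiveOn {G A : Type*} [Group G] [AddCommGroup A] (H : Subgroup G) (ψ : G → A) : Prop :=
  ∀ ⦃a⦄, a ∈ H → ∀ ⦃b⦄, b ∈ H → ψ (a * b) = ψ a + ψ b

theorem IsAdditiveOn.map_one {G A : Type*} [Group G] [AddCommGroup A] {H : Subgroup G} {ψ : G → A}
    (hψ : IsAdditiveOn H ψ) : ψ 1 = 0 := by
  simpa using hψ (one_mem H) (one_mem H)

theorem exists_isAdditiveOn_closure {G : Type} [Group G] (hG : LocallyIndicable G) {S : Set G}
    (hS : S.Finite) (hne : ∃ s ∈ S, s ≠ 1) :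
    ∃ ψ : G → ℚ, IsAdditiveOn (Subgroup.closure S) ψ ∧ ∃ s ∈ S, ψ s ≠ 0 := by
  classical
  have hbot : Subgroup.closure S ≠ ⊥ := by
    simpa [Subgroup.closure_eq_bot_iff, Set.subset_def] using hne
  obtain ⟨φ, hφ⟩ := hG _ hbot ((Subgroup.fg_iff _).2 ⟨S, rfl, hS⟩)
  let ψ : G → ℚ := fun x => if hx : x ∈ Subgroup.closure S then ((φ ⟨x, hx⟩).toAdd : ℚ) else 0
  have hψ (x : Subgroup.closure S) : ψ x = (φ x).toAdd := by simp [ψ]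
  refine ⟨ψ, fun a ha b hb => ?_, ?_⟩
  · have := hψ (⟨a, ha⟩ * ⟨b, hb⟩)
    rwa [map_mul, toAdd_mul, Int.cast_add, ← hψ, ← hψ] at this
  · by_contra! hzero
    have hφ_one : φ = 1 := by
      refine MonoidHom.eq_of_eqOn_dense Subgroup.closure_closure_coe_preimage fun x hx => ?_
      simpa [hψ] using hzero x hx
    obtain ⟨x, hx⟩ := hφ (Multiplicative.ofAdd 1)
    rw [hφ_one, MonoidHom.one_apply, eq_comm, ofAdd_eq_one] at hx
    exact one_ne_zero hx

theorem exists_gauge {G K A ε : Type*} [Group G] {E : Set ε} (hE : E.Finite) (s t : ε → K)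
    (g : ε → G) :
    ∃ p : K → G, ∀ F : K → A,
      (∀ e ∈ E, p (t e) * g e * (p (s e))⁻¹ = 1 → F (s e) = F (t e)) →
      ∀ e ∈ E, F (s e) = F (t e) := by
  classical
  induction E, hE using Set.Finite.induction_on with
  | empty => exact ⟨1, by simp⟩
  | @insert e₀ E _ _ ih =>
    obtain ⟨p, hp⟩ := ih
    simp only [Set.forall_mem_insert]
    by_cases hforced : ∀ F : K → A,
      (∀ e ∈ E, p (t e) * g e * (p (s e))⁻¹ = 1 → F (s e) = F (t e)) → F (s e₀) = F (t e₀)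
    · exact ⟨p, fun F hF => ⟨hforced F hF.2, hp F hF.2⟩⟩
    push Not at hforced
    obtain ⟨F₀, hF₀, hne⟩ := hforced
    -- `F₀` agrees at the ends of each edge of `E` with trivial gauged label, so multiplying the
    -- gauge by `a` on a level set of `F₀` keeps those labels trivial, and it makes that of `e₀`
    -- trivial.
    let a : G := p (s e₀) * (g e₀)⁻¹ * (p (t e₀))⁻¹
    let p' : K → G := fun k => if F₀ k = F₀ (t e₀) then a * p k else p k
    refine ⟨p', fun F hF => ⟨hF.1 ?_, hp F fun e he htriv => hF.2 e he ?_⟩⟩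
    · simp only [p', if_neg hne, if_true, a]
      group
    · simp only [p', hF₀ e he htriv]
      split_ifs
      · rw [mul_inv_rev, mul_assoc a, mul_assoc a, ← mul_assoc _ _ a⁻¹, htriv, one_mul,
          mul_inv_cancel]
      · exact htriv

section Words

variable {L K A B : Type*} [AddCommGroup A] [AddCommGroup B]

/-- A finite set of words that contains the tail of each of its members. A word spells a path read
from right to left, so that `V` is a finite tree rooted at the empty word. -/
def SuffixClosed (V : Finset (List L)) : Prop :=
  ∀ ⦃a l⦄, a :: l ∈ V → l ∈ V

/-- A vertex labelling of the tree `V` whose fibres may be identified to give a finite labelled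
graph: the label of `a :: l` is determined by `a` and the label of `l`, and the two sides of a
relation in `R` lead from `q` to vertices with the same label. -/
structure IsLabelling (R : List L → List L → Prop) (V : Finset (List L)) (κ : List L → K) :
    Prop where
  det : ∀ ⦃a l l'⦄, a :: l ∈ V → a :: l' ∈ V → κ l = κ l' → κ (a :: l) = κ (a :: l')
  rel : ∀ ⦃u v q⦄, R u v → u ++ q ∈ V → v ++ q ∈ V → κ (u ++ q) = κ (v ++ q)

/-- The sum of a cochain `c` along the path spelled by a word, where `c l a` is the value of `c` on
the edge from `l` to `a :: l`. -/
def pathSum (c : List L → L → A) : List L → A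
  | [] => 0
  | a :: l => pathSum c l + c l a

/-- The sum of a cochain along the path that starts at `q` and spells `u`. -/
def increment (c : List L → L → A) (u q : List L) : A :=
  pathSum c (u ++ q) - pathSum c q

/-- The cochain `c` on the tree `V` comes from a cochain on the graph obtained by identifying
vertices with equal labels. -/
def Descends (V : Finset (List L)) (κ : List L → K) (c : List L → L → A) : Prop :=
  ∀ ⦃a l l'⦄, a :: l ∈ V → a :: l' ∈ V → κ l = κ l' → c l a = c l' a

/-- The cochain `c` has the same sum along both sides of every relation in `R`, that is, it vanishes
on the boundary of every 2-cell. -/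
def IsCocycle (R : List L → List L → Prop) (V : Finset (List L)) (c : List L → L → A) : Prop :=
  ∀ ⦃u v q⦄, R u v → u ++ q ∈ V → v ++ q ∈ V → pathSum c (u ++ q) = pathSum c (v ++ q)

/-- The labelling of the vertices by those of the `A`-cover defined by the cocycle `c`. -/
def coverLabel (κ : List L → K) (c : List L → L → A) (l : List L) : K × A :=
  (κ l, pathSum c l)

variable {V : Finset (List L)} {R : List L → List L → Prop} {κ : List L → K}
  {c d : List L → L → A}

theorem exists_suffixClosed_superset (V : Finset (List L)) : ∃ V', V ⊆ V' ∧ SuffixClosed V' := by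
  classical
  refine ⟨V.biUnion fun l => l.tails.toFinset, fun l hl => ?_, fun a l hl => ?_⟩
  · simpa using ⟨l, hl, List.suffix_refl l⟩
  · simp only [Finset.mem_biUnion, List.mem_toFinset, List.mem_tails] at hl ⊢
    obtain ⟨x, hx, hsuffix⟩ := hl
    exact ⟨x, hx, (List.suffix_cons a l).trans hsuffix⟩

theorem SuffixClosed.of_append (hV : SuffixClosed V) {q : List L} :
    ∀ {u : List L}, u ++ q ∈ V → q ∈ V
  | [], h => h
  | _ :: _, h => hV.of_append (hV h)

theorem IsLabelling.append_eq (hκ : IsLabelling R V κ) (hV : SuffixClosed V) {q q' : List L}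
    (h : κ q = κ q') : ∀ {u : List L}, u ++ q ∈ V → u ++ q' ∈ V → κ (u ++ q) = κ (u ++ q')
  | [], _, _ => h
  | _ :: _, hq, hq' => hκ.det hq hq' (hκ.append_eq hV h (hV hq) (hV hq'))

theorem map_pathSum (T : A →+ B) (c : List L → L → A) (l : List L) :
    T (pathSum c l) = pathSum (fun l a => T (c l a)) l := by
  induction l with
  | nil => simp [pathSum]
  | cons a l ih => simp [pathSum, ih]

theorem map_increment (T : A →+ B) (c : List L → L → A) (u q : List L) :
    T (increment c u q) = increment (fun l a => T (c l a)) u q := by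
  simp only [increment, map_sub, map_pathSum]

theorem pathSum_add (c d : List L → L → A) (l : List L) :
    pathSum (c + d) l = pathSum c l + pathSum d l := by
  induction l with
  | nil => simp [pathSum]
  | cons a l ih => simp only [pathSum, ih, Pi.add_apply]; abel

theorem increment_cons (c : List L → L → A) (a : L) (u q : List L) :
    increment c (a :: u) q = increment c u q + c (u ++ q) a :=
  add_sub_right_comm _ _ _

theorem increment_eq_map (hV : SuffixClosed V) {q q' : List L} (T : A →+ A) :
    ∀ {u : List L},
      (∀ a v, a :: v ++ q ∈ V → a :: v ++ q' ∈ V → c (v ++ q) a = T (c (v ++ q') a)) →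
      u ++ q ∈ V → u ++ q' ∈ V → increment c u q = T (increment c u q')
  | [], _, _, _ => by simp [increment]
  | a :: u, hT, hq, hq' => by
    rw [increment_cons, increment_cons, map_add, hT a u hq hq',
      increment_eq_map hV T hT (hV hq) (hV hq')]

theorem Descends.increment_eq (hc : Descends V κ c) (hκ : IsLabelling R V κ)
    (hV : SuffixClosed V) {u q q' : List L} (h : κ q = κ q') (hq : u ++ q ∈ V)
    (hq' : u ++ q' ∈ V) : increment c u q = increment c u q' :=
  increment_eq_map hV (AddMonoidHom.id A)
    (fun _ _ hv hv' => hc hv hv' (hκ.append_eq hV h (hV hv) (hV hv'))) hq hq'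

theorem Descends.add (hc : Descends V κ c) (hd : Descends V κ d) : Descends V κ (c + d) :=
  fun _ _ _ hl hl' h => congrArg₂ (· + ·) (hc hl hl' h) (hd hl hl' h)

theorem IsCocycle.add (hc : IsCocycle R V c) (hd : IsCocycle R V d) : IsCocycle R V (c + d) :=
  fun _ _ _ huv hu hv => by simp only [pathSum_add, hc huv hu hv, hd huv hu hv]

theorem IsLabelling.isLabelling_coverLabel (hκ : IsLabelling R V κ) (hc : Descends V κ c)
    (hcocycle : IsCocycle R V c) : IsLabelling R V (coverLabel κ c) where
  det _ _ _ hl hl' h := by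
    obtain ⟨hk, hsum⟩ := Prod.mk.inj h
    exact Prod.ext (hκ.det hl hl' hk) (congrArg₂ (· + ·) hsum (hc hl hl' hk))
  rel _ _ _ huv hu hv := Prod.ext (hκ.rel huv hu hv) (hcocycle huv hu hv)

theorem ncard_image_lt_ncard_image_coverLabel {l l' : List L} (hl : l ∈ V) (hl' : l' ∈ V)
    (h : κ l = κ l') (hne : pathSum c l ≠ pathSum c l') :
    (κ '' V).ncard < (coverLabel κ c '' V).ncard := by
  have hfin : (coverLabel κ c '' V).Finite := V.finite_toSet.image _
  have himage : κ '' V = Prod.fst '' (coverLabel κ c '' V) := by rw [← Set.image_comp]; rfl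
  rw [himage]
  refine (Set.ncard_image_le hfin).lt_of_ne fun hcard => hne ?_
  exact congrArg Prod.snd (Set.injOn_of_ncard_image_eq hcard hfin
    (Set.mem_image_of_mem _ hl) (Set.mem_image_of_mem _ hl') h)

open Filter in
theorem eventually_label_eq_of_conGen {u v : FreeMonoid L}
    (h : conGen (fun u v : FreeMonoid L => R u.toList v.toList) u v) (q : List L) :
    ∀ᶠ V : Finset (List L) in atTop, SuffixClosed V → ∀ (K : Type) (κ : List L → K),
      IsLabelling R V κ → κ (u.toList ++ q) = κ (v.toList ++ q) := by
  have hmem (l : List L) : ∀ᶠ V : Finset (List L) in atTop, l ∈ V := by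
    simpa using eventually_ge_atTop ({l} : Finset (List L))
  induction h generalizing q with
  | of u v h =>
    filter_upwards [hmem (u.toList ++ q), hmem (v.toList ++ q)] with V hu hv _ K κ hκ
    exact hκ.rel h hu hv
  | refl => exact .of_forall fun _ _ _ _ _ => rfl
  | symm _ ih => exact (ih q).mono fun V h hV K κ hκ => (h hV K κ hκ).symm
  | trans _ _ ih ih' =>
    filter_upwards [ih q, ih' q] with V h h' hV K κ hκ
    exact (h hV K κ hκ).trans (h' hV K κ hκ)
  | @mul u u' v v' _ _ ihu ihv =>
    filter_upwards [ihv q, ihu (v'.toList ++ q), hmem (u.toList ++ (v.toList ++ q)),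
      hmem (u.toList ++ (v'.toList ++ q))] with V hv hu hmem hmem' hV K κ hκ
    simp only [FreeMonoid.toList_mul, List.append_assoc]
    exact (hκ.append_eq hV (hv hV K κ hκ) hmem hmem').trans (hu hV K κ hκ)

end Words

/-- The letters of words in `G ∗ F(X)`: the elements of `G`, the variables `(x, true)` and their
inverses `(x, false)`. -/
abbrev Letter (G X : Type*) := G ⊕ X × Bool

/-- The defining relations of `G ∗ F(X)` as a monoid on the letters. -/
inductive FreeProductRel {G X : Type*} [Group G] : List (Letter G X) → List (Letter G X) → Prop
  | one : FreeProductRel [.inl 1] []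
  | mul (g h : G) : FreeProductRel [.inl g, .inl h] [.inl (g * h)]
  | cancel (x : X) (b : Bool) : FreeProductRel [.inr (x, !b), .inr (x, b)] []

/-- The relations of `FreeProductRel` together with `r = 1` for each `r` in `𝒲`. -/
inductive SystemRel {G X : Type*} [Group G] (𝒲 : Set (List (Letter G X))) :
    List (Letter G X) → List (Letter G X) → Prop
  | freeProduct {u v : List (Letter G X)} : FreeProductRel u v → SystemRel 𝒲 u v
  | equation {r : List (Letter G X)} : r ∈ 𝒲 → SystemRel 𝒲 r []

section Cochains

variable {G X K A B k : Type*} [AddCommGroup A] [AddCommGroup B]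
  {V : Finset (List (Letter G X))} {κ : List (Letter G X) → K}
  {R : List (Letter G X) → List (Letter G X) → Prop} {𝒲 : Set (List (Letter G X))}

/-- The cochain that is `y k x` on the edge with letter `x` out of the vertices labelled `k`, and
zero on the edges with letters in `G`. An edge with letter `x⁻¹` is the edge with letter `x` out of
its endpoint, traversed backwards. -/
def varCochain (κ : List (Letter G X) → K) (y : K → X → A) (l : List (Letter G X)) :
    Letter G X → A
  | .inl _ => 0
  | .inr (x, true) => y (κ l) x
  | .inr (x, false) => -y (κ (.inr (x, false) :: l)) x

theorem map_increment_varCochain (T : A →+ B) (y : K → X → A) (u q : List (Letter G X)) :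
    T (increment (varCochain κ y) u q) = increment (varCochain κ fun k x => T (y k x)) u q := by
  rw [map_increment]
  congr! 1
  ext l (g | ⟨x, _ | _⟩) <;> simp [varCochain]

theorem increment_varCochain_coverLabel (c : List (Letter G X) → Letter G X → B) (y : K → X → A)
    (u q : List (Letter G X)) :
    increment (varCochain (coverLabel κ c) fun p x => y p.1 x) u q =
      increment (varCochain κ y) u q :=
  rfl

theorem IsLabelling.descends_varCochain (hκ : IsLabelling R V κ) (y : K → X → A) :
    Descends V κ (varCochain κ y)
  | .inl _, _, _, _, _, _ => rfl
  | .inr (x, true), _, _, _, _, h => congrArg (y · x) h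
  | .inr (x, false), _, _, hl, hl', h => congrArg (-y · x) (hκ.det hl hl' h)

theorem IsLabelling.isCocycle_varCochain [Group G] (hκ : IsLabelling FreeProductRel V κ)
    (y : K → X → A) : IsCocycle FreeProductRel V (varCochain κ y) := by
  intro u v q huv hu hv
  have hlabel := hκ.rel huv hu hv
  cases huv with
  | one | mul => simp [pathSum, varCochain]
  | cancel x b => cases b <;> simp_all [pathSum, varCochain]

/-- Cochains on the variable edges can be given arbitrary sums around the 2-cells that the words in
`𝒲` span in the graph with vertex labelling `κ`. -/
def Solvable (k : Type*) [AddCommGroup k] (𝒲 : Set (List (Letter G X)))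
    (V : Finset (List (Letter G X))) (κ : List (Letter G X) → K) : Prop :=
  ∀ b : K → List (Letter G X) → k, ∃ y : K → X → k, ∀ r ∈ 𝒲, ∀ q, r ++ q ∈ V →
    increment (varCochain κ y) r q = b (κ q) r

/-- The 2-cells of the graph with vertex labelling `κ`: the pairs of a vertex and a word of `𝒲`
that can be read from there. -/
def cells (𝒲 : Set (List (Letter G X))) (V : Finset (List (Letter G X)))
    (κ : List (Letter G X) → K) : Set (K × List (Letter G X)) :=
  {s | s.2 ∈ 𝒲 ∧ ∃ q, κ q = s.1 ∧ s.2 ++ q ∈ V}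

theorem finite_cells : (cells 𝒲 V κ).Finite := by
  classical
  refine (V.biUnion fun l => (Finset.range (l.length + 1)).image
    fun n => (κ (l.drop n), l.take n)).finite_toSet.subset ?_
  rintro ⟨_, r⟩ ⟨-, q, rfl, hq⟩
  simp only [Finset.coe_biUnion, Finset.coe_image, Set.mem_iUnion]
  exact ⟨r ++ q, hq, r.length, by simp⟩

open AddMonoidAlgebra

/-- The lift to an `A`-cover of a family of cochains on the variable edges, as one cochain with
values in a power of the group algebra. -/
noncomputable def monomialLift {ι : Type*} [Semiring k] (y : ι → K → X → k) (p : K × A) (x : X)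
    (i : ι) : k[A] :=
  single p.2 (y i p.1 x)

variable {c : List (Letter G X) → Letter G X → A} {ι : Type*}

theorem IsLabelling.increment_monomialLift [Ring k] (hκ : IsLabelling R V κ)
    (hV : SuffixClosed V) (hc : Descends V κ c) (y : ι → K → X → k) {u q q' : List (Letter G X)}
    (h : κ q = κ q') (hq : u ++ q ∈ V) (hq' : u ++ q' ∈ V) :
    increment (varCochain (coverLabel κ c) (monomialLift y)) u q =
      single (pathSum c q - pathSum c q') (1 : k) •
        increment (varCochain (coverLabel κ c) (monomialLift y)) u q' := by
  set a := pathSum c q - pathSum c q' with ha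
  have hlift {v : List (Letter G X)} (hv : v ++ q ∈ V) (hv' : v ++ q' ∈ V) (x : X) :
      monomialLift y (coverLabel κ c (v ++ q)) x =
        single a (1 : k) • monomialLift y (coverLabel κ c (v ++ q')) x := by
    have hsum : pathSum c (v ++ q) = a + pathSum c (v ++ q') := by
      rw [sub_eq_iff_eq_add.1 (hc.increment_eq hκ hV h hv hv'), increment, ha]
      abel
    ext1 i
    simp [monomialLift, coverLabel, hsum, hκ.append_eq hV h hv hv', single_mul_single]
  refine increment_eq_map hV (DistribSMul.toAddMonoidHom _ (single a (1 : k))) ?_ hq hq'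
  rintro (g | ⟨x, _ | _⟩) v hv hv'
  · simp [varCochain]
  · simpa [varCochain] using hlift hv hv' x
  · simpa [varCochain] using hlift (hV hv) (hV hv') x

theorem Solvable.exists_linearIndependent_increment [Field k] [UniqueSums A]
    (hsolv : Solvable k 𝒲 V κ) (c : List (Letter G X) → Letter G X → A)
    {q : cells 𝒲 V κ → List (Letter G X)} (hq : ∀ s, κ (q s) = s.1.1 ∧ s.1.2 ++ q s ∈ V) :
    ∃ y : cells 𝒲 V κ → K → X → k, LinearIndependent k[A] fun s : cells 𝒲 V κ =>
      increment (varCochain (coverLabel κ c) (monomialLift y)) s.1.2 (q s) := by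
  classical
  have := (finite_cells (𝒲 := 𝒲) (V := V) (κ := κ)).to_subtype
  choose y hy using fun t : cells 𝒲 V κ => hsolv fun k r => if (k, r) = t then 1 else 0
  refine ⟨y, linearIndependent_of_map_eq_one (augmentation k A) ?_⟩
  ext s t
  have heval := map_increment_varCochain (κ := coverLabel κ c)
    ((augmentation k A).toAddMonoidHom.comp (Pi.evalAddMonoidHom _ t)) (monomialLift y) s.1.2 (q s)
  refine heval.trans ?_
  simp only [AddMonoidHom.coe_comp, Function.comp_apply, Pi.evalAddMonoidHom_apply, monomialLift,
    RingHom.toAddMonoidHom_eq_coe, AddMonoidHom.coe_coe, augmentation_single]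
  rw [increment_varCochain_coverLabel, hy t _ s.2.1 _ (hq s).2, (hq s).1, Matrix.one_apply]
  simp only [Subtype.ext_iff]

theorem Solvable.solvable_coverLabel [Field k] [UniqueSums A] (hsolv : Solvable k 𝒲 V κ)
    (hκ : IsLabelling R V κ) (hV : SuffixClosed V) (hc : Descends V κ c) :
    Solvable k 𝒲 V (coverLabel κ c) := by
  intro b
  choose q hq using fun s : cells 𝒲 V κ => s.2.2
  obtain ⟨y, hy⟩ := hsolv.exists_linearIndependent_increment c hq
  obtain ⟨γ, hγ⟩ := exists_linearMap_apply_eq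
    (linearIndependent_smul (AddMonoidAlgebra.basis A k).linearIndependent hy)
    fun p => b (p.2.1.1, p.1 + pathSum c (q p.2)) p.2.1.2
  refine ⟨fun p x => γ (monomialLift y p x), fun r hr q' hq' => ?_⟩
  let s : cells 𝒲 V κ := ⟨(κ q', r), hr, q', rfl, hq'⟩
  have heval := map_increment_varCochain (κ := coverLabel κ c) γ.toAddMonoidHom
    (monomialLift y) r q'
  have htranslate := hκ.increment_monomialLift hV hc y (hq s).1.symm hq' (hq s).2
  rw [htranslate] at heval
  refine heval.symm.trans ?_
  simpa [s, coverLabel] using hγ (pathSum c q' - pathSum c (q s), s)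

end Cochains

section GroupCochains

variable {G X K A : Type*} {V : Finset (List (Letter G X))} {κ : List (Letter G X) → K}

/-- The edges of the tree `V` with letters in `G`, each given by its letter and its origin. -/
def groupEdges (V : Finset (List (Letter G X))) : Set (G × List (Letter G X)) :=
  {e | .inl e.1 :: e.2 ∈ V}

theorem finite_groupEdges (V : Finset (List (Letter G X))) : (groupEdges V).Finite := by
  refine V.finite_toSet.preimage
    (f := fun e : G × List (Letter G X) => .inl e.1 :: e.2) ?_
  rintro ⟨g, l⟩ - ⟨g', l'⟩ - h
  simpa using h

variable [Group G] [AddCommGroup A] {R : List (Letter G X) → List (Letter G X) → Prop}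
  {𝒲 : Set (List (Letter G X))} {p : K → G} {ψ : G → A}

/-- The element of `G` carried by the edge with letter `g` out of `l`, after the change of gauge
by `p` at the vertices. -/
def gaugeLabel (κ : List (Letter G X) → K) (p : K → G) (e : G × List (Letter G X)) : G :=
  p (κ (.inl e.1 :: e.2)) * e.1 * (p (κ e.2))⁻¹

/-- The cochain that is `ψ` of the gauged label on the edges with letters in `G`, and zero on the
edges with letters in `X`. -/
def groupCochain (κ : List (Letter G X) → K) (p : K → G) (ψ : G → A) (l : List (Letter G X)) :
    Letter G X → A
  | .inl g => ψ (gaugeLabel κ p (g, l))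
  | .inr _ => 0

/-- The gauged labels of the edges of `V` with letters in `G`. -/
def gaugeLabels (V : Finset (List (Letter G X))) (κ : List (Letter G X) → K) (p : K → G) : Set G :=
  gaugeLabel κ p '' groupEdges V

theorem IsLabelling.descends_groupCochain (hκ : IsLabelling R V κ) (p : K → G) (ψ : G → A) :
    Descends V κ (groupCochain κ p ψ)
  | .inl g, l, l', hl, hl', h => by simp [groupCochain, gaugeLabel, h, hκ.det hl hl' h]
  | .inr _, _, _, _, _, _ => rfl

theorem IsLabelling.isCocycle_groupCochain (hκ : IsLabelling FreeProductRel V κ)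
    (hV : SuffixClosed V) (hψ : IsAdditiveOn (Subgroup.closure (gaugeLabels V κ p)) ψ) :
    IsCocycle FreeProductRel V (groupCochain κ p ψ) := by
  intro u v q huv hu hv
  have hlabel := hκ.rel huv hu hv
  have hmem {g : G} {l : List (Letter G X)} (h : (g, l) ∈ groupEdges V) :
      gaugeLabel κ p (g, l) ∈ Subgroup.closure (gaugeLabels V κ p) :=
    Subgroup.subset_closure ⟨_, h, rfl⟩
  cases huv with
  | one =>
    have hψ_one := hψ.map_one
    simp_all [pathSum, groupCochain, gaugeLabel]
  | mul g h =>
    have hmul : gaugeLabel κ p (g * h, q) =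
        gaugeLabel κ p (g, .inl h :: q) * gaugeLabel κ p (h, q) := by
      simp_all [gaugeLabel, mul_assoc]
    simp only [List.cons_append, List.nil_append, pathSum, groupCochain, hmul,
      hψ (hmem (l := .inl h :: q) hu) (hmem (l := q) (hV hu))]
    abel
  | cancel x b => simp [pathSum, groupCochain]

theorem Solvable.exists_isCocycle (hsolv : Solvable A 𝒲 V κ)
    (hκ : IsLabelling (SystemRel 𝒲) V κ) (hV : SuffixClosed V)
    (hψ : IsAdditiveOn (Subgroup.closure (gaugeLabels V κ p)) ψ) :
    ∃ c : List (Letter G X) → Letter G X → A, Descends V κ c ∧ IsCocycle (SystemRel 𝒲) V c ∧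
      ∀ g l, c l (.inl g) = ψ (gaugeLabel κ p (g, l)) := by
  classical
  have hκ_free : IsLabelling FreeProductRel V κ := ⟨hκ.det, fun _ _ _ h => hκ.rel (.freeProduct h)⟩
  let d := groupCochain κ p ψ
  have hd : Descends V κ d := hκ.descends_groupCochain p ψ
  obtain ⟨y, hy⟩ := hsolv fun k r =>
    if h : ∃ q, κ q = k ∧ r ++ q ∈ V then -increment d r h.choose else 0
  refine ⟨d + varCochain κ y, hd.add (hκ.descends_varCochain y), fun u v q huv hu hv => ?_,
    fun g l => by simp [d, groupCochain, varCochain]⟩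
  cases huv with
  | freeProduct huv =>
    exact (hκ_free.isCocycle_groupCochain hV hψ).add (hκ_free.isCocycle_varCochain y) huv hu hv
  | equation hr =>
    have hq : ∃ q', κ q' = κ q ∧ u ++ q' ∈ V := ⟨q, rfl, hu⟩
    have hsum : increment (varCochain κ y) u q = -increment d u q := by
      rw [hy u hr q hu, dif_pos hq,
        hd.increment_eq hκ hV hq.choose_spec.1 hq.choose_spec.2 hu]
    rw [← sub_eq_zero]
    simp only [increment] at hsum
    rw [pathSum_add, List.nil_append, pathSum_add, add_sub_add_comm, hsum, add_neg_cancel]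

end GroupCochains

section Tower

variable {G : Type} {X : Type*} {K : Type*} [Group G] {V : Finset (List (Letter G X))}
  {κ : List (Letter G X) → K} {𝒲 : Set (List (Letter G X))}

theorem Solvable.exists_pathSum_ne (hsolv : Solvable ℚ 𝒲 V κ) (hG : LocallyIndicable G)
    (hκ : IsLabelling (SystemRel 𝒲) V κ) (hV : SuffixClosed V) {g₀ : G} {l₀ : List (Letter G X)}
    (hl₀ : .inl g₀ :: l₀ ∈ V) (hκ₀ : κ (.inl g₀ :: l₀) = κ l₀) (hg₀ : g₀ ≠ 1) :
    ∃ c : List (Letter G X) → Letter G X → ℚ, Descends V κ c ∧ IsCocycle (SystemRel 𝒲) V c ∧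
      ∃ l ∈ V, ∃ l' ∈ V, κ l = κ l' ∧ pathSum c l ≠ pathSum c l' := by
  obtain ⟨p, hp⟩ := exists_gauge (A := ℚ) (finite_groupEdges V)
    (fun e => κ e.2) (fun e => κ (.inl e.1 :: e.2)) Prod.fst
  obtain ⟨ψ, hψ, _, ⟨⟨g, l⟩, hl, rfl⟩, hne⟩ :=
    exists_isAdditiveOn_closure hG ((finite_groupEdges V).image (gaugeLabel κ p))
      ⟨_, ⟨(g₀, l₀), hl₀, rfl⟩, by simpa [gaugeLabel, hκ₀] using hg₀⟩
  obtain ⟨c, hc, hcocycle, hcψ⟩ := hsolv.exists_isCocycle hκ hV hψ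
  refine ⟨c, hc, hcocycle, ?_⟩
  by_contra! hfactor
  have hfactor' : Function.FactorsThrough (fun l : V => pathSum c l) (fun l : V => κ l) :=
    fun l l' h => hfactor l l.2 l' l'.2 h
  obtain ⟨F, hcomp⟩ := (Function.factorsThrough_iff _).1 hfactor'
  have hF (l) (hl : l ∈ V) : F (κ l) = pathSum c l := (congrFun hcomp ⟨l, hl⟩).symm
  have hedge (g l) (hl : .inl g :: l ∈ V) :
      F (κ (.inl g :: l)) = F (κ l) + ψ (gaugeLabel κ p (g, l)) := by
    rw [hF _ hl, hF _ (hV hl), ← hcψ, pathSum]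
  have hconst := hp F (fun e he htriv => by
    rw [hedge _ _ he, gaugeLabel, htriv, hψ.map_one, add_zero]) (g, l) hl
  exact hne (by simpa [hconst] using hedge g l hl)

theorem Solvable.exists_separating_labelling {K : Type} {κ : List (Letter G X) → K}
    (hG : LocallyIndicable G) (hV : SuffixClosed V) (hκ : IsLabelling (SystemRel 𝒲) V κ)
    (hsolv : Solvable ℚ 𝒲 V κ) :
    ∃ (K' : Type) (κ' : List (Letter G X) → K'), IsLabelling (SystemRel 𝒲) V κ' ∧
      ∀ g l, .inl g :: l ∈ V → κ' (.inl g :: l) = κ' l → g = 1 := by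
  induction hn : V.card - (κ '' V).ncard using Nat.strong_induction_on generalizing K with
  | _ n ih =>
    by_cases hsep : ∀ g l, .inl g :: l ∈ V → κ (.inl g :: l) = κ l → g = 1
    · exact ⟨K, κ, hκ, hsep⟩
    push Not at hsep
    obtain ⟨g₀, l₀, hl₀, hκ₀, hg₀⟩ := hsep
    obtain ⟨c, hc, hcocycle, l, hl, l', hl', hll', hne⟩ :=
      hsolv.exists_pathSum_ne hG hκ hV hl₀ hκ₀ hg₀
    have hlt := ncard_image_lt_ncard_image_coverLabel hl hl' hll' hne
    have hle : (coverLabel κ c '' V).ncard ≤ V.card := by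
      simpa using Set.ncard_image_le (f := coverLabel κ c) V.finite_toSet
    exact ih _ (by omega) (hκ.isLabelling_coverLabel hc hcocycle)
      (hsolv.solvable_coverLabel hκ hV hc) rfl

end Tower

section WordEval

variable {G X : Type*} [Group G]

/-- The element of `G ∗ F(X)` spelled by a word. -/
def wordEval : FreeMonoid (Letter G X) →* Coprod G (FreeGroup X) :=
  FreeMonoid.lift (Sum.elim Coprod.inl fun x => Coprod.inr (FreeGroup.mk [x]))

@[simp] theorem wordEval_of_inl (g : G) :
    wordEval (.of (.inl g) : FreeMonoid (Letter G X)) = Coprod.inl g :=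
  rfl

@[simp] theorem wordEval_of_inr (x : X × Bool) :
    wordEval (.of (.inr x) : FreeMonoid (Letter G X)) = Coprod.inr (FreeGroup.mk [x]) :=
  rfl

theorem wordEval_surjective : Function.Surjective (wordEval (G := G) (X := X)) := by
  rw [← MonoidHom.mrange_eq_top, eq_top_iff, ← Coprod.mrange_inl_sup_mrange_inr, sup_le_iff]
  refine ⟨?_, ?_⟩
  · rintro _ ⟨g, rfl⟩
    exact ⟨.of (.inl g), wordEval_of_inl g⟩
  · rintro _ ⟨⟨l⟩, rfl⟩
    induction l with
    | nil => exact ⟨1, (map_one wordEval).trans (map_one Coprod.inr).symm⟩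
    | cons x l ih =>
      have hmul : (FreeGroup.mk (x :: l)) = FreeGroup.mk [x] * FreeGroup.mk l := by simp
      change Coprod.inr (FreeGroup.mk _) ∈ _
      rw [hmul, map_mul]
      exact mul_mem ⟨.of (.inr x), wordEval_of_inr x⟩ ih

/-- The vector of the exponent sums of the variables in an element of `G ∗ F(X)`. -/
noncomputable def exponentVector : Coprod G (FreeGroup X) →* Multiplicative (X →₀ ℤ) :=
  Coprod.lift 1 (FreeGroup.lift fun x => .ofAdd (Finsupp.single x 1))

theorem increment_varCochain_const {K A : Type*} [AddCommGroup A] (k : K) (y : K → X → A)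
    (u q : List (Letter G X)) :
    increment (varCochain (fun _ => k) y) u q =
      Finsupp.linearCombination ℤ (y k) (exponentVector (wordEval (.ofList u))).toAdd := by
  induction u with
  | nil => simp [increment]
  | cons a u ih =>
    rw [increment_cons, ih, FreeMonoid.ofList_cons, map_mul, map_mul, toAdd_mul, map_add, add_comm]
    congr 1
    obtain g | ⟨x, _ | _⟩ := a <;> simp [varCochain, exponentVector]

theorem solvable_of_linearIndependent {I : Type*} {W : I → List (Letter G X)}
    (hW : LinearIndependent ℤ fun i => (exponentVector (wordEval (.ofList (W i)))).toAdd)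
    (V : Finset (List (Letter G X))) : Solvable ℚ (Set.range W) V fun _ => () := by
  intro b
  obtain ⟨y, hy⟩ := exists_linearCombination_eq hW fun i => b () (W i)
  refine ⟨fun _ => y, ?_⟩
  rintro _ ⟨i, rfl⟩ q -
  rw [increment_varCochain_const, hy]

/-- The monoid on the letters presented by the relations of a system of equations. -/
abbrev SystemMonoid (𝒲 : Set (List (Letter G X))) :=
  PresentedMonoid fun u v : FreeMonoid (Letter G X) => SystemRel 𝒲 u.toList v.toList

variable (𝒲 : Set (List (Letter G X)))

namespace SystemMonoid

theorem of_cancel (x : X) (b : Bool) :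
    (.of _ (.inr (x, !b)) * .of _ (.inr (x, b)) : SystemMonoid 𝒲) = 1 :=
  PresentedMonoid.mk_eq_mk_of_rel (.freeProduct (.cancel x b))

/-- The homomorphism from `G ∗ F(X)` that sends each letter to the corresponding generator. -/
def ofCoprod : Coprod G (FreeGroup X) →* (SystemMonoid 𝒲)ˣ :=
  Coprod.lift
    (MonoidHom.toHomUnits
      { toFun g := PresentedMonoid.of _ (.inl g)
        map_one' := PresentedMonoid.mk_eq_mk_of_rel (.freeProduct .one)
        map_mul' g h := (PresentedMonoid.mk_eq_mk_of_rel (.freeProduct (.mul g h))).symm })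
    (FreeGroup.lift fun x =>
      ⟨.of _ (.inr (x, true)), .of _ (.inr (x, false)), of_cancel 𝒲 x false, of_cancel 𝒲 x true⟩)

theorem coe_ofCoprod_wordEval (u : FreeMonoid (Letter G X)) :
    (ofCoprod 𝒲 (wordEval u) : SystemMonoid 𝒲) = PresentedMonoid.mk _ u := by
  have h : (Units.coeHom _).comp ((ofCoprod 𝒲).comp wordEval) = PresentedMonoid.mk _ := by
    refine FreeMonoid.hom_eq ?_
    rintro (g | ⟨x, _ | _⟩) <;> simp [ofCoprod] <;> rfl
  exact DFunLike.congr_fun h u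

variable {𝒲}

theorem conGen_of_mem_normalClosure {u : FreeMonoid (Letter G X)}
    (hu : wordEval u ∈ Subgroup.normalClosure ((fun r => wordEval (.ofList r)) '' 𝒲)) :
    conGen (fun u v : FreeMonoid (Letter G X) => SystemRel 𝒲 u.toList v.toList) u 1 := by
  have hle : Subgroup.normalClosure ((fun r => wordEval (.ofList r)) '' 𝒲) ≤
      (ofCoprod 𝒲).ker := by
    refine Subgroup.normalClosure_le_normal ?_
    rintro _ ⟨r, hr, rfl⟩
    refine Units.ext ((coe_ofCoprod_wordEval 𝒲 _).trans ?_)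
    exact PresentedMonoid.mk_eq_mk_of_rel (.equation hr)
  rw [← PresentedMonoid.mk_eq_mk_iff, ← coe_ofCoprod_wordEval, hle hu]
  rfl

end SystemMonoid

end WordEval

section Systems

variable {X : Type u} {I : Type*}

theorem eq_one_of_inl_mem_normalClosure {G : Type} [Group G] (hG : LocallyIndicable G)
    {w : I → Coprod G (FreeGroup X)}
    (hw : LinearIndependent ℤ fun i => (exponentVector (w i)).toAdd) {g : G}
    (hg : Coprod.inl g ∈ Subgroup.normalClosure (Set.range w)) : g = 1 := by
  choose W hW using fun i => wordEval_surjective (w i)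
  obtain rfl : (fun i => wordEval (W i)) = w := funext hW
  have hcon := SystemMonoid.conGen_of_mem_normalClosure
    (𝒲 := Set.range fun i => (W i).toList) (u := .of (.inl g)) (by
      rw [← Set.range_comp]
      exact hg)
  obtain ⟨V₀, hV₀⟩ := Filter.eventually_atTop.1 (eventually_label_eq_of_conGen hcon [])
  classical
  obtain ⟨V, hsub, hV⟩ := exists_suffixClosed_superset (insert [.inl g] V₀)
  obtain ⟨K, κ, hκ, hsep⟩ := (solvable_of_linearIndependent hw V).exists_separating_labelling hG hV
    ⟨fun _ _ _ _ _ _ => rfl, fun _ _ _ _ _ _ => rfl⟩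
  exact hsep g [] (hsub (Finset.mem_insert_self _ _))
    (hV₀ V ((Finset.subset_insert _ _).trans hsub) hV K κ hκ)

theorem exists_solution_of_injective {G : Type v} [Group G] {w : I → Coprod G (FreeGroup X)}
    (hinj : Function.Injective
      ((QuotientGroup.mk' (Subgroup.normalClosure (Set.range w))).comp
        (Coprod.inl : G →* Coprod G (FreeGroup X)))) :
    ∃ (K : Type (max u v)) (_ : Group K) (ι : G →* K), Function.Injective ι ∧
      ∃ g : X → K, ∀ i, Coprod.lift ι (FreeGroup.lift g) (w i) = 1 := by
  let π := QuotientGroup.mk' (Subgroup.normalClosure (Set.range w))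
  refine ⟨_, inferInstance, π.comp Coprod.inl, hinj, fun x => π (Coprod.inr (.of x)), fun i => ?_⟩
  have hlift : Coprod.lift (π.comp Coprod.inl)
      (FreeGroup.lift fun x => π (Coprod.inr (.of x))) = π := by
    refine Coprod.hom_ext (Coprod.lift_comp_inl _ _) ?_
    ext x
    simp
  rw [hlift]
  exact (QuotientGroup.eq_one_iff _).2 (Subgroup.subset_normalClosure ⟨i, rfl⟩)

theorem toAdd_exponentVector_apply {G : Type} [Group G] {n : ℕ} (w : Coprod G (FreeGroup (Fin n)))
    (j : Fin n) : (exponentVector w).toAdd j = exponentSum j w := by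
  have h : (AddMonoidHom.toMultiplicative (Finsupp.applyAddHom j)).comp exponentVector =
      Coprod.lift (1 : G →* Multiplicative ℤ)
        (FreeGroup.lift fun k => .ofAdd (if k = j then (1 : ℤ) else 0)) := by
    refine Coprod.hom_ext (by ext; simp [exponentVector]) ?_
    ext x
    simp [exponentVector, Finsupp.single_apply]
  exact congrArg Multiplicative.toAdd (DFunLike.congr_fun h w)

theorem linearIndependent_exponentVector_of_rank_eq {G : Type} [Group G] {n m : ℕ}
    {w : Fin m → Coprod G (FreeGroup (Fin n))}
    (hrank : Matrix.rank (Matrix.of fun i j => exponentSum j (w i)) = m) :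
    LinearIndependent ℤ fun i => (exponentVector (w i)).toAdd := by
  have hrows : LinearIndependent ℤ fun i j => exponentSum j (w i) :=
    linearIndependent_row_of_rank_eq_card (hrank.trans (Fintype.card_fin m).symm)
  let ℓ : (Fin n →₀ ℤ) →ₗ[ℤ] Fin n → ℤ := Finsupp.lcoeFun
  have hcoe : (fun i j => exponentSum j (w i)) =
      ℓ ∘ fun i => (exponentVector (w i)).toAdd :=
    funext₂ fun i j => (toAdd_exponentVector_apply (w i) j).symm
  exact .of_comp ℓ (hcoe ▸ hrows)

end Systems

end Howie

theorem independent_system_has_solution_general {G : Type} [Group G] (hG : LocallyIndicable G)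
    {X : Type u} {I : Type*} (w : I → Coprod G (FreeGroup X))
    (hw : LinearIndependent ℤ fun i => (Howie.exponentVector (w i)).toAdd) :
    (∃ (K : Type u) (_ : Group K) (ι : G →* K), Function.Injective ι ∧
      ∃ g : X → K, ∀ i, (Coprod.lift ι (FreeGroup.lift g)) (w i) = 1) ∧
    Function.Injective
      ((QuotientGroup.mk' (Subgroup.normalClosure (Set.range w))).comp
        (Coprod.inl : G →* Coprod G (FreeGroup X))) := by
  have hinj : Function.Injective
      ((QuotientGroup.mk' (Subgroup.normalClosure (Set.range w))).comp
        (Coprod.inl : G →* Coprod G (FreeGroup X))) :=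
    (injective_iff_map_eq_one _).2 fun g hg =>
      Howie.eq_one_of_inl_mem_normalClosure hG hw ((QuotientGroup.eq_one_iff _).1 hg)
  exact ⟨Howie.exists_solution_of_injective hinj, hinj⟩

/-- **Howie's theorem on independent systems of equations**: an independent system of
equations over a locally indicable group `G` has a solution over `G`; equivalently `G`
embeds canonically into `(G ∗ F(x₁,…,xₙ))/⟨⟨w₁,…,w_m⟩⟩`. -/
theorem independent_system_has_solution {G : Type} [Group G]
    (hG : LocallyIndicable G) (n m : ℕ)
    (w : Fin m → Coprod G (FreeGroup (Fin n)))
    (hrank : Matrix.rank (Matrix.of fun i j => exponentSum j (w i)) = m) :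
    (∃ (K : Type) (_ : Group K) (ι : G →* K), Function.Injective ι ∧
      ∃ g : Fin n → K, ∀ i, (Coprod.lift ι (FreeGroup.lift g)) (w i) = 1) ∧
    Function.Injective
      ((QuotientGroup.mk' (Subgroup.normalClosure (Set.range w))).comp
        (Coprod.inl : G →* Coprod G (FreeGroup (Fin n)))) := by
  exact independent_system_has_solution_general hG w
    (Howie.linearIndependent_exponentVector_of_rank_eq hrank)
end

section
/- Let U be a locally indicable group, (V_i)_{i∈I} a family of non-trivial locally indicable groups indexed by I ⊆ ℤ, W = ∗_{i∈I} V_i, and let (r_j)_{j∈J} (J ⊆ ℤ totally ordered) be cyclically reduced elements of U ∗ W such that each r_j uses at least one factor V_k, and such that j < k implies α_{r_j} < α_{r_k} and ω_{r_j} < ω_{r_k}, where α_r (resp. ω_r) is the smallest (resp. largest) index i such that r uses V_i. If w is a non-trivial element of U ∗ W lying in the normal closure ⟨⟨r_j : j ∈ J⟩⟩ and w uses only factors V_k with α ≤ k ≤ ω, then w already lies in the normal closure of the subfamily {r_ℓ : α ≤ α_{r_ℓ} and ω_{r_ℓ} ≤ ω}. -/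
open Monoid

variable {U : Type} [Group U] {I : Set ℤ} (V : I → Type) [∀ i, Group (V i)]

/-- The subgroup `U ∗ (∗_{k ∈ s} V_k)` of `U ∗ (∗_{i ∈ I} V_i)`. -/
def factorSubgroup (s : Set I) : Subgroup (Coprod U (CoprodI V)) :=
  Subgroup.closure
    (Set.range (Coprod.inl : U →* Coprod U (CoprodI V)) ∪
      ⋃ k ∈ s, Set.range fun v : V k => Coprod.inr (CoprodI.of v))

/-- `w` uses the factor `V i` if it does not lie in the subgroup generated by `U` and
the remaining factors. -/
def UsesFactor (w : Coprod U (CoprodI V)) (i : I) : Prop :=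
  w ∉ factorSubgroup V {k | k ≠ i}

/-- `x` is a non-trivial syllable from one of the factors of `U ∗ (∗ᵢ V_i)`. -/
def IsLetter (x : Coprod U (CoprodI V)) : Prop :=
  (∃ u : U, u ≠ 1 ∧ x = Coprod.inl u) ∨
  (∃ (i : I) (v : V i), v ≠ 1 ∧ x = Coprod.inr (CoprodI.of v))

/-- Two syllables come from the same factor. -/
def SameFactor (x y : Coprod U (CoprodI V)) : Prop :=
  (∃ u u' : U, x = Coprod.inl u ∧ y = Coprod.inl u') ∨
  (∃ (i : I) (v v' : V i), x = Coprod.inr (CoprodI.of v) ∧ y = Coprod.inr (CoprodI.of v'))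

/-- `w` is cyclically reduced: it is a product of an alternating sequence of non-trivial
syllables whose first and last syllables also come from different factors. -/
def CyclicallyReducedWord (w : Coprod U (CoprodI V)) : Prop :=
  ∃ L : List (Coprod U (CoprodI V)), w = L.prod ∧ (∀ x ∈ L, IsLetter V x) ∧
    List.Chain' (fun x y => ¬ SameFactor V x y) L ∧
    (2 ≤ L.length → ∀ x y, L.head? = some x → L.getLast? = some y → ¬ SameFactor V x y)

/-!
A staggered family is handled by peeling off an extremal relator: the free product is an amalgamated
product in which the last relator lies in one side and the remaining ones in the other. The normal
closures of both meet the amalgamated subgroup trivially, so an element which only uses factors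
below the last one of the last relator does not need that relator. This leaves the Freiheitssatz for
a single relator.

Conjugating each factor by its own free variable embeds a free product in `H ∗ F`, with `H` the
direct product of the factors and `F` free on their indices. There the Freiheitssatz for one relator
amounts to the solvability of every cyclically reduced one-variable equation in an overgroup of its
locally indicable coefficient group. This is shown by induction on the length of
the equation. Local indicability yields a height on which the equation has total height zero but
whose occurrences of the variable do not all lie at the same level. Rewriting the equation with one
variable per level gives a staggered family whose relators contain each variable fewer times, so
the induction hypothesis and the peeling argument give a simultaneous solution, and a wreath product
with the group of heights reassembles it into a solution of the equation. If the exponents of the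
variable alternate in sign, such a height exists only after replacing the coefficients at positive
and at negative occurrences by the two factors of a direct product, which can be undone by amalgams
and HNN extensions.
-/

/-! ### Locally indicable groups -/

namespace LocallyIndicable

variable {G Q : Type} [Group G] [Group Q]

lemma exists_surjective {K : Type*} [Group K] [Group.FG K] (hG : LocallyIndicable G)
    {f : K →* G} (hf : f ≠ 1) : ∃ g : K →* Multiplicative ℤ, Function.Surjective g := by
  have hbot : f.range ≠ ⊥ := by rwa [Ne, MonoidHom.range_eq_bot_iff]
  obtain ⟨g, hg⟩ := hG f.range hbot ((Group.fg_iff_subgroup_fg _).1 (Group.fg_range f))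
  exact ⟨g.comp f.rangeRestrict, hg.comp f.rangeRestrict_surjective⟩

lemma of_forall_exists_hom
    (h : ∀ K : Subgroup G, K ≠ ⊥ →
      ∃ (Q : Type) (_ : Group Q) (f : K →* Q), LocallyIndicable Q ∧ f ≠ 1) :
    LocallyIndicable G := by
  intro K hK hfg
  obtain ⟨Q, _, f, hQ, hf⟩ := h K hK
  have := (Group.fg_iff_subgroup_fg K).2 hfg
  exact hQ.exists_surjective hf

lemma of_ker (f : G →* Q) (hker : LocallyIndicable f.ker) (hQ : LocallyIndicable Q) :
    LocallyIndicable G := by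
  refine of_forall_exists_hom fun K hK => ?_
  by_cases hle : K ≤ f.ker
  · refine ⟨f.ker, _, Subgroup.inclusion hle, hker, fun h1 => hK ?_⟩
    refine (Subgroup.eq_bot_iff_forall K).2 fun x hx => ?_
    exact congrArg Subtype.val (DFunLike.congr_fun h1 ⟨x, hx⟩)
  · refine ⟨Q, _, f.comp K.subtype, hQ, fun h1 => hle fun x hx => ?_⟩
    exact DFunLike.congr_fun h1 ⟨x, hx⟩

lemma of_subsingleton [Subsingleton G] : LocallyIndicable G :=
  fun _ hH _ => (hH (Subsingleton.elim _ _)).elim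

lemma of_injective {f : G →* Q} (hf : Function.Injective f) (hQ : LocallyIndicable Q) :
    LocallyIndicable G := by
  refine of_ker f ?_ hQ
  rw [(MonoidHom.ker_eq_bot_iff f).2 hf]
  exact of_subsingleton

lemma subgroup (hG : LocallyIndicable G) (K : Subgroup G) : LocallyIndicable K :=
  of_injective K.subtype_injective hG

lemma pi {ι : Type} {A : ι → Type} [∀ i, Group (A i)] (hA : ∀ i, LocallyIndicable (A i)) :
    LocallyIndicable (∀ i, A i) := by
  refine of_forall_exists_hom fun K hK => ?_
  obtain ⟨x, hx⟩ := Subgroup.ne_bot_iff_exists_ne_one.1 hK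
  obtain ⟨i, hi⟩ : ∃ i, (x : ∀ i, A i) i ≠ 1 :=
    Function.ne_iff.1 fun h => hx (Subtype.ext h)
  exact ⟨A i, _, (Pi.evalMonoidHom A i).comp K.subtype, hA i,
    fun h1 => hi (DFunLike.congr_fun h1 x)⟩

lemma prod (hG : LocallyIndicable G) (hQ : LocallyIndicable Q) : LocallyIndicable (G × Q) := by
  refine of_forall_exists_hom fun K hK => ?_
  obtain ⟨x, hx⟩ := Subgroup.ne_bot_iff_exists_ne_one.1 hK
  by_cases h : (x : G × Q).1 = 1
  · refine ⟨Q, _, (MonoidHom.snd G Q).comp K.subtype, hQ, fun h1 => hx ?_⟩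
    exact Subtype.ext (Prod.ext h (DFunLike.congr_fun h1 x))
  · exact ⟨G, _, (MonoidHom.fst G Q).comp K.subtype, hG, fun h1 => h (DFunLike.congr_fun h1 x)⟩

lemma freeGroup (X : Type) : LocallyIndicable (FreeGroup X) := by
  intro K hK _
  obtain ⟨y⟩ : Nonempty (IsFreeGroup.Generators K) := by
    by_contra hempty
    rw [not_nonempty_iff] at hempty
    have : Subsingleton K := (IsFreeGroup.toFreeGroup K).toEquiv.subsingleton
    exact hK (K.eq_bot_of_subsingleton)
  refine ⟨IsFreeGroup.lift fun _ => Multiplicative.ofAdd 1, fun z => ?_⟩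
  refine ⟨IsFreeGroup.of y ^ z.toAdd, ?_⟩
  rw [map_zpow, IsFreeGroup.lift_of, ← ofAdd_zsmul]
  simp

lemma exists_subgroup_hom (hG : LocallyIndicable G) {S : Set G} (hS : S.Finite)
    (hne : ∃ s ∈ S, s ≠ 1) :
    ∃ (C : Subgroup G) (ψ : C →* Multiplicative ℤ), S ⊆ C ∧ ∃ c : C, (c : G) ∈ S ∧ ψ c ≠ 1 := by
  have : Finite S := hS
  obtain ⟨s, hs, hs1⟩ := hne
  have hsubtype : (Subgroup.closure S).subtype ≠ 1 := fun h1 =>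
    hs1 (DFunLike.congr_fun h1 (⟨s, Subgroup.subset_closure hs⟩ : Subgroup.closure S))
  obtain ⟨ψ, hψ⟩ := hG.exists_surjective hsubtype
  refine ⟨_, ψ, Subgroup.subset_closure, ?_⟩
  by_contra! hcon
  have h1 : ψ = 1 :=
    MonoidHom.eq_of_eqOn_dense Subgroup.closure_closure_coe_preimage fun k hk => hcon k hk
  obtain ⟨k, hk⟩ := hψ (Multiplicative.ofAdd 1)
  rw [h1, MonoidHom.one_apply] at hk
  exact absurd hk (by decide)

end LocallyIndicable

/-! ### Cyclic lists -/

section CyclicList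

open List

variable {σ α β : Type*}

lemma exists_rel_of_cycleChain {R : α → α → Prop} {l : List α} (h : Cycle.Chain R l) {z : α}
    (hz : z ∈ l) : ∃ x ∈ l, R x z := by
  obtain ⟨s, t, rfl⟩ := append_of_mem hz
  have hrot : s ++ z :: t ~r (z :: t) ++ s := isRotated_append
  rw [Cycle.coe_eq_coe.2 hrot, cons_append, Cycle.chain_coe_cons, ← cons_append,
    isChain_append] at h
  refine ⟨(z :: (t ++ s)).getLast (cons_ne_nil _ _), ?_,
    h.2.2 _ (getLast_mem_getLast? _) _ (by simp)⟩
  exact hrot.mem_iff.2 (getLast_mem _)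

lemma exists_isRotated_of_not_cycleChain {R : α → α → Prop} {l : List α}
    (h : ¬ Cycle.Chain R l) :
    ∃ m, ∃ hm : m ≠ [], l ~r m ∧ ¬ R (m.getLast hm) (m.head hm) := by
  have hl : l ≠ [] := by rintro rfl; exact h (Cycle.Chain.nil R)
  rw [Cycle.chain_ne_nil R hl, isChain_iff_forall_rel_of_append_cons_cons] at h
  push Not at h
  obtain ⟨a, b, s, t, heq, hab⟩ := h
  rcases s with _ | ⟨c, s⟩
  · obtain ⟨rfl, rfl⟩ : l.getLast hl = a ∧ l = b :: t := by simpa using heq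
    exact ⟨_, hl, IsRotated.refl _, hab⟩
  · obtain rfl : l = s ++ a :: b :: t := (cons_eq_cons.1 heq).2
    refine ⟨b :: t ++ (s ++ [a]), by simp, ?_, by simpa using hab⟩
    simpa using isRotated_append (l := s ++ [a]) (l' := b :: t)

/-- The outputs of a machine with transition map `δ` and output map `out` that starts in a given
state and reads a list. -/
def transduce (δ : σ → α → σ) (out : σ → α → β) : σ → List α → List β
  | _, [] => []
  | s, x :: l => out s x :: transduce δ out (δ s x) l

variable (δ : σ → α → σ) (out : σ → α → β)

@[simp] lemma transduce_nil (s : σ) : transduce δ out s [] = [] := rfl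

@[simp] lemma transduce_cons (s : σ) (x : α) (l : List α) :
    transduce δ out s (x :: l) = out s x :: transduce δ out (δ s x) l := rfl

@[simp] lemma length_transduce (s : σ) (l : List α) : (transduce δ out s l).length = l.length := by
  induction l generalizing s with
  | nil => rfl
  | cons x l ih => simp [ih]

lemma transduce_append (s : σ) (l m : List α) :
    transduce δ out s (l ++ m) = transduce δ out s l ++ transduce δ out (l.foldl δ s) m := by
  induction l generalizing s with
  | nil => rfl
  | cons x l ih => simp [ih]

variable {δ out} {R : α → α → Prop} {R' : β → β → Prop}

lemma isChain_transduce_iff (h : ∀ s x z, R' (out s x) (out (δ s x) z) ↔ R x z) (s : σ)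
    (l : List α) : IsChain R' (transduce δ out s l) ↔ IsChain R l := by
  induction l generalizing s with
  | nil => simp
  | cons x l ih => cases l with
    | nil => simp
    | cons z l => simpa [h] using fun _ => ih (δ s x)

lemma cycleChain_transduce_iff (h : ∀ s x z, R' (out s x) (out (δ s x) z) ↔ R x z) {s : σ}
    {l : List α} (hs : l.foldl δ s = s) :
    Cycle.Chain R' (transduce δ out s l) ↔ Cycle.Chain R l := by
  rcases l with _ | ⟨x, l⟩
  · simp
  · have hwrap : transduce δ out s (x :: (l ++ [x]))
        = out s x :: (transduce δ out (δ s x) l ++ [out s x]) := by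
      rw [foldl_cons] at hs
      simp [transduce_append, hs]
    rw [transduce_cons, Cycle.chain_coe_cons, Cycle.chain_coe_cons, ← hwrap,
      isChain_transduce_iff h]

end CyclicList

/-! ### Words with coefficients in a group -/

/-- The syllable `h * t_n ^ (±1)` of a word with coefficients in `H` and variables indexed by `N`;
the exponent is `1` if `sign` is `true`. -/
structure Syllable (H N : Type*) where
  coeff : H
  var : N
  sign : Bool

section Words

variable {H K L M N : Type*} [Group H] [Group K] [Group L] [Group M]

namespace Syllable

/-- The value of a syllable under the substitution `t_n ↦ e n`. -/
def eval (f : H →* L) (e : N → L) (x : Syllable H N) : L :=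
  f x.coeff * cond x.sign (e x.var) (e x.var)⁻¹

/-- Apply a homomorphism to the coefficient of a syllable. -/
def mapCoeff (g : H →* K) (x : Syllable H N) : Syllable K N :=
  ⟨g x.coeff, x.var, x.sign⟩

lemma map_eval (g : L →* M) (f : H →* L) (e : N → L) (x : Syllable H N) :
    g (x.eval f e) = x.eval (g.comp f) (g ∘ e) := by
  rcases x with ⟨h, n, _ | _⟩ <;> simp [eval]

/-- The consecutive syllables `x` and `y` of a word do not cancel. -/
def NoCancel (x y : Syllable H N) : Prop :=
  x.var = y.var → y.coeff = 1 → x.sign = y.sign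

lemma noCancel_mapCoeff_iff {g : H →* K} (hg : Function.Injective g) {x y : Syllable H N} :
    NoCancel (x.mapCoeff g) (y.mapCoeff g) ↔ NoCancel x y := by
  simp [NoCancel, mapCoeff, map_eq_one_iff g hg]

end Syllable

open Syllable

/-- The value of a word under the substitution `t_n ↦ e n`. -/
def evalWord (f : H →* L) (e : N → L) (l : List (Syllable H N)) : L :=
  (l.map (Syllable.eval f e)).prod

section

variable (f : H →* L) (e : N → L)

@[simp] lemma evalWord_nil : evalWord f e [] = 1 := rfl

@[simp] lemma evalWord_cons (x : Syllable H N) (l : List (Syllable H N)) :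
    evalWord f e (x :: l) = x.eval f e * evalWord f e l := by
  simp [evalWord]

@[simp] lemma evalWord_append (l m : List (Syllable H N)) :
    evalWord f e (l ++ m) = evalWord f e l * evalWord f e m := by
  simp [evalWord]

lemma map_evalWord (g : L →* M) (l : List (Syllable H N)) :
    g (evalWord f e l) = evalWord (g.comp f) (g ∘ e) l := by
  simp only [evalWord, map_list_prod, List.map_map, Function.comp_def, map_eval]

variable {e} in
lemma evalWord_congr {e' : N → L} {l : List (Syllable H N)}
    (h : ∀ x ∈ l, e x.var = e' x.var) : evalWord f e l = evalWord f e' l := by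
  refine congrArg List.prod (List.map_congr_left fun x hx => ?_)
  rw [Syllable.eval, Syllable.eval, h x hx]

lemma evalWord_map_mapCoeff (g : K →* H) (l : List (Syllable K N)) :
    evalWord f e (l.map (mapCoeff g)) = evalWord (f.comp g) e l := by
  simp only [evalWord, List.map_map]
  rfl

variable {f e} in
lemma evalWord_eq_one_of_isRotated {l m : List (Syllable H N)} (hlm : l ~r m)
    (hl : evalWord f e l = 1) : evalWord f e m = 1 := by
  obtain ⟨n, rfl⟩ := hlm
  rw [evalWord, List.map_rotate]
  exact List.prod_rotate_eq_one_of_prod_eq_one hl n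

end

lemma evalWord_mul {A : Type*} [CommGroup A] (f f' : H →* A) (e e' : N → A)
    (l : List (Syllable H N)) :
    evalWord (f * f') (e * e') l = evalWord f e l * evalWord f' e' l := by
  rw [evalWord, evalWord, evalWord, ← List.prod_map_mul]
  congr! 3 with x
  rcases x with ⟨h, n, _ | _⟩ <;> simp [Syllable.eval, mul_mul_mul_comm, mul_comm]

/-- No cancellation is possible in any cyclic permutation of the word. -/
def IsCyclicallyReduced (l : List (Syllable H N)) : Prop :=
  Cycle.Chain NoCancel (l : Cycle (Syllable H N))

lemma IsCyclicallyReduced.of_isRotated {l m : List (Syllable H N)} (hl : IsCyclicallyReduced l)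
    (hlm : l ~r m) : IsCyclicallyReduced m := by
  rwa [IsCyclicallyReduced, ← Cycle.coe_eq_coe.2 hlm]

lemma isCyclicallyReduced_map_mapCoeff_iff {g : H →* K} (hg : Function.Injective g)
    {l : List (Syllable H N)} :
    IsCyclicallyReduced (l.map (mapCoeff g)) ↔ IsCyclicallyReduced l := by
  rw [IsCyclicallyReduced, ← Cycle.map_coe, Cycle.chain_map]
  simp only [noCancel_mapCoeff_iff hg, IsCyclicallyReduced]

lemma exists_map_mapCoeff_subtype_eq {S : Subgroup H} {l : List (Syllable H N)}
    (h : ∀ x ∈ l, x.coeff ∈ S) :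
    ∃ m : List (Syllable S N), m.map (mapCoeff S.subtype) = l := by
  have hl : l ∈ {l : List (Syllable H N) | ∀ x ∈ l, x ∈ Set.range (mapCoeff S.subtype)} :=
    fun x hx => ⟨⟨⟨x.coeff, h x hx⟩, x.var, x.sign⟩, rfl⟩
  rwa [← Set.range_list_map] at hl

end Words

/-! ### Adjoining free variables to a group -/

/-- The action of `H` on the free group over `N × H` by left translation of the second
coordinate. -/
def freeTranslate (H N : Type*) [Group H] : H →* MulAut (FreeGroup (N × H)) where
  toFun h := FreeGroup.freeGroupCongr ((Equiv.refl N).prodCongr (Equiv.mulLeft h))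
  map_one' := MulEquiv.toMonoidHom_injective (by ext ⟨n, g⟩; simp)
  map_mul' a b := MulEquiv.toMonoidHom_injective (by ext ⟨n, g⟩; simp [mul_assoc])

lemma freeTranslate_of {H N : Type*} [Group H] (h : H) (n : N) (g : H) :
    freeTranslate H N h (FreeGroup.of (n, g)) = FreeGroup.of (n, h * g) := by
  simp [freeTranslate]

/-- The free product of `H` and the free group on `N`. It is encoded as a semidirect product, where
the generator `(n, h)` of the kernel is the conjugate of the variable `n` by `h`, so that both
local indicability and the solution of the word problem are inherited from free groups. -/
abbrev AdjoinFree (H N : Type*) [Group H] := FreeGroup (N × H) ⋊[freeTranslate H N] H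

namespace AdjoinFree

variable {H N L : Type*} [Group H] [Group L]

/-- The inclusion of the coefficient group. -/
def of : H →* AdjoinFree H N := SemidirectProduct.inr

/-- The variables. -/
def var (n : N) : AdjoinFree H N := SemidirectProduct.inl (FreeGroup.of (n, 1))

/-- The homomorphism extending `f` and sending the variable `n` to `e n`. -/
def lift (f : H →* L) (e : N → L) : AdjoinFree H N →* L :=
  SemidirectProduct.lift (FreeGroup.lift fun x => f x.2 * e x.1 * (f x.2)⁻¹) f fun h => by
    ext ⟨n, g⟩
    simp [freeTranslate_of, mul_assoc]

@[simp] lemma lift_comp_of (f : H →* L) (e : N → L) : (lift f e).comp of = f :=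
  SemidirectProduct.lift_comp_inr ..

@[simp] lemma lift_var (f : H →* L) (e : N → L) (n : N) : lift f e (var n) = e n := by
  simp [lift, var]

lemma of_injective : Function.Injective (of : H →* AdjoinFree H N) :=
  SemidirectProduct.inr_injective

/-- The element of `AdjoinFree H N` represented by a word. -/
def word (l : List (Syllable H N)) : AdjoinFree H N := evalWord of var l

lemma map_word (θ : AdjoinFree H N →* L) (l : List (Syllable H N)) :
    θ (word l) = evalWord (θ.comp of) (θ ∘ var) l :=
  map_evalWord of var θ l

@[simp] lemma lift_word (f : H →* L) (e : N → L) (l : List (Syllable H N)) :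
    lift f e (word l) = evalWord f e l := by
  rw [map_word, lift_comp_of]
  exact evalWord_congr f fun x _ => lift_var f e x.var

/-- The free group word obtained from the product of `c` and a word by moving all coefficients to
the right. -/
def freeWord : H → List (Syllable H N) → List ((N × H) × Bool) :=
  transduce (fun c x => c * x.coeff) fun c x => ((x.var, c * x.coeff), x.sign)

lemma of_mul_eval (c : H) (x : Syllable H N) :
    (of c * x.eval of var : AdjoinFree H N) =
      SemidirectProduct.inl (FreeGroup.mk [((x.var, c * x.coeff), x.sign)]) *
        of (c * x.coeff) := by
  have hpos (h : H) (n : N) : (of h * var n : AdjoinFree H N) =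
      SemidirectProduct.inl (FreeGroup.of (n, h)) * of h := by
    ext <;> simp [of, var, freeTranslate_of]
  rcases x with ⟨h, n, _ | _⟩
  · have hneg : FreeGroup.mk [((n, c * h), false)] = (FreeGroup.of (n, c * h))⁻¹ := by
      simp [FreeGroup.of, FreeGroup.invRev]
    rw [Syllable.eval, ← mul_assoc, ← map_mul, hneg, cond_false, mul_inv_eq_iff_eq_mul, mul_assoc,
      hpos, map_inv, inv_mul_cancel_left]
  · rw [Syllable.eval, ← mul_assoc, ← map_mul]
    exact hpos _ _

lemma left_of_mul_word (c : H) (l : List (Syllable H N)) :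
    (of c * word l).left = FreeGroup.mk (freeWord c l) := by
  induction l generalizing c with
  | nil => rfl
  | cons x l ih =>
    rw [word, evalWord_cons, ← mul_assoc, of_mul_eval, mul_assoc, SemidirectProduct.mul_left,
      SemidirectProduct.left_inl, SemidirectProduct.right_inl, map_one, MulAut.one_apply,
      ← word, ih, FreeGroup.mul_mk]
    rfl

lemma word_notMem_range_of {l : List (Syllable H N)} (hl : l.IsChain Syllable.NoCancel)
    (hne : l ≠ []) : word l ∉ (of : H →* AdjoinFree H N).range := by
  classical
  rintro ⟨h, hh⟩
  have hmk : FreeGroup.mk (freeWord 1 l) = 1 := by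
    rw [← left_of_mul_word, map_one, one_mul, ← hh]
    rfl
  have hred : FreeGroup.IsReduced (freeWord 1 l) :=
    (isChain_transduce_iff (by simp [Syllable.NoCancel]) 1 l).2 hl
  have hnil : freeWord 1 l = [] := by
    rw [← hred.reduce_eq, ← FreeGroup.toWord_mk, hmk, FreeGroup.toWord_one]
  have hlen := congrArg List.length hnil
  rw [freeWord, length_transduce] at hlen
  exact hne (List.length_eq_zero_iff.1 hlen)

/-- The subgroup generated by the coefficients and the variables in `S`. -/
def subgroupOn (H : Type*) [Group H] {N : Type*} (S : Set N) : Subgroup (AdjoinFree H N) :=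
  Subgroup.closure (Set.range of ∪ var '' S)

lemma of_mem_subgroupOn (S : Set N) (h : H) : of h ∈ subgroupOn H S :=
  Subgroup.subset_closure (Or.inl ⟨h, rfl⟩)

lemma var_mem_subgroupOn {S : Set N} {n : N} (hn : n ∈ S) : var n ∈ subgroupOn H S :=
  Subgroup.subset_closure (Or.inr ⟨n, hn, rfl⟩)

lemma word_mem_subgroupOn {S : Set N} {l : List (Syllable H N)} (h : ∀ x ∈ l, x.var ∈ S) :
    word l ∈ subgroupOn H S := by
  refine Subgroup.list_prod_mem _ (List.forall_mem_map.2 fun x hx => ?_)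
  have hvar := var_mem_subgroupOn (H := H) (h x hx)
  rcases x with ⟨c, n, _ | _⟩
  · exact mul_mem (of_mem_subgroupOn S c) (inv_mem hvar)
  · exact mul_mem (of_mem_subgroupOn S c) hvar

lemma eqOn_subgroupOn {S : Set N} {θ θ' : AdjoinFree H N →* L} (hof : θ.comp of = θ'.comp of)
    (hvar : ∀ n ∈ S, θ (var n) = θ' (var n)) : Set.EqOn θ θ' (subgroupOn H S) := by
  refine MonoidHom.eqOn_closure ?_
  rintro _ (⟨h, rfl⟩ | ⟨n, hn, rfl⟩)
  · exact DFunLike.congr_fun hof h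
  · exact hvar n hn

end AdjoinFree

lemma LocallyIndicable.adjoinFree {H : Type} [Group H] (hH : LocallyIndicable H) (N : Type) :
    LocallyIndicable (AdjoinFree H N) := by
  refine of_ker SemidirectProduct.rightHom ?_ hH
  rw [← SemidirectProduct.range_inl_eq_ker_rightHom]
  exact of_injective (f := (MonoidHom.ofInjective
    SemidirectProduct.inl_injective).symm.toMonoidHom) (MulEquiv.injective _) (freeGroup _)

/-! ### Amalgams and conjugations -/

theorem exists_amalgam.{u} {A G K : Type u} [Group A] [Group G] [Group K] {f : A →* G} {g : A →* K}
    (hf : Function.Injective f) (hg : Function.Injective g) :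
    ∃ (L : Type u) (_ : Group L) (i : G →* L) (j : K →* L), Function.Injective i ∧
      Function.Injective j ∧ i.comp f = j.comp g := by
  let G' : Bool → Type u := fun b => cond b G K
  let (b : Bool) : Group (G' b) := match b with
    | true => ‹Group G›
    | false => ‹Group K›
  let φ (b : Bool) : A →* G' b := match b with
    | true => f
    | false => g
  have hφ (b : Bool) : Function.Injective (φ b) := match b with
    | true => hf
    | false => hg
  exact ⟨PushoutI φ, inferInstance, PushoutI.of (φ := φ) true, PushoutI.of (φ := φ) false,
    PushoutI.of_injective hφ true, PushoutI.of_injective hφ false,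
    (PushoutI.of_comp_eq_base (φ := φ) true).trans (PushoutI.of_comp_eq_base false).symm⟩

theorem exists_conj.{u, v} {B : Type v} {G : Type u} [Group B] [Group G] {f g : B →* G}
    (hf : Function.Injective f) (hg : Function.Injective g) :
    ∃ (L : Type u) (_ : Group L) (i : G →* L) (s : L), Function.Injective i ∧
      ∀ b, s * i (f b) * s⁻¹ = i (g b) := by
  let φ : f.range ≃* g.range :=
    (MonoidHom.ofInjective hf).symm.trans (MonoidHom.ofInjective hg)
  refine ⟨HNNExtension G f.range g.range φ, inferInstance, HNNExtension.of, HNNExtension.t,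
    HNNExtension.of_injective _, fun b => ?_⟩
  have hφ : φ (MonoidHom.ofInjective hf b) = MonoidHom.ofInjective hg b := by simp [φ]
  have hconj := HNNExtension.equiv_eq_conj (φ := φ) (MonoidHom.ofInjective hf b)
  rw [hφ] at hconj
  exact hconj.symm

/-! ### Staggered families of relators -/

lemma exists_finset_mem_normalClosure_image {ι G : Type*} [Group G] {r : ι → G} {w : G}
    (hw : w ∈ Subgroup.normalClosure (Set.range r)) :
    ∃ T : Finset ι, w ∈ Subgroup.normalClosure (r '' T) := by
  classical
  induction hw using Subgroup.closure_induction with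
  | mem x hx =>
    obtain ⟨_, ⟨i, rfl⟩, hconj⟩ := Group.mem_conjugatesOfSet_iff.1 hx
    exact ⟨{i}, Subgroup.conjugatesOfSet_subset_normalClosure
      (Group.mem_conjugatesOfSet_iff.2 ⟨r i, by simp, hconj⟩)⟩
  | one => exact ⟨∅, one_mem _⟩
  | mul x y _ _ hx hy =>
    obtain ⟨S, hS⟩ := hx
    obtain ⟨T, hT⟩ := hy
    exact ⟨S ∪ T, mul_mem (Subgroup.normalClosure_mono (Set.image_mono (by simp)) hS)
      (Subgroup.normalClosure_mono (Set.image_mono (by simp)) hT)⟩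
  | inv x _ hx =>
    obtain ⟨S, hS⟩ := hx
    exact ⟨S, inv_mem hS⟩

/-- A family of subgroups of `G` indexed by the sets of generating factors, in which `P S` and `P T`
generate their amalgamated product over `P (S ∩ T)`. Only the existence of a homomorphism
with prescribed restrictions to `P S` and `P T` is recorded. -/
structure IsAmalgamFamily.{u} {G : Type u} {ι : Type*} [Group G] (P : Set ι → Subgroup G) :
    Prop where
  mono : Monotone P
  glue : ∀ (S T : Set ι) {L : Type u} [Group L] (f g : G →* L), Set.EqOn f g (P (S ∩ T)) →
    ∃ θ : G →* L, Set.EqOn θ f (P S) ∧ Set.EqOn θ g (P T)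

namespace IsAmalgamFamily

variable {G ι κ : Type*} [Group G] {P : Set ι → Subgroup G}

lemma preimage (hP : IsAmalgamFamily P) (g : ι → κ) :
    IsAmalgamFamily fun S : Set κ => P (g ⁻¹' S) where
  mono _ _ hST := hP.mono (Set.preimage_mono hST)
  glue S T := hP.glue (g ⁻¹' S) (g ⁻¹' T)

-- In `(G ⧸ ⟨⟨R₁⟩⟩) ∗ (G ⧸ ⟨⟨R₂⟩⟩)` amalgamated over `P (S ∩ T)` all relators become trivial,
-- whereas the first factor still embeds.
theorem mem_normalClosure_left (hP : IsAmalgamFamily P) {S T : Set ι} {R₁ R₂ : Set G}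
    (hR₁ : R₁ ⊆ P S) (hR₂ : R₂ ⊆ P T)
    (hd₁ : Disjoint (P (S ∩ T)) (Subgroup.normalClosure R₁))
    (hd₂ : Disjoint (P (S ∩ T)) (Subgroup.normalClosure R₂)) {x : G} (hx : x ∈ P S)
    (hxN : x ∈ Subgroup.normalClosure (R₁ ∪ R₂)) : x ∈ Subgroup.normalClosure R₁ := by
  let q (R : Set G) : G →* G ⧸ Subgroup.normalClosure R := QuotientGroup.mk' _
  have hq {R : Set G} {y : G} : q R y = 1 ↔ y ∈ Subgroup.normalClosure R :=
    QuotientGroup.eq_one_iff y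
  have hinj {R : Set G} (hd : Disjoint (P (S ∩ T)) (Subgroup.normalClosure R)) :
      Function.Injective ((q R).comp (P (S ∩ T)).subtype) :=
    (injective_iff_map_eq_one _).2 fun y hy =>
      Subtype.ext (Subgroup.disjoint_def.1 hd y.2 (hq.1 hy))
  obtain ⟨L, _, i, j, hi, -, hij⟩ := exists_amalgam (hinj hd₁) (hinj hd₂)
  obtain ⟨θ, hθS, hθT⟩ := hP.glue S T (i.comp (q R₁)) (j.comp (q R₂))
    fun y hy => DFunLike.congr_fun hij ⟨y, hy⟩
  have hker : Subgroup.normalClosure (R₁ ∪ R₂) ≤ θ.ker := by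
    refine Subgroup.normalClosure_le_normal (Set.union_subset (fun y hy => ?_) fun y hy => ?_)
    · have hy1 : q R₁ y = 1 := hq.2 (Subgroup.subset_normalClosure hy)
      rw [SetLike.mem_coe, MonoidHom.mem_ker, hθS (hR₁ hy), MonoidHom.comp_apply, hy1, map_one]
    · have hy1 : q R₂ y = 1 := hq.2 (Subgroup.subset_normalClosure hy)
      rw [SetLike.mem_coe, MonoidHom.mem_ker, hθT (hR₂ hy), MonoidHom.comp_apply, hy1, map_one]
  have hx1 : i (q R₁ x) = 1 := (hθS hx).symm.trans (hker hxN)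
  exact hq.1 (hi (hx1.trans (map_one i).symm))

end IsAmalgamFamily

/-- The relators `r j` involve only factors with index in `[a j, o j]`, where both end points are
strictly increasing in `j`, and each of them on its own satisfies the Freiheitssatz at both end
points. -/
structure IsStaggered {G ι J : Type*} [Group G] [LinearOrder ι] [LinearOrder J]
    (P : Set ι → Subgroup G) (r : J → G) (a o : J → ι) : Prop where
  amalgam : IsAmalgamFamily P
  strictMono_left : StrictMono a
  strictMono_right : StrictMono o
  mem : ∀ j, r j ∈ P (Set.Icc (a j) (o j))
  left_le_right : ∀ j, a j ≤ o j
  disjoint_left : ∀ j, Disjoint (P {a j}ᶜ) (Subgroup.normalClosure {r j})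
  disjoint_right : ∀ j, Disjoint (P {o j}ᶜ) (Subgroup.normalClosure {r j})

namespace IsStaggered

open OrderDual

variable {G ι J : Type*} [Group G] [LinearOrder ι] [LinearOrder J] {P : Set ι → Subgroup G}
  {r : J → G} {a o : J → ι}

lemma preimage_toDual_Icc (i j : ι) : toDual ⁻¹' Set.Icc (toDual j) (toDual i) = Set.Icc i j :=
  Set.ext fun _ => and_comm

lemma dual (h : IsStaggered P r a o) :
    IsStaggered (fun S : Set ιᵒᵈ => P (toDual ⁻¹' S)) (r ∘ ofDual) (toDual ∘ o ∘ ofDual)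
      (toDual ∘ a ∘ ofDual) where
  amalgam := h.amalgam.preimage toDual
  strictMono_left := h.strictMono_right.dual
  strictMono_right := h.strictMono_left.dual
  mem j := (preimage_toDual_Icc (a (ofDual j)) (o (ofDual j))).symm ▸ h.mem (ofDual j)
  left_le_right j := h.left_le_right (ofDual j)
  disjoint_left j := h.disjoint_right (ofDual j)
  disjoint_right j := h.disjoint_left (ofDual j)

lemma eq_of_left_le_of_right_le (h : IsStaggered P r a o) {j n : J} (ha : a n ≤ a j)
    (ho : o j ≤ o n) : j = n :=
  le_antisymm (h.strictMono_right.le_iff_le.1 ho) (h.strictMono_left.le_iff_le.1 ha)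

lemma mem_normalClosure_of_insert_max (h : IsStaggered P r a o) {T : Set J} {n : J}
    (hn : ∀ j ∈ T, j < n)
    (hd : Disjoint (P (Set.Icc (a n) (o n))) (Subgroup.normalClosure (r '' T))) {α ω : ι}
    (hω : ω < o n) {w : G} (hw : w ∈ P (Set.Icc α ω))
    (hwN : w ∈ Subgroup.normalClosure (r '' insert n T)) :
    w ∈ Subgroup.normalClosure (r '' T) := by
  have hmono := h.amalgam.mono
  rw [Set.image_insert_eq, ← Set.union_singleton] at hwN
  refine h.amalgam.mem_normalClosure_left (S := Set.Iio (o n)) (T := Set.Ici (a n)) ?_ ?_ ?_ ?_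
    (hmono (fun i hi => hi.2.trans_lt hω) hw) hwN
  · rintro _ ⟨j, hj, rfl⟩
    exact hmono (fun i hi => hi.2.trans_lt (h.strictMono_right (hn j hj))) (h.mem j)
  · rintro _ rfl
    exact hmono (fun i hi => hi.1) (h.mem n)
  · refine hd.mono_left (hmono ?_)
    exact fun i hi => ⟨hi.2, hi.1.le⟩
  · exact (h.disjoint_right n).mono_left (hmono fun i hi => hi.1.ne)

lemma mem_normalClosure_of_insert_min (h : IsStaggered P r a o) {T : Set J} {n : J}
    (hn : ∀ j ∈ T, n < j)
    (hd : Disjoint (P (Set.Icc (a n) (o n))) (Subgroup.normalClosure (r '' T))) {α ω : ι}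
    (hα : a n < α) {w : G} (hw : w ∈ P (Set.Icc α ω))
    (hwN : w ∈ Subgroup.normalClosure (r '' insert n T)) :
    w ∈ Subgroup.normalClosure (r '' T) := by
  refine h.dual.mem_normalClosure_of_insert_max (T := ofDual ⁻¹' T) (n := toDual n)
    (α := toDual ω) (ω := toDual α) hn ?_ hα ?_ hwN
  · exact (preimage_toDual_Icc (a n) (o n)).symm ▸ hd
  · exact (preimage_toDual_Icc α ω).symm ▸ hw

lemma mem_normalClosure_image_finset (h : IsStaggered P r a o) (T : Finset J) {α ω : ι} {w : G}
    (hw : w ∈ P (Set.Icc α ω)) (hwN : w ∈ Subgroup.normalClosure (r '' T)) :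
    w ∈ Subgroup.normalClosure (r '' {l | l ∈ T ∧ α ≤ a l ∧ o l ≤ ω}) := by
  induction T using Finset.strongInduction generalizing α ω w with
  | H T ih =>
  by_cases hall : ∀ l ∈ T, α ≤ a l ∧ o l ≤ ω
  · refine Subgroup.normalClosure_mono (Set.image_mono ?_) hwN
    exact fun l hl => ⟨hl, hall l hl⟩
  push Not at hall
  obtain ⟨l, hl, hlω⟩ := hall
  have hinsert {n : J} (hn : n ∈ T) : (T : Set J) = insert n (T.erase n : Set J) := by
    rw [← Finset.coe_insert, Finset.insert_erase hn]
  have hdisj {n : J} (hn : n ∈ T) :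
      Disjoint (P (Set.Icc (a n) (o n)))
        (Subgroup.normalClosure (r '' (T.erase n : Finset J))) := by
    refine Subgroup.disjoint_def.2 fun {x} hx hxN => ?_
    have hempty : {j | j ∈ T.erase n ∧ a n ≤ a j ∧ o j ≤ o n} = ∅ := by
      refine Set.eq_empty_of_forall_notMem ?_
      rintro j ⟨hj, haj, hoj⟩
      exact Finset.ne_of_mem_erase hj (h.eq_of_left_le_of_right_le haj hoj)
    have hx1 := ih _ (Finset.erase_ssubset hn) hx hxN
    rwa [hempty, Set.image_empty, Subgroup.normalClosure_empty, Subgroup.mem_bot] at hx1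
  have hconclude {n : J} (hn : n ∈ T)
      (hwn : w ∈ Subgroup.normalClosure (r '' (T.erase n : Finset J))) :
      w ∈ Subgroup.normalClosure (r '' {l | l ∈ T ∧ α ≤ a l ∧ o l ≤ ω}) := by
    refine Subgroup.normalClosure_mono (Set.image_mono ?_) (ih _ (Finset.erase_ssubset hn) hw hwn)
    exact fun j hj => ⟨Finset.mem_of_mem_erase hj.1, hj.2⟩
  by_cases hα : α ≤ a l
  · obtain ⟨n, hn, hmax⟩ := T.exists_max_image id ⟨l, hl⟩
    refine hconclude hn (h.mem_normalClosure_of_insert_max (fun j hj => ?_) (hdisj hn)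
      ((hlω hα).trans_le (h.strictMono_right.monotone (hmax l hl))) hw (hinsert hn ▸ hwN))
    exact lt_of_le_of_ne (hmax j (Finset.mem_of_mem_erase hj)) (Finset.ne_of_mem_erase hj)
  · obtain ⟨n, hn, hmin⟩ := T.exists_min_image id ⟨l, hl⟩
    refine hconclude hn (h.mem_normalClosure_of_insert_min (fun j hj => ?_) (hdisj hn)
      ((h.strictMono_left.monotone (hmin l hl)).trans_lt (not_le.1 hα)) hw (hinsert hn ▸ hwN))
    exact lt_of_le_of_ne (hmin j (Finset.mem_of_mem_erase hj)) (Finset.ne_of_mem_erase hj).symm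

theorem mem_normalClosure (h : IsStaggered P r a o) {α ω : ι} {w : G} (hw : w ∈ P (Set.Icc α ω))
    (hwN : w ∈ Subgroup.normalClosure (Set.range r)) :
    w ∈ Subgroup.normalClosure (r '' {l | α ≤ a l ∧ o l ≤ ω}) := by
  obtain ⟨T, hT⟩ := exists_finset_mem_normalClosure_image hwN
  exact Subgroup.normalClosure_mono (Set.image_mono fun l hl => hl.2)
    (h.mem_normalClosure_image_finset T hw hT)

end IsStaggered

open scoped Classical in
lemma AdjoinFree.isAmalgamFamily {H N : Type*} [Group H] :
    IsAmalgamFamily (subgroupOn H : Set N → Subgroup (AdjoinFree H N)) where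
  mono _ _ hST :=
    Subgroup.closure_mono (Set.union_subset_union_right _ (Set.image_mono hST))
  glue S T L _ f g hfg := by
    refine ⟨lift (f.comp of) fun n => if n ∈ S then f (var n) else g (var n),
      eqOn_subgroupOn (by simp) fun n hn => by simp [hn],
      eqOn_subgroupOn ?_ fun n hn => ?_⟩
    · ext h
      simpa using hfg (of_mem_subgroupOn _ h)
    · by_cases hnS : n ∈ S
      · simpa [hnS] using hfg (var_mem_subgroupOn ⟨hnS, hn⟩)
      · simp [hnS]

/-! ### Equations over groups -/

/-- The one-variable equation `l = 1` has a solution in some group containing `H`. -/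
def HasSolution.{u} {H : Type u} [Group H] (l : List (Syllable H Unit)) : Prop :=
  ∃ (L : Type u) (_ : Group L) (f : H →* L) (e : L), Function.Injective f ∧
    evalWord f (fun _ => e) l = 1

namespace HasSolution

variable {H : Type*} [Group H]

lemma of_isRotated {l m : List (Syllable H Unit)} (hl : HasSolution l) (hlm : l ~r m) :
    HasSolution m := by
  obtain ⟨L, _, f, e, hf, he⟩ := hl
  exact ⟨L, _, f, e, hf, evalWord_eq_one_of_isRotated hlm he⟩

lemma map_mapCoeff.{u} {H K : Type u} [Group H] [Group K] {g : K →* H}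
    (hg : Function.Injective g) {l : List (Syllable K Unit)} (hl : HasSolution l) :
    HasSolution (l.map (Syllable.mapCoeff g)) := by
  obtain ⟨L, _, f, e, hf, he⟩ := hl
  obtain ⟨M, _, i, j, hi, -, hij⟩ := exists_amalgam hg hf
  refine ⟨M, _, i, j e, hi, ?_⟩
  rw [evalWord_map_mapCoeff, hij]
  exact (map_evalWord f _ j l).symm.trans (by rw [he, map_one])

end HasSolution

/-- Every non-empty cyclically reduced one-variable equation of length less than `n` over a locally
indicable group has a solution in an overgroup. -/
def EquationsSolvableBelow (n : ℕ) : Prop :=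
  ∀ (H : Type) [Group H], LocallyIndicable H → ∀ l : List (Syllable H Unit), l ≠ [] →
    IsCyclicallyReduced l → l.length < n → HasSolution l

section Collect

open AdjoinFree

variable {H N : Type*} [Group H] [DecidableEq N] (n : N)

/-- Rewrite the product of `c` and a word in several variables as a word in the variable `n`, whose
coefficients absorb `c` and all other variables. Whatever follows the last occurrence of `n` is
dropped. -/
def collect : AdjoinFree H N → List (Syllable H N) → List (Syllable (AdjoinFree H N) Unit)
  | _, [] => []
  | c, x :: l =>
    if x.var = n then ⟨c * of x.coeff, (), x.sign⟩ :: collect 1 l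
    else collect (c * x.eval of var) l

lemma length_collect (c : AdjoinFree H N) (l : List (Syllable H N)) :
    (collect n c l).length = l.countP fun x => x.var = n := by
  induction l generalizing c with
  | nil => rfl
  | cons x l ih => by_cases hx : x.var = n <;> simp [collect, hx, ih]

variable {n} {x : Syllable H N}

lemma exists_collect_concat_eq (hx : x.var = n) (l : List (Syllable H N)) (c : AdjoinFree H N) :
    ∃ k h, collect n c (l ++ [x]) = k ++ [⟨h, (), x.sign⟩] := by
  induction l generalizing c with
  | nil => exact ⟨[], c * of x.coeff, by simp [collect, hx]⟩
  | cons y l ih =>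
    by_cases hy : y.var = n
    · obtain ⟨k, h, hk⟩ := ih 1
      exact ⟨⟨c * of y.coeff, (), y.sign⟩ :: k, h, by simp [collect, hy, hk]⟩
    · obtain ⟨k, h, hk⟩ := ih (c * y.eval of var)
      exact ⟨k, h, by simp [collect, hy, hk]⟩

lemma evalWord_collect {L : Type*} [Group L] (g : AdjoinFree H N →* L) (e : L) (hx : x.var = n)
    (l : List (Syllable H N)) (c : AdjoinFree H N) :
    evalWord g (fun _ => e) (collect n c (l ++ [x])) =
      g c * evalWord (g.comp of) (fun k => if k = n then e else g (var k)) (l ++ [x]) := by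
  induction l generalizing c with
  | nil => simp [collect, hx, Syllable.eval, mul_assoc]
  | cons y l ih =>
    by_cases hy : y.var = n
    · simp [collect, hy, ih, Syllable.eval, mul_assoc]
    · rcases y with ⟨h, m, _ | _⟩ <;> simp_all [collect, Syllable.eval, mul_assoc]

lemma isChain_cons_collect {z : Syllable (AdjoinFree H N) Unit} (hx : x.var = n)
    (hz : z.sign = x.sign) {s l : List (Syllable H N)}
    (hsl : (x :: (s ++ l)).IsChain Syllable.NoCancel) :
    (z :: collect n (word s) l).IsChain Syllable.NoCancel := by
  induction l generalizing x s z with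
  | nil => exact List.isChain_singleton z
  | cons y l ih =>
    by_cases hy : y.var = n
    · have htail := ih (z := ⟨word s * .of y.coeff, (), y.sign⟩) (s := []) hy rfl <| by
        rw [← List.cons_append] at hsl
        exact hsl.right_of_append
      rw [collect, if_pos hy]
      refine List.isChain_cons_cons.2 ⟨fun _ hone => ?_, htail⟩
      rcases s with _ | ⟨w, s⟩
      · have hcoeff : y.coeff = 1 := of_injective (N := N) <| by
          simpa [word] using hone
        exact hz.trans ((List.isChain_cons_cons.1 hsl).1 (hx.trans hy.symm) hcoeff)
      · refine absurd ⟨y.coeff⁻¹, ?_⟩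
          (word_notMem_range_of hsl.tail.left_of_append (List.cons_ne_nil w s))
        rw [map_inv, ← eq_inv_of_mul_eq_one_left hone]
    · rw [collect, if_neg hy]
      simpa [word] using ih (s := s ++ [y]) hx hz (by simpa using hsl)

lemma isCyclicallyReduced_collect (hx : x.var = n) {l : List (Syllable H N)}
    (hl : IsCyclicallyReduced (l ++ [x])) : IsCyclicallyReduced (collect n 1 (l ++ [x])) := by
  obtain ⟨k, h, hk⟩ := exists_collect_concat_eq hx l 1
  have hchain : (x :: (l ++ [x])).IsChain Syllable.NoCancel := by
    rwa [IsCyclicallyReduced, Cycle.coe_eq_coe.2 List.isRotated_append, List.singleton_append,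
      Cycle.chain_coe_cons] at hl
  rw [IsCyclicallyReduced, hk, Cycle.coe_eq_coe.2 List.isRotated_append, List.singleton_append,
    Cycle.chain_coe_cons, ← hk]
  exact isChain_cons_collect (s := []) hx rfl hchain

end Collect

/-- The Freiheitssatz for one relator over a locally indicable group, where the number of
occurrences of the omitted variable is bounded by the length of the equations that can be solved. -/
theorem AdjoinFree.disjoint_normalClosure {H N : Type} [Group H] [DecidableEq N]
    (hH : LocallyIndicable H) {k : ℕ} (hk : EquationsSolvableBelow k) {l : List (Syllable H N)}
    (hl : IsCyclicallyReduced l) {n : N} (hn : ∃ x ∈ l, x.var = n)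
    (hcount : l.countP (fun x => x.var = n) < k) :
    Disjoint (subgroupOn H {n}ᶜ) (Subgroup.normalClosure {word l}) := by
  obtain ⟨x, hxl, hx⟩ := hn
  obtain ⟨l₁, l₂, rfl⟩ := List.append_of_mem hxl
  have hrot : l₁ ++ x :: l₂ ~r (l₂ ++ l₁) ++ [x] := by
    simpa using List.isRotated_append (l := l₁ ++ [x]) (l' := l₂)
  rw [hrot.perm.countP_eq] at hcount
  obtain ⟨m, c, hm⟩ := exists_collect_concat_eq hx (l₂ ++ l₁) 1
  obtain ⟨L, _, g, e, hg, he⟩ := hk (AdjoinFree H N) (hH.adjoinFree N)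
    (collect n 1 ((l₂ ++ l₁) ++ [x])) (hm ▸ List.concat_ne_nil _ m)
    (isCyclicallyReduced_collect hx (hl.of_isRotated hrot)) (by rwa [length_collect])
  let θ : AdjoinFree H N →* L := lift (g.comp of) fun k => if k = n then e else g (var k)
  have hθg : Set.EqOn θ g (subgroupOn H {n}ᶜ) :=
    eqOn_subgroupOn (by simp [θ]) fun k hk => by simp [θ, show k ≠ n from hk]
  have hθl : θ (word (l₁ ++ x :: l₂)) = 1 := by
    rw [lift_word]
    refine evalWord_eq_one_of_isRotated hrot.symm ?_
    rwa [evalWord_collect g e hx, map_one, one_mul] at he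
  have hker : Subgroup.normalClosure {word (l₁ ++ x :: l₂)} ≤ θ.ker :=
    Subgroup.normalClosure_le_normal (Set.singleton_subset_iff.2 hθl)
  refine Subgroup.disjoint_def.2 fun {w} hw hwN => hg ?_
  rw [← hθg hw, map_one]
  exact hker hwN

/-! ### Magnus rewriting -/

section MagnusRewriting

variable {H Q : Type*} [Group H] [Group Q] (φ : H →* Q) (y : Q)

/-- Magnus rewriting of a one-variable word with respect to the heights `φ h` of the coefficients
and `y` of the variable: each occurrence of the variable is replaced by the variable indexed by the
height of that occurrence. The height accumulates on the left, by inverses, so that the rewritten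
words are the coordinates of the original word in a wreath product. -/
def magnusRewrite : Q → List (Syllable H Unit) → List (Syllable H Q) :=
  transduce (fun q x => (x.eval φ fun _ => y)⁻¹ * q)
    fun q x => ⟨x.coeff, cond x.sign 1 y * ((φ x.coeff)⁻¹ * q), x.sign⟩

/-- All occurrences of the variable in a cyclic word have the same height. -/
def IsLevel (l : List (Syllable H Unit)) : Prop :=
  Cycle.Chain (fun x z : Syllable H Unit => cond x.sign y 1 * φ z.coeff = cond z.sign 1 y) l

lemma length_magnusRewrite (q : Q) (l : List (Syllable H Unit)) :
    (magnusRewrite φ y q l).length = l.length :=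
  length_transduce ..

variable {φ y} {l : List (Syllable H Unit)}

lemma magnusRewrite_cons (q : Q) (x : Syllable H Unit) :
    magnusRewrite φ y q (x :: l) =
      ⟨x.coeff, cond x.sign 1 y * ((φ x.coeff)⁻¹ * q), x.sign⟩ ::
        magnusRewrite φ y ((x.eval φ fun _ => y)⁻¹ * q) l := rfl

lemma foldl_magnusRewrite (q : Q) :
    l.foldl (fun q x => (x.eval φ fun _ => y)⁻¹ * q) q = (evalWord φ (fun _ => y) l)⁻¹ * q := by
  induction l generalizing q with
  | nil => simp
  | cons x l ih => simp [ih, mul_assoc]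

lemma map_var_magnusRewrite_mul (q c : Q) :
    (magnusRewrite φ y (q * c) l).map Syllable.var =
      ((magnusRewrite φ y q l).map Syllable.var).map (· * c) := by
  induction l generalizing q with
  | nil => rfl
  | cons x l ih =>
    have htail := ih ((x.eval φ fun _ => y)⁻¹ * q)
    rw [mul_assoc] at htail
    simp [magnusRewrite_cons, htail, mul_assoc]

lemma isLevel_iff_cycleChain_magnusRewrite (hl : evalWord φ (fun _ => y) l = 1) (q : Q) :
    Cycle.Chain (fun x z : Syllable H Q => x.var = z.var) (magnusRewrite φ y q l) ↔
      IsLevel φ y l := by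
  refine cycleChain_transduce_iff (fun q x z => ?_) (by simp [foldl_magnusRewrite, hl])
  have hvar : cond z.sign 1 y * ((φ z.coeff)⁻¹ * ((x.eval φ fun _ => y)⁻¹ * q)) =
      cond z.sign 1 y * (φ z.coeff)⁻¹ * (cond x.sign y 1)⁻¹ *
        (cond x.sign 1 y * ((φ x.coeff)⁻¹ * q)) := by
    rcases x with ⟨h, _, _ | _⟩ <;> simp [Syllable.eval, mul_assoc]
  rw [hvar, eq_comm, mul_eq_right, mul_inv_eq_one, mul_inv_eq_iff_eq_mul, eq_comm]

lemma isCyclicallyReduced_magnusRewrite (hl : IsCyclicallyReduced l)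
    (hheight : evalWord φ (fun _ => y) l = 1) (q : Q) :
    IsCyclicallyReduced (magnusRewrite φ y q l) :=
  ((cycleChain_transduce_iff (R' := fun x z : Syllable H Q => z.coeff = 1 → x.sign = z.sign)
    (by simp [Syllable.NoCancel]) (by simp [foldl_magnusRewrite, hheight])).2 hl).imp
    fun _ _ h _ => h

lemma exists_var_ne_of_not_isLevel (hl : ¬ IsLevel φ y l)
    (hheight : evalWord φ (fun _ => y) l = 1) (q n : Q) :
    ∃ x ∈ magnusRewrite φ y q l, x.var ≠ n := by
  by_contra! h
  exact hl ((isLevel_iff_cycleChain_magnusRewrite hheight q).1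
    (Cycle.chain_of_pairwise fun x hx z hz => (h x hx).trans (h z hz).symm))

open RegularWreathProduct in
lemma left_evalWord_wreath {L : Type*} [Group L] {F : H →* L ≀ᵣ Q} {f : H →* L} {e : Q → L}
    (hF : ∀ h, F h = ⟨fun _ => f h, φ h⟩) (q : Q) :
    (evalWord F (fun _ => ⟨e, y⟩) l).left q = evalWord f e (magnusRewrite φ y q l) := by
  induction l generalizing q with
  | nil => rfl
  | cons x l ih =>
    rcases x with ⟨h, _, _ | _⟩ <;>
      simp [Syllable.eval, magnusRewrite_cons, ← ih, hF, mul_assoc]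

end MagnusRewriting

lemma hasSolution_of_forall_magnusRewrite.{u} {H Q L : Type u} [Group H] [Group Q] [Group L]
    {φ : H →* Q} {y : Q} {l : List (Syllable H Unit)} (hl : evalWord φ (fun _ => y) l = 1)
    {f : H →* L} (hf : Function.Injective f) {e : Q → L}
    (he : ∀ q, evalWord f e (magnusRewrite φ y q l) = 1) : HasSolution l := by
  let F : H →* L ≀ᵣ Q :=
    { toFun := fun h => ⟨fun _ => f h, φ h⟩
      map_one' := by ext <;> simp
      map_mul' := fun a b => by ext <;> simp }
  refine ⟨L ≀ᵣ Q, inferInstance, F, ⟨e, y⟩, fun a b hab => hf ?_, ?_⟩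
  · exact congrFun (congrArg RegularWreathProduct.left hab) 1
  · ext q
    · rw [left_evalWord_wreath fun _ => rfl, he]
      rfl
    · exact (map_evalWord F _ RegularWreathProduct.rightHom l).trans hl

section Heights

open AdjoinFree

variable {H Q : Type} [Group H] {l : List (Syllable H Unit)}

lemma disjoint_normalClosure_word_magnusRewrite [Group Q]
    (hH : LocallyIndicable H) (hsolv : EquationsSolvableBelow l.length)
    (hl : IsCyclicallyReduced l) {φ : H →* Q} {y : Q} (hheight : evalWord φ (fun _ => y) l = 1)
    (hlevel : ¬ IsLevel φ y l) {q n : Q} (hn : ∃ x ∈ magnusRewrite φ y q l, x.var = n) :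
    Disjoint (subgroupOn H {n}ᶜ) (Subgroup.normalClosure {word (magnusRewrite φ y q l)}) := by
  classical
  refine AdjoinFree.disjoint_normalClosure hH hsolv
    (isCyclicallyReduced_magnusRewrite hl hheight q) hn ?_
  obtain ⟨x, hx, hxn⟩ := exists_var_ne_of_not_isLevel hlevel hheight q n
  rw [← length_magnusRewrite φ y q]
  exact List.countP_le_length.lt_of_ne fun h => hxn (by simpa using List.countP_eq_length.1 h x hx)

variable [CommGroup Q] [LinearOrder Q] [IsOrderedMonoid Q] {φ : H →* Q} {y : Q}

lemma isStaggered_magnusRewrite (hH : LocallyIndicable H)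
    (hsolv : EquationsSolvableBelow l.length) (hl : IsCyclicallyReduced l)
    (hheight : evalWord φ (fun _ => y) l = 1) (hlevel : ¬ IsLevel φ y l) {A O : Q}
    (hA : IsLeast {n | n ∈ (magnusRewrite φ y 1 l).map Syllable.var} A)
    (hO : IsGreatest {n | n ∈ (magnusRewrite φ y 1 l).map Syllable.var} O) :
    IsStaggered (subgroupOn H) (fun c => word (magnusRewrite φ y c l)) (A * ·) (O * ·) := by
  have hvar (c n : Q) : (∃ x ∈ magnusRewrite φ y c l, x.var = n) ↔
      ∃ m ∈ (magnusRewrite φ y 1 l).map Syllable.var, m * c = n := by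
    rw [← List.mem_map, ← one_mul c, map_var_magnusRewrite_mul, List.mem_map, one_mul]
  exact
    { amalgam := isAmalgamFamily
      strictMono_left := mul_right_strictMono
      strictMono_right := mul_right_strictMono
      mem := fun c => word_mem_subgroupOn fun x hx => by
        obtain ⟨m, hm, hmx⟩ := (hvar c x.var).1 ⟨x, hx, rfl⟩
        exact hmx ▸ ⟨mul_le_mul_left (hA.2 hm) c, mul_le_mul_left (hO.2 hm) c⟩
      left_le_right := fun c => mul_le_mul_left (hA.2 hO.1) c
      disjoint_left := fun c => disjoint_normalClosure_word_magnusRewrite hH hsolv hl hheight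
        hlevel ((hvar c _).2 ⟨A, hA.1, rfl⟩)
      disjoint_right := fun c => disjoint_normalClosure_word_magnusRewrite hH hsolv hl hheight
        hlevel ((hvar c _).2 ⟨O, hO.1, rfl⟩) }

theorem hasSolution_of_not_isLevel (hH : LocallyIndicable H)
    (hsolv : EquationsSolvableBelow l.length) (hl : IsCyclicallyReduced l)
    (hheight : evalWord φ (fun _ => y) l = 1) (hlevel : ¬ IsLevel φ y l) : HasSolution l := by
  have hfin : {n | n ∈ (magnusRewrite φ y 1 l).map Syllable.var}.Finite := List.finite_toSet _
  obtain ⟨x, hx, -⟩ := exists_var_ne_of_not_isLevel hlevel hheight 1 1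
  have hne : {n | n ∈ (magnusRewrite φ y 1 l).map Syllable.var}.Nonempty :=
    ⟨x.var, List.mem_map_of_mem hx⟩
  obtain ⟨A, hA⟩ : ∃ A, IsLeast _ A := Set.exists_min_image _ id hfin hne
  obtain ⟨O, hO⟩ : ∃ O, IsGreatest _ O := Set.exists_max_image _ id hfin hne
  have hAO : A < O := by
    obtain ⟨z, hz, hzA⟩ := exists_var_ne_of_not_isLevel hlevel hheight 1 A
    have hz' : z.var ∈ (magnusRewrite φ y 1 l).map Syllable.var := List.mem_map_of_mem hz
    exact (lt_of_le_of_ne (hA.2 hz') hzA.symm).trans_le (hO.2 hz')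
  have hstag := isStaggered_magnusRewrite hH hsolv hl hheight hlevel hA hO
  have hempty : {c | O ≤ A * c ∧ O * c ≤ A} = ∅ := by
    refine Set.eq_empty_of_forall_notMem fun c ⟨hc₁, hc₂⟩ => ?_
    have hc : 1 < c := lt_of_mul_lt_mul_left' (a := A) (by simpa using hAO.trans_le hc₁)
    exact (hAO.trans (lt_mul_of_one_lt_right' O hc)).not_ge hc₂
  let N := Subgroup.normalClosure (Set.range fun c => word (magnusRewrite φ y c l))
  refine hasSolution_of_forall_magnusRewrite hheight
    (f := (QuotientGroup.mk' N).comp of) (e := QuotientGroup.mk' N ∘ var) ?_ fun q => ?_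
  · refine (injective_iff_map_eq_one _).2 fun h hh => of_injective (N := Q) ?_
    have hmem := hstag.mem_normalClosure (of_mem_subgroupOn (Set.Icc O A) h)
      ((QuotientGroup.eq_one_iff _).1 hh)
    rw [hempty, Set.image_empty, Subgroup.normalClosure_empty, Subgroup.mem_bot] at hmem
    rw [hmem, map_one]
  · rw [← map_word]
    exact (QuotientGroup.eq_one_iff _).2 (Subgroup.subset_normalClosure ⟨q, rfl⟩)

end Heights

section TwoHeights

variable {H : Type} [Group H] {l : List (Syllable H Unit)}

lemma evalWord_zpow_mul_zpow {A : Type*} [CommGroup A] (φ χ : H →* A) (y z : A) (a b : ℤ)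
    (l : List (Syllable H Unit)) :
    evalWord (φ ^ a * χ ^ b) (fun _ => y ^ a * z ^ b) l =
      evalWord φ (fun _ => y) l ^ a * evalWord χ (fun _ => z) l ^ b :=
  (evalWord_mul (φ ^ a) (χ ^ b) (fun _ => y ^ a) (fun _ => z ^ b) l).trans <|
    congrArg₂ (· * ·) (map_evalWord φ (fun _ => y) (zpowGroupHom a) l).symm
      (map_evalWord χ (fun _ => z) (zpowGroupHom b) l).symm

-- Some nontrivial combination of the two heights vanishes on the word.
lemma hasSolution_of_independent_heights (hH : LocallyIndicable H)
    (hsolv : EquationsSolvableBelow l.length) (hl : IsCyclicallyReduced l)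
    {φ χ : H →* Multiplicative ℤ} {y z : Multiplicative ℤ}
    (hind : ∀ a b : ℤ, IsLevel (φ ^ a * χ ^ b) (y ^ a * z ^ b) l → a = 0 ∧ b = 0) :
    HasSolution l := by
  obtain ⟨a, b, hab, hheight⟩ : ∃ a b : ℤ, ¬ (a = 0 ∧ b = 0) ∧
      evalWord φ (fun _ => y) l ^ a * evalWord χ (fun _ => z) l ^ b = 1 := by
    generalize evalWord φ (fun _ => y) l = p
    generalize evalWord χ (fun _ => z) l = q
    by_cases hp : p = 1
    · exact ⟨1, 0, by simp, by simp [hp]⟩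
    · refine ⟨q.toAdd, -p.toAdd, fun h => hp ?_, ?_⟩
      · simpa using h.2
      · refine Multiplicative.toAdd.injective ?_
        simp [mul_comm]
  rw [← evalWord_zpow_mul_zpow] at hheight
  exact hasSolution_of_not_isLevel hH hsolv hl hheight fun h => hab (hind a b h)

lemma IsLevel.map_coeff_eq_one {Q : Type*} [Group Q] {φ : H →* Q} (hl : IsLevel φ 1 l)
    {x : Syllable H Unit} (hx : x ∈ l) : φ x.coeff = 1 := by
  obtain ⟨z, -, hz⟩ := exists_rel_of_cycleChain hl hx
  simpa using hz

end TwoHeights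

/-! ### Equations with two adjacent equal exponents -/

section EqualSigns

variable {H : Type} [Group H] {l : List (Syllable H Unit)}

lemma hasSolution_of_coeff_eq_one_of_hom (hH : LocallyIndicable H)
    (hsolv : EquationsSolvableBelow l.length) (hl : IsCyclicallyReduced l)
    (hadj : ¬ Cycle.Chain (fun x z : Syllable H Unit => x.sign = z.sign → z.coeff ≠ 1) l)
    {ψ : H →* Multiplicative ℤ} (hψ : ∃ x ∈ l, ψ x.coeff ≠ 1) : HasSolution l := by
  refine hasSolution_of_independent_heights hH hsolv hl (φ := ψ) (χ := 1) (y := 1)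
    (z := .ofAdd 1) fun a b hlevel => ?_
  obtain rfl : b = 0 := by
    by_contra hb
    refine hadj (hlevel.imp fun x z hxz hsign hz => hb ?_)
    cases hs : z.sign <;>
      simpa [hsign, hs, hz, ← ofAdd_zsmul, eq_comm (b := Multiplicative.ofAdd b)] using hxz
  obtain ⟨x, hx, hψx⟩ := hψ
  have hlevel' : IsLevel (ψ ^ a) 1 l := by simpa using hlevel
  have hpow : ψ x.coeff ^ a = 1 := hlevel'.map_coeff_eq_one hx
  have hsmul : a • (ψ x.coeff).toAdd = 0 := congrArg Multiplicative.toAdd hpow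
  exact ⟨(smul_eq_zero.1 hsmul).resolve_right hψx, rfl⟩

lemma exists_subgroup_hom_of_coeff_ne_one (hH : LocallyIndicable H)
    (hne : ∃ x ∈ l, x.coeff ≠ 1) :
    ∃ (C : Subgroup H) (ψ : C →* Multiplicative ℤ) (m : List (Syllable C Unit)),
      m.map (Syllable.mapCoeff C.subtype) = l ∧ ∃ x ∈ m, ψ x.coeff ≠ 1 := by
  obtain ⟨x, hx, hx1⟩ := hne
  obtain ⟨C, ψ, hC, c, hc, hψc⟩ := hH.exists_subgroup_hom (l.map Syllable.coeff).finite_toSet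
    ⟨x.coeff, List.mem_map_of_mem hx, hx1⟩
  obtain ⟨m, rfl⟩ := exists_map_mapCoeff_subtype_eq (S := C) (l := l)
    fun z hz => hC (List.mem_map_of_mem hz)
  obtain ⟨z, hz, rfl⟩ : ∃ z ∈ m, z.coeff = c := by
    simpa [Syllable.mapCoeff] using hc
  exact ⟨C, ψ, m, rfl, z, hz, hψc⟩

theorem hasSolution_of_coeff_eq_one (hH : LocallyIndicable H)
    (hsolv : EquationsSolvableBelow l.length) (hl : IsCyclicallyReduced l)
    (hadj : ¬ Cycle.Chain (fun x z : Syllable H Unit => x.sign = z.sign → z.coeff ≠ 1) l) :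
    HasSolution l := by
  by_cases hone : ∀ x ∈ l, x.coeff = 1
  · refine ⟨H, _, MonoidHom.id H, 1, Function.injective_id, ?_⟩
    refine List.prod_eq_one (List.forall_mem_map.2 fun x hx => ?_)
    simp [Syllable.eval, hone x hx]
  push Not at hone
  obtain ⟨C, ψ, m, rfl, hψ⟩ := exists_subgroup_hom_of_coeff_ne_one hH hone
  have hinj := C.subtype_injective
  rw [List.length_map] at hsolv
  rw [isCyclicallyReduced_map_mapCoeff_iff hinj] at hl
  refine (hasSolution_of_coeff_eq_one_of_hom (hH.subgroup C) hsolv hl ?_ hψ).map_mapCoeff hinj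
  rw [← Cycle.map_coe, Cycle.chain_map] at hadj
  exact fun h => hadj (h.imp fun u v huv hsign hv => huv hsign (hinj hv))

/-- The word obtained from `l` by the substitution `t ↦ t * d`, when read cyclically; the state is
the exponent of the preceding syllable. -/
def substitute (d : H) : Bool → List (Syllable H Unit) → List (Syllable H Unit) :=
  transduce (fun _ x => x.sign)
    fun b x => ⟨cond b d 1 * x.coeff * cond x.sign 1 d⁻¹, (), x.sign⟩

lemma evalWord_substitute {L : Type*} [Group L] (f : H →* L) (e : L) (d : H) (b : Bool)
    (l : List (Syllable H Unit)) :
    evalWord f (fun _ => e) (substitute d b l) *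
        f (cond (l.foldl (fun _ x => x.sign) b) d 1) =
      f (cond b d 1) * evalWord f (fun _ => e * f d) l := by
  induction l generalizing b with
  | nil => simp [substitute]
  | cons x l ih =>
    have htail := ih x.sign
    rw [substitute] at htail
    rcases x with ⟨h, _, _ | _⟩ <;>
      simp_all [substitute, Syllable.eval, mul_assoc]

theorem hasSolution_of_not_alternating (hH : LocallyIndicable H)
    (hsolv : EquationsSolvableBelow l.length) (hl : IsCyclicallyReduced l)
    (halt : ¬ Cycle.Chain (fun x z : Syllable H Unit => x.sign ≠ z.sign) l) :
    HasSolution l := by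
  obtain ⟨_ | ⟨v, m⟩, hne, hlm, hsign⟩ := exists_isRotated_of_not_cycleChain halt
  · exact absurd rfl hne
  rw [not_not, List.head_cons] at hsign
  refine HasSolution.of_isRotated (l := v :: m) ?_ hlm.symm
  let d : H := cond v.sign v.coeff⁻¹ v.coeff
  let b : Bool := ((v :: m).getLast hne).sign
  have hb : (v :: m).foldl (fun _ x => x.sign) b = b := by
    calc (v :: m).foldl (fun _ x => x.sign) b
        = ((v :: m).dropLast ++ [(v :: m).getLast hne]).foldl (fun _ x => x.sign) b := by
          rw [List.dropLast_append_getLast hne]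
      _ = b := List.foldl_append ..
  obtain ⟨L, _, f, e, hf, he⟩ : HasSolution (substitute d b (v :: m)) := by
    refine hasSolution_of_coeff_eq_one hH
      (by rwa [substitute, length_transduce, ← hlm.perm.length_eq]) ?_ ?_
    · refine (cycleChain_transduce_iff (fun b x z => ?_) hb).2 (hl.of_isRotated hlm)
      rcases x with ⟨h, _, _ | _⟩ <;> rcases z with ⟨k, _, _ | _⟩ <;> simp [Syllable.NoCancel]
    · rw [substitute, cycleChain_transduce_iff (R := fun x z : Syllable H Unit =>
        x.sign = z.sign → cond x.sign d 1 * z.coeff * cond z.sign 1 d⁻¹ ≠ 1) (fun _ _ _ => Iff.rfl)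
        hb, Cycle.chain_ne_nil _ hne]
      intro h
      refine (List.isChain_cons_cons.1 h).1 hsign ?_
      rw [hsign]
      rcases v with ⟨k, _, _ | _⟩ <;> simp [d]
  refine ⟨L, _, f, e * f d, hf, ?_⟩
  have heval := evalWord_substitute f e d b (v :: m)
  rw [he, hb, one_mul] at heval
  exact left_eq_mul.1 heval

end EqualSigns

/-! ### Equations with alternating exponents -/

section Alternating

lemma cycleChain_and {α : Type*} {R S : α → α → Prop} {l : List α} (hR : Cycle.Chain R l)
    (hS : Cycle.Chain S l) : Cycle.Chain (fun x z => R x z ∧ S x z) l := by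
  rcases eq_or_ne l [] with rfl | hne
  · exact Cycle.Chain.nil _
  rw [Cycle.chain_ne_nil _ hne, List.isChain_iff_forall_rel_of_append_cons_cons] at hR hS ⊢
  exact fun _ _ _ _ heq => ⟨hR heq, hS heq⟩

/-- The word `∏ p.1 * t * p.2 * t⁻¹`. -/
def alternatingWord {H : Type*} (ps : List (H × H)) : List (Syllable H Unit) :=
  ps.flatMap fun p => [⟨p.1, (), true⟩, ⟨p.2, (), false⟩]

variable {H : Type*}

lemma length_alternatingWord (ps : List (H × H)) :
    (alternatingWord ps).length = ps.length * 2 := by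
  simp [alternatingWord]

lemma forall_mem_alternatingWord {p : Syllable H Unit → Prop} {ps : List (H × H)} :
    (∀ x ∈ alternatingWord ps, p x) ↔ ∀ q ∈ ps, p ⟨q.1, (), true⟩ ∧ p ⟨q.2, (), false⟩ := by
  simp only [alternatingWord, List.mem_flatMap, List.mem_cons, List.not_mem_nil, or_false]
  grind

lemma exists_alternatingWord_eq : ∀ l : List (Syllable H Unit),
    l.IsChain (fun x z => x.sign ≠ z.sign) → (∀ x ∈ l.head?, x.sign = true) →
    (∀ x ∈ l.getLast?, x.sign = false) → ∃ ps, alternatingWord ps = l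
  | [], _, _, _ => ⟨[], rfl⟩
  | [x], _, hhead, hlast => by simp_all
  | ⟨g, _, s⟩ :: ⟨h, _, s'⟩ :: l, hchain, hhead, hlast => by
    rw [List.isChain_cons_cons, List.isChain_cons] at hchain
    obtain rfl : s = true := by simpa using hhead
    obtain rfl : s' = false := by simpa using hchain.1
    obtain ⟨ps, rfl⟩ := exists_alternatingWord_eq l hchain.2.2
      (fun x hx => by simpa using hchain.2.1 x hx)
      fun x hx => hlast x (by simp_all [List.getLast?_cons])
    exact ⟨(g, h) :: ps, rfl⟩

lemma exists_alternatingWord_eq_cons {x : Syllable H Unit} {l : List (Syllable H Unit)}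
    (hl : Cycle.Chain (fun x z : Syllable H Unit => x.sign ≠ z.sign) ↑(x :: l))
    (hx : x.sign = true) : ∃ ps, alternatingWord ps = x :: l := by
  rw [Cycle.chain_ne_nil _ (List.cons_ne_nil x l), List.isChain_cons_cons, hx] at hl
  refine exists_alternatingWord_eq _ hl.2 (by simpa using hx) fun z hz => ?_
  obtain ⟨_, rfl⟩ := List.mem_getLast?_eq_getLast hz
  simpa using hl.1

lemma exists_isRotated_alternatingWord {l : List (Syllable H Unit)}
    (hl : Cycle.Chain (fun x z : Syllable H Unit => x.sign ≠ z.sign) l) :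
    ∃ ps, l ~r alternatingWord ps := by
  rcases l with _ | ⟨x, l⟩
  · exact ⟨[], List.IsRotated.refl _⟩
  by_cases hx : x.sign = true
  · obtain ⟨ps, hps⟩ := exists_alternatingWord_eq_cons hl hx
    exact ⟨ps, hps ▸ List.IsRotated.refl _⟩
  rcases l with _ | ⟨z, l⟩
  · simp at hl
  have hrot : x :: z :: l ~r z :: (l ++ [x]) := List.isRotated_append (l := [x]) (l' := z :: l)
  have hxz : x.sign ≠ z.sign := (List.isChain_cons_cons.1 (Cycle.chain_coe_cons .. |>.1 hl)).1
  rw [Cycle.coe_eq_coe.2 hrot] at hl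
  obtain ⟨ps, hps⟩ := exists_alternatingWord_eq_cons hl (by simp_all)
  exact ⟨ps, hps ▸ hrot⟩

lemma coeff_ne_one_of_cycleChain_sign_ne [Group H] {l : List (Syllable H Unit)}
    (hl : Cycle.Chain (fun x z : Syllable H Unit => x.sign ≠ z.sign) l)
    (hred : IsCyclicallyReduced l) {x : Syllable H Unit} (hx : x ∈ l) : x.coeff ≠ 1 := by
  obtain ⟨z, -, hsign, hzx⟩ := exists_rel_of_cycleChain (cycleChain_and hl hred) hx
  exact fun hone => hsign (hzx rfl hone)

variable [Group H]

lemma evalWord_alternatingWord {L : Type*} [Group L] (f : H →* L) (e : L) (ps : List (H × H)) :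
    evalWord f (fun _ => e) (alternatingWord ps) =
      (ps.map fun p => f p.1 * e * f p.2 * e⁻¹).prod := by
  induction ps with
  | nil => rfl
  | cons p ps ih =>
    rw [alternatingWord] at ih
    simp [alternatingWord, Syllable.eval, ih, mul_assoc]

lemma isCyclicallyReduced_alternatingWord {ps : List (H × H)}
    (h : ∀ p ∈ ps, p.1 ≠ 1 ∧ p.2 ≠ 1) : IsCyclicallyReduced (alternatingWord ps) :=
  have hne : ∀ x ∈ alternatingWord ps, x.coeff ≠ 1 := forall_mem_alternatingWord.2 h
  Cycle.chain_of_pairwise fun _ _ z hz _ hz1 => absurd hz1 (hne z hz)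

lemma HasSolution.alternatingWord_of_injective.{u} {A B G H : Type u} [Group A] [Group B] [Group G]
    [Group H] {f₁ : A →* G} {f₂ : B →* G} {i : A →* H} {j : B →* H}
    (hf₁ : Function.Injective f₁) (hf₂ : Function.Injective f₂) (hi : Function.Injective i)
    (hj : Function.Injective j) {ps : List (A × B)}
    (h : HasSolution (alternatingWord (ps.map (Prod.map f₁ f₂)))) :
    HasSolution (alternatingWord (ps.map (Prod.map i j))) := by
  obtain ⟨L, _, f, e, hf, he⟩ := h
  obtain ⟨M, _, g, k, hg, hk, hgk⟩ := exists_amalgam hi (g := f.comp f₁) (hf.comp hf₁)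
  obtain ⟨M', _, m, s, hm, hs⟩ := exists_conj (f := g.comp j) (g := k.comp (f.comp f₂))
    (hg.comp hj) (hk.comp (hf.comp hf₂))
  refine ⟨M', _, m.comp g, m (k e) * s, hm.comp hg, ?_⟩
  have hgk' (a : A) : g (i a) = k (f (f₁ a)) := DFunLike.congr_fun hgk a
  have hs' (b : B) : m (g (j b)) = s⁻¹ * m (k (f (f₂ b))) * s := by
    rw [← MonoidHom.comp_apply f, ← MonoidHom.comp_apply k, ← hs]
    simp [mul_assoc]
  have heval := congrArg (m.comp k) he
  rw [evalWord_alternatingWord, map_one, map_list_prod] at heval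
  rw [evalWord_alternatingWord, ← heval]
  simp [Function.comp_def, hgk', hs', mul_assoc]

end Alternating

section AlternatingSolution

variable {H : Type} [Group H]

lemma hasSolution_alternatingWord_inl_inr {A B : Type} [Group A] [Group B] (hA : LocallyIndicable A)
    (hB : LocallyIndicable B) {ps : List (A × B)} (hps : ∀ p ∈ ps, p.1 ≠ 1 ∧ p.2 ≠ 1)
    (hsolv : EquationsSolvableBelow (ps.length * 2)) {ψ : A →* Multiplicative ℤ}
    {χ : B →* Multiplicative ℤ} (hψ : ∃ p ∈ ps, ψ p.1 ≠ 1) (hχ : ∃ p ∈ ps, χ p.2 ≠ 1) :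
    HasSolution (alternatingWord
      (ps.map (Prod.map (MonoidHom.inl A B) (MonoidHom.inr A B)))) := by
  refine hasSolution_of_independent_heights (hA.prod hB)
    (by rwa [length_alternatingWord, List.length_map])
    (isCyclicallyReduced_alternatingWord ?_)
    (φ := ψ.comp (.fst A B)) (χ := χ.comp (.snd A B)) (y := 1) (z := 1) fun a b hlevel => ?_
  · exact List.forall_mem_map.2 fun p hp => by simpa [Prod.ext_iff] using hps p hp
  · rw [one_zpow, one_zpow, one_mul] at hlevel
    have hone (p : A × B) (hp : p ∈ ps) : ψ p.1 ^ a = 1 ∧ χ p.2 ^ b = 1 := by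
      simpa using forall_mem_alternatingWord.1 (fun x hx => hlevel.map_coeff_eq_one hx) _
        (List.mem_map_of_mem hp)
    obtain ⟨p, hp, hψp⟩ := hψ
    obtain ⟨q, hq, hχq⟩ := hχ
    have ha : a • (ψ p.1).toAdd = 0 := congrArg Multiplicative.toAdd (hone p hp).1
    have hb : b • (χ q.2).toAdd = 0 := congrArg Multiplicative.toAdd (hone q hq).2
    exact ⟨(smul_eq_zero.1 ha).resolve_right hψp, (smul_eq_zero.1 hb).resolve_right hχq⟩

theorem hasSolution_alternatingWord (hH : LocallyIndicable H) {ps : List (H × H)} (hne : ps ≠ [])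
    (hps : ∀ p ∈ ps, p.1 ≠ 1 ∧ p.2 ≠ 1) (hsolv : EquationsSolvableBelow (ps.length * 2)) :
    HasSolution (alternatingWord ps) := by
  obtain ⟨p, hp⟩ := List.exists_mem_of_ne_nil ps hne
  obtain ⟨A, ψ, hA, a, ha, hψa⟩ := hH.exists_subgroup_hom (ps.map Prod.fst).finite_toSet
    ⟨p.1, List.mem_map_of_mem hp, (hps p hp).1⟩
  obtain ⟨B, χ, hB, b, hb, hχb⟩ := hH.exists_subgroup_hom (ps.map Prod.snd).finite_toSet
    ⟨p.2, List.mem_map_of_mem hp, (hps p hp).2⟩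
  obtain ⟨qs, rfl⟩ : ps ∈ Set.range (List.map (Prod.map A.subtype B.subtype)) := by
    rw [Set.range_list_map]
    exact fun q hq =>
      ⟨(⟨q.1, hA (List.mem_map_of_mem hq)⟩, ⟨q.2, hB (List.mem_map_of_mem hq)⟩), rfl⟩
  refine HasSolution.alternatingWord_of_injective (f₁ := .inl A B) (f₂ := .inr A B)
    (Prod.mk_left_injective 1) (Prod.mk_right_injective 1) A.subtype_injective
    B.subtype_injective <|
    hasSolution_alternatingWord_inl_inr (hH.subgroup A) (hH.subgroup B) (fun q hq => ?_)
      (by rwa [List.length_map] at hsolv) (ψ := ψ) (χ := χ) ?_ ?_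
  · simpa using hps _ (List.mem_map_of_mem hq)
  · obtain ⟨q, hq, rfl⟩ : ∃ q ∈ qs, q.1 = a := by simpa using ha
    exact ⟨q, hq, hψa⟩
  · obtain ⟨q, hq, rfl⟩ : ∃ q ∈ qs, q.2 = b := by simpa using hb
    exact ⟨q, hq, hχb⟩

end AlternatingSolution

theorem equationsSolvableBelow (n : ℕ) : EquationsSolvableBelow n := by
  induction n with
  | zero => exact fun _ _ _ _ _ _ h => absurd h (Nat.not_lt_zero _)
  | succ n ih =>
    intro H _ hH l hne hl hlen
    have hsolv : EquationsSolvableBelow l.length := fun H _ hH m hm hmr hmlen =>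
      ih H hH m hm hmr (hmlen.trans_le (Nat.lt_succ_iff.1 hlen))
    by_cases halt : Cycle.Chain (fun x z : Syllable H Unit => x.sign ≠ z.sign) l
    · obtain ⟨ps, hlps⟩ := exists_isRotated_alternatingWord halt
      refine HasSolution.of_isRotated (hasSolution_alternatingWord hH ?_ ?_ ?_) hlps.symm
      · rintro rfl
        exact hne (List.isRotated_nil_iff.1 hlps)
      · exact forall_mem_alternatingWord.1 fun x hx =>
          coeff_ne_one_of_cycleChain_sign_ne halt hl (hlps.mem_iff.2 hx)
      · rwa [← length_alternatingWord, ← hlps.perm.length_eq]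
    · exact hasSolution_of_not_alternating hH hsolv hl halt

/-! ### Free products -/

lemma disjoint_normalClosure_of_injective {G K : Type*} [Group G] [Group K] {f : G →* K}
    (hf : Function.Injective f) {S : Subgroup G} {S' : Subgroup K} (hS : S ≤ S'.comap f) {r : G}
    (hd : Disjoint S' (Subgroup.normalClosure {f r})) :
    Disjoint S (Subgroup.normalClosure {r}) := by
  have hcomap : Subgroup.normalClosure {r} ≤ (Subgroup.normalClosure {f r}).comap f :=
    Subgroup.normalClosure_le_normal
      (Set.singleton_subset_iff.2 (Subgroup.subset_normalClosure rfl))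
  refine Subgroup.disjoint_def.2 fun {x} hx hxN => hf ?_
  rw [map_one]
  exact Subgroup.disjoint_def.1 hd (hS hx) (hcomap hxN)

section FreeProduct

open AdjoinFree

section

variable {N : Type*} {G : N → Type*} [∀ n, Group (G n)] [DecidableEq N]

/-- The homomorphism that conjugates the factor `G n` of the direct product of all factors by the
variable `n`. It embeds the free product into the group of words with coefficients in the direct
product. -/
def conjHom : CoprodI G →* AdjoinFree (∀ n, G n) N :=
  CoprodI.lift fun n => (MulAut.conj (var n)).toMonoidHom.comp (of.comp (MonoidHom.mulSingle G n))

/-- The word of the image under `conjHom` of the product of a list of elements of the factors. -/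
def conjWord (l : List (Σ n, G n)) : List (Syllable (∀ n, G n) N) :=
  l.flatMap fun d => [⟨1, d.1, true⟩, ⟨Pi.mulSingle d.1 d.2, d.1, false⟩]

lemma conjWord_cons (d : Σ n, G n) (l : List (Σ n, G n)) :
    conjWord (d :: l) = ⟨1, d.1, true⟩ :: ⟨Pi.mulSingle d.1 d.2, d.1, false⟩ :: conjWord l :=
  rfl

lemma conjHom_prod_of (l : List (Σ n, G n)) :
    conjHom (l.map fun d => CoprodI.of d.2).prod = word (conjWord l) := by
  induction l with
  | nil => simp [conjWord, word]
  | cons d l ih =>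
    rw [List.map_cons, List.prod_cons, map_mul, ih, conjWord_cons]
    simp [conjHom, word, Syllable.eval, mul_assoc]

lemma isChain_conjWord {l : List (Σ n, G n)} (hl : l.IsChain fun d d' => d.1 ≠ d'.1)
    (hne : ∀ d ∈ l, d.2 ≠ 1) : (conjWord l).IsChain Syllable.NoCancel := by
  induction l with
  | nil => exact List.isChain_nil
  | cons d l ih =>
    have htail := ih hl.tail fun d' hd' => hne d' (List.mem_cons_of_mem d hd')
    have hd : Syllable.NoCancel ⟨1, d.1, true⟩ ⟨Pi.mulSingle d.1 d.2, d.1, false⟩ :=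
      fun _ hone => absurd (Pi.mulSingle_eq_one_iff.1 hone) (hne d List.mem_cons_self)
    rcases l with _ | ⟨d', l⟩
    · exact List.isChain_pair.2 hd
    · exact .cons_cons hd (.cons_cons (fun hvar => absurd hvar hl.rel) htail)

lemma isCyclicallyReduced_conjWord {l : List (Σ n, G n)}
    (hl : Cycle.Chain (fun d d' => d.1 ≠ d'.1) (l : Cycle (Σ n, G n))) (hne : ∀ d ∈ l, d.2 ≠ 1) :
    IsCyclicallyReduced (conjWord l) := by
  rcases l with _ | ⟨d, l⟩
  · exact Cycle.Chain.nil _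
  · have hchain := isChain_conjWord ((Cycle.chain_coe_cons _ d l).1 hl) (by grind)
    refine (Cycle.chain_coe_cons _ _ _).2 (hchain.prefix ?_)
    exact ⟨[⟨Pi.mulSingle d.1 d.2, d.1, false⟩], by simp [conjWord, List.flatMap_def]⟩

lemma conjHom_injective : Function.Injective (conjHom (G := G)) := by
  classical
  refine (injective_iff_map_eq_one _).2 fun x hx => ?_
  obtain ⟨w, rfl⟩ := CoprodI.Word.equiv.symm.surjective x
  rcases hw : w.toList with _ | ⟨d, l⟩
  · exact congrArg (fun l => (l.map fun d : Σ n, G n => CoprodI.of d.2).prod) hw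
  · refine absurd ⟨1, ?_⟩ (word_notMem_range_of (isChain_conjWord w.chain_ne w.ne_one) ?_)
    · rw [hw]
      exact List.cons_ne_nil _ _
    · rw [map_one, ← conjHom_prod_of]
      exact hx.symm

end

theorem disjoint_iSup_range_of_normalClosure {N : Type} {G : N → Type} [∀ n, Group (G n)]
    (hG : ∀ n, LocallyIndicable (G n)) {l : List (Σ n, G n)}
    (hl : Cycle.Chain (fun d d' => d.1 ≠ d'.1) (l : Cycle (Σ n, G n))) (hne : ∀ d ∈ l, d.2 ≠ 1)
    {d : Σ n, G n} (hd : d ∈ l) :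
    Disjoint (⨆ k ≠ d.1, (CoprodI.of : G k →* CoprodI G).range)
      (Subgroup.normalClosure {(l.map fun d => CoprodI.of d.2).prod}) := by
  classical
  refine disjoint_normalClosure_of_injective conjHom_injective
    (S' := subgroupOn (∀ n, G n) {d.1}ᶜ) (iSup₂_le ?_) ?_
  · rintro k hk _ ⟨g, rfl⟩
    have hvar : var k ∈ subgroupOn (∀ n, G n) {d.1}ᶜ := var_mem_subgroupOn hk
    simpa [conjHom] using
      mul_mem (mul_mem hvar (of_mem_subgroupOn _ (Pi.mulSingle k g))) (inv_mem hvar)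
  · rw [conjHom_prod_of]
    refine AdjoinFree.disjoint_normalClosure (.pi hG) (equationsSolvableBelow _)
      (isCyclicallyReduced_conjWord hl hne) ⟨⟨1, d.1, true⟩, ?_, rfl⟩ (Nat.lt_succ_self _)
    exact List.mem_flatMap.2 ⟨d, hd, List.mem_cons_self⟩

end FreeProduct

/-! ### The subgroups generated by the factors -/

section Factors

open scoped Classical in
variable (U) in
/-- The retraction of `U ∗ (∗ᵢ V_i)` killing the factors outside `s`. -/
noncomputable def factorRetraction (s : Set I) : Coprod U (CoprodI V) →* Coprod U (CoprodI V) :=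
  Coprod.lift Coprod.inl (CoprodI.lift fun i => if i ∈ s then Coprod.inr.comp CoprodI.of else 1)

section

variable {V} {s t : Set I}

lemma inl_mem_factorSubgroup (s : Set I) (u : U) : Coprod.inl u ∈ factorSubgroup V s :=
  Subgroup.subset_closure (Or.inl ⟨u, rfl⟩)

lemma inr_of_mem_factorSubgroup {k : I} (hk : k ∈ s) (v : V k) :
    (Coprod.inr (CoprodI.of v) : Coprod U (CoprodI V)) ∈ factorSubgroup V s :=
  Subgroup.subset_closure (Or.inr (Set.mem_iUnion₂.2 ⟨k, hk, v, rfl⟩))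

lemma factorSubgroup_le {K : Subgroup (Coprod U (CoprodI V))} (hU : ∀ u, Coprod.inl u ∈ K)
    (hV : ∀ k ∈ s, ∀ v : V k, Coprod.inr (CoprodI.of v) ∈ K) : factorSubgroup V s ≤ K := by
  refine (Subgroup.closure_le K).2 (Set.union_subset ?_ (Set.iUnion₂_subset fun k hk => ?_))
  · rintro _ ⟨u, rfl⟩
    exact hU u
  · rintro _ ⟨v, rfl⟩
    exact hV k hk v

lemma factorSubgroup_mono : Monotone (factorSubgroup V : Set I → Subgroup (Coprod U (CoprodI V))) :=
  fun _ _ hst => factorSubgroup_le (inl_mem_factorSubgroup _)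
    fun _ hk => inr_of_mem_factorSubgroup (hst hk)

lemma eqOn_factorSubgroup {L : Type*} [Group L] {f g : Coprod U (CoprodI V) →* L}
    (hU : ∀ u, f (Coprod.inl u) = g (Coprod.inl u))
    (hV : ∀ k ∈ s, ∀ v : V k, f (Coprod.inr (CoprodI.of v)) = g (Coprod.inr (CoprodI.of v))) :
    Set.EqOn f g (factorSubgroup V s : Subgroup (Coprod U (CoprodI V))) :=
  factorSubgroup_le (K := f.eqLocus g) hU hV

lemma isAmalgamFamily_factorSubgroup :
    IsAmalgamFamily (factorSubgroup V : Set I → Subgroup (Coprod U (CoprodI V))) where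
  mono := factorSubgroup_mono
  glue s t L _ f g hfg := by
    classical
    refine ⟨Coprod.lift (f.comp Coprod.inl) (CoprodI.lift fun k =>
        (if k ∈ s then f else g).comp (Coprod.inr.comp CoprodI.of)),
      eqOn_factorSubgroup (by simp) fun k hk v => by simp [hk],
      eqOn_factorSubgroup (fun u => ?_) fun k hk v => ?_⟩
    · simpa using hfg (inl_mem_factorSubgroup _ u)
    · by_cases hks : k ∈ s
      · simpa [hks] using hfg (inr_of_mem_factorSubgroup (Set.mem_inter hks hk) v)
      · simp [hks]

lemma factorRetraction_inl (s : Set I) (u : U) :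
    factorRetraction U V s (Coprod.inl u) = Coprod.inl u := by
  simp [factorRetraction]

lemma factorRetraction_of_mem {k : I} (hk : k ∈ s) (v : V k) :
    factorRetraction U V s (Coprod.inr (CoprodI.of v)) = Coprod.inr (CoprodI.of v) := by
  simp [factorRetraction, hk]

lemma factorRetraction_of_notMem {k : I} (hk : k ∉ s) (v : V k) :
    factorRetraction U V s (Coprod.inr (CoprodI.of v)) = 1 := by
  simp [factorRetraction, hk]

lemma factorRetraction_eq_self {x : Coprod U (CoprodI V)} (hx : x ∈ factorSubgroup V s) :
    factorRetraction U V s x = x :=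
  eqOn_factorSubgroup (g := MonoidHom.id _) (factorRetraction_inl s)
    (fun _ hk => factorRetraction_of_mem hk) hx

lemma factorSubgroup_inf_le :
    factorSubgroup V s ⊓ factorSubgroup V t ≤
      (factorSubgroup V (s ∩ t) : Subgroup (Coprod U (CoprodI V))) := by
  rintro x ⟨hs, ht⟩
  have hle : factorSubgroup V s ≤
      (factorSubgroup V (s ∩ t)).comap (factorRetraction U V t) := by
    refine factorSubgroup_le (fun u => ?_) fun k hk v => ?_
    · rw [Subgroup.mem_comap, factorRetraction_inl]
      exact inl_mem_factorSubgroup _ u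
    · rw [Subgroup.mem_comap]
      by_cases hkt : k ∈ t
      · rw [factorRetraction_of_mem hkt]
        exact inr_of_mem_factorSubgroup (Set.mem_inter hk hkt) v
      · rw [factorRetraction_of_notMem hkt]
        exact one_mem _
  simpa [factorRetraction_eq_self ht] using hle hs

lemma exists_finset_mem_factorSubgroup (x : Coprod U (CoprodI V)) :
    ∃ T : Finset I, x ∈ factorSubgroup V T := by
  classical
  have hmul {y z : Coprod U (CoprodI V)} : (∃ T : Finset I, y ∈ factorSubgroup V T) →
      (∃ T : Finset I, z ∈ factorSubgroup V T) → ∃ T : Finset I, y * z ∈ factorSubgroup V T := by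
    rintro ⟨S, hS⟩ ⟨T, hT⟩
    exact ⟨S ∪ T, mul_mem (factorSubgroup_mono (by simp) hS) (factorSubgroup_mono (by simp) hT)⟩
  induction x using Coprod.induction_on with
  | inl u => exact ⟨∅, inl_mem_factorSubgroup _ u⟩
  | inr y =>
    induction y using CoprodI.induction_on with
    | one => exact ⟨∅, by simp⟩
    | of k v => exact ⟨{k}, inr_of_mem_factorSubgroup (by simp) v⟩
    | mul y z hy hz => simpa using hmul hy hz
  | mul y z hy hz => exact hmul hy hz

lemma mem_factorSubgroup_usesFactor (x : Coprod U (CoprodI V)) :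
    x ∈ factorSubgroup V {k | UsesFactor V x k} := by
  classical
  obtain ⟨T, hT⟩ := exists_minimal_of_wellFoundedLT (fun T : Finset I => x ∈ factorSubgroup V T)
    (exists_finset_mem_factorSubgroup x)
  refine factorSubgroup_mono (fun k hk hx => ?_) hT.prop
  have herase : x ∈ factorSubgroup V (T.erase k : Finset I) :=
    factorSubgroup_mono (by simp [Set.sdiff_eq]) (factorSubgroup_inf_le ⟨hT.prop, hx⟩)
  exact Finset.notMem_erase k T (hT.le_of_le herase (T.erase_subset k) hk)

end

/-- The factor groups of `U ∗ (∗ᵢ V_i)`, where `none` is the index of `U`. -/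
def Factor (U : Type) {I : Set ℤ} (V : I → Type) : Option I → Type
  | none => U
  | some i => V i

instance (n : Option I) : Group (Factor U V n) :=
  match n with
  | none => ‹Group U›
  | some i => ‹∀ i, Group (V i)› i

variable (U) in
/-- The inclusion of a factor into `U ∗ (∗ᵢ V_i)`. -/
def factorHom : (n : Option I) → Factor U V n →* Coprod U (CoprodI V)
  | none => Coprod.inl
  | some _ => Coprod.inr.comp (CoprodI.of (M := V))

variable (U) in
/-- The identification of `U ∗ (∗ᵢ V_i)` with the free product of a single family of groups. -/
def toCoprodIFactor : Coprod U (CoprodI V) →* CoprodI (Factor U V) :=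
  Coprod.lift (CoprodI.of (M := Factor U V) (i := none))
    (CoprodI.lift fun i => CoprodI.of (M := Factor U V) (i := some i))

variable {V}

lemma locallyIndicable_factor (hU : LocallyIndicable U) (hV : ∀ i, LocallyIndicable (V i)) :
    ∀ n, LocallyIndicable (Factor U V n)
  | none => hU
  | some i => hV i

lemma toCoprodIFactor_factorHom :
    ∀ (n : Option I) (g : Factor U V n), toCoprodIFactor U V (factorHom U V n g) = CoprodI.of g
  | none, g => Coprod.lift_apply_inl _ _ g
  | some _, g => (Coprod.lift_apply_inr _ _ _).trans (CoprodI.lift_of _ g)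

lemma toCoprodIFactor_injective : Function.Injective (toCoprodIFactor U V) := by
  have hinv : (CoprodI.lift (factorHom U V)).comp (toCoprodIFactor U V) = MonoidHom.id _ := by
    refine Coprod.hom_ext ?_ (CoprodI.ext_hom _ _ fun i => ?_)
    · ext u
      have hu := toCoprodIFactor_factorHom (V := V) none u
      exact (congrArg _ hu).trans (CoprodI.lift_of (factorHom U V) _)
    · ext v
      have hv := toCoprodIFactor_factorHom (U := U) (some i) v
      exact (congrArg _ hv).trans (CoprodI.lift_of (factorHom U V) _)
  exact Function.LeftInverse.injective (DFunLike.congr_fun hinv)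

lemma factorHom_mem_factorSubgroup {s : Set I} : ∀ {n : Option I}, (∀ i, n = some i → i ∈ s) →
    ∀ g : Factor U V n, factorHom U V n g ∈ factorSubgroup V s
  | none, _, g => inl_mem_factorSubgroup s g
  | some i, hn, g => inr_of_mem_factorSubgroup (hn i rfl) g

lemma isLetter_iff {x : Coprod U (CoprodI V)} :
    IsLetter V x ↔ ∃ d : Σ n, Factor U V n, d.2 ≠ 1 ∧ factorHom U V d.1 d.2 = x := by
  constructor
  · rintro (⟨u, hu, rfl⟩ | ⟨i, v, hv, rfl⟩)
    · exact ⟨⟨none, u⟩, hu, rfl⟩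
    · exact ⟨⟨some i, v⟩, hv, rfl⟩
  · rintro ⟨⟨_ | i, g⟩, hg, rfl⟩
    · exact Or.inl ⟨g, hg, rfl⟩
    · exact Or.inr ⟨i, g, hg, rfl⟩

lemma sameFactor_factorHom : ∀ {n : Option I} (g g' : Factor U V n),
    SameFactor V (factorHom U V n g) (factorHom U V n g')
  | none, g, g' => Or.inl ⟨g, g', rfl, rfl⟩
  | some i, g, g' => Or.inr ⟨i, g, g', rfl, rfl⟩

lemma fst_ne_of_not_sameFactor {d d' : Σ n, Factor U V n}
    (h : ¬ SameFactor V (factorHom U V d.1 d.2) (factorHom U V d'.1 d'.2)) : d.1 ≠ d'.1 := by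
  obtain ⟨n, g⟩ := d
  obtain ⟨n', g'⟩ := d'
  rintro (rfl : n = n')
  exact h (sameFactor_factorHom g g')

lemma CyclicallyReducedWord.exists_list {r : Coprod U (CoprodI V)}
    (hr : CyclicallyReducedWord V r) :
    ∃ l : List (Σ n, Factor U V n), (∀ d ∈ l, d.2 ≠ 1) ∧
      (l.map fun d => factorHom U V d.1 d.2).prod = r ∧
      (2 ≤ l.length → Cycle.Chain (fun d d' => d.1 ≠ d'.1) (l : Cycle (Σ n, Factor U V n))) := by
  obtain ⟨L, rfl, hletter, hchain, hcyc⟩ := hr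
  obtain ⟨l, hne, rfl⟩ : ∃ l : List (Σ n, Factor U V n), (∀ d ∈ l, d.2 ≠ 1) ∧
      l.map (fun d => factorHom U V d.1 d.2) = L := by
    obtain ⟨l, rfl⟩ : L ∈ Set.range (List.map fun d : {d : Σ n, Factor U V n // d.2 ≠ 1} =>
        factorHom U V d.1.1 d.1.2) := by
      rw [Set.range_list_map]
      intro x hx
      obtain ⟨d, hd, rfl⟩ := isLetter_iff.1 (hletter x hx)
      exact ⟨⟨d, hd⟩, rfl⟩
    exact ⟨l.map Subtype.val, List.forall_mem_map.2 fun d _ => d.2, by rw [List.map_map]; rfl⟩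
  refine ⟨l, hne, rfl, fun hlen => (Cycle.chain_ne_nil _ (List.ne_nil_of_length_pos
    (by lia))).2 (List.isChain_cons.2 ⟨fun d hd => ?_, ?_⟩)⟩
  · refine (fst_ne_of_not_sameFactor (hcyc (by simpa using hlen) _ _ ?_ ?_)).symm
    · simp [Option.mem_def.1 hd]
    · rw [List.getLast?_map, List.getLast?_eq_some_getLast, Option.map_some]
  · exact ((List.isChain_map _).1 hchain).imp fun _ _ => fst_ne_of_not_sameFactor

lemma disjoint_normalClosure_inr_of {i : I} (v : V i) :
    Disjoint (factorSubgroup V {k | k ≠ i} : Subgroup (Coprod U (CoprodI V)))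
      (Subgroup.normalClosure {Coprod.inr (CoprodI.of v)}) := by
  have hker : Subgroup.normalClosure {Coprod.inr (CoprodI.of v)} ≤
      (factorRetraction U V {k | k ≠ i}).ker :=
    Subgroup.normalClosure_le_normal
      (Set.singleton_subset_iff.2 (factorRetraction_of_notMem (by simp) v))
  refine Subgroup.disjoint_def.2 fun {x} hx hxN => ?_
  rw [← factorRetraction_eq_self hx]
  exact hker hxN

lemma factorSubgroup_ne_le_comap (i : I) :
    factorSubgroup V {k | k ≠ i} ≤
      (⨆ k ≠ some i, (CoprodI.of : Factor U V k →* CoprodI (Factor U V)).range).comap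
        (toCoprodIFactor U V) := by
  have hof {n : Option I} (hn : n ≠ some i) (g : Factor U V n) :
      toCoprodIFactor U V (factorHom U V n g) ∈
        ⨆ k ≠ some i, (CoprodI.of : Factor U V k →* CoprodI (Factor U V)).range := by
    rw [toCoprodIFactor_factorHom]
    exact Subgroup.mem_iSup_of_mem n (Subgroup.mem_iSup_of_mem hn ⟨g, rfl⟩)
  exact factorSubgroup_le (fun u => hof (n := none) (by simp) u)
    fun k hk v => hof (n := some k) (by simpa using hk) v

theorem disjoint_normalClosure_of_usesFactor (hU : LocallyIndicable U)
    (hV : ∀ i, LocallyIndicable (V i)) {r : Coprod U (CoprodI V)}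
    (hr : CyclicallyReducedWord V r) {i : I} (hi : UsesFactor V r i) :
    Disjoint (factorSubgroup V {k | k ≠ i}) (Subgroup.normalClosure {r}) := by
  obtain ⟨l, hne, rfl, hcyc⟩ := hr.exists_list
  obtain ⟨⟨n, g⟩, hd, rfl : n = some i⟩ : ∃ d ∈ l, d.1 = some i := by
    by_contra! hl
    refine hi (Subgroup.list_prod_mem _ (List.forall_mem_map.2 fun d hd => ?_))
    refine factorHom_mem_factorSubgroup (fun k hk => ?_) d.2
    rintro rfl
    exact hl d hd hk
  rcases le_or_gt 2 l.length with hlen | hlen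
  · have hfree := disjoint_iSup_range_of_normalClosure (locallyIndicable_factor hU hV)
      (hcyc hlen) hne hd
    refine disjoint_normalClosure_of_injective toCoprodIFactor_injective
      (factorSubgroup_ne_le_comap i) ?_
    simpa only [map_list_prod, List.map_map, Function.comp_def, toCoprodIFactor_factorHom]
      using hfree
  · obtain rfl : l = [⟨some i, g⟩] := by
      obtain ⟨d, rfl⟩ := List.length_eq_one_iff.1
        (le_antisymm (Nat.le_of_lt_succ hlen) (List.length_pos_of_mem hd))
      rw [List.mem_singleton.1 hd]
    rw [List.map_singleton, List.prod_singleton]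
    exact disjoint_normalClosure_inr_of g

lemma disjoint_preimage_normalClosure_of_usesFactor (hU : LocallyIndicable U)
    (hV : ∀ i, LocallyIndicable (V i)) {r : Coprod U (CoprodI V)}
    (hr : CyclicallyReducedWord V r) {n : ℤ} (hn : ∃ h : n ∈ I, UsesFactor V r ⟨n, h⟩) :
    Disjoint (factorSubgroup V (Subtype.val ⁻¹' {n}ᶜ)) (Subgroup.normalClosure {r}) := by
  obtain ⟨h, huse⟩ := hn
  refine (disjoint_normalClosure_of_usesFactor hU hV hr huse).mono_left (factorSubgroup_mono ?_)
  rintro k hk rfl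
  exact hk rfl

end Factors

/-- **Staggered Freiheitssatz over locally indicable groups.** If `w` lies in the
normal closure of the staggered family `r_j` and only uses the factors `V_k` with
`α ≤ k ≤ ω`, then `w` lies in the normal closure of those `r_ℓ` with
`α ≤ α_{r_ℓ}` and `ω_{r_ℓ} ≤ ω`. -/
theorem staggered_freiheitssatz
    (hU : LocallyIndicable U)
    (hVnt : ∀ i, Nontrivial (V i)) (hVli : ∀ i, LocallyIndicable (V i))
    {J : Set ℤ} (r : J → Coprod U (CoprodI V)) (a o : J → ℤ)
    (hcr : ∀ j, CyclicallyReducedWord V (r j))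
    (ha : ∀ j, IsLeast {i : ℤ | ∃ h : i ∈ I, UsesFactor V (r j) ⟨i, h⟩} (a j))
    (ho : ∀ j, IsGreatest {i : ℤ | ∃ h : i ∈ I, UsesFactor V (r j) ⟨i, h⟩} (o j))
    (hstag : ∀ j k : J, (j : ℤ) < (k : ℤ) → a j < a k ∧ o j < o k)
    (w : Coprod U (CoprodI V)) (hw1 : w ≠ 1)
    (hwN : w ∈ Subgroup.normalClosure (Set.range r))
    (α ω : ℤ)
    (hwuse : w ∈ factorSubgroup V {k : I | α ≤ (k : ℤ) ∧ (k : ℤ) ≤ ω}) :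
    w ∈ Subgroup.normalClosure (r '' {ℓ : J | α ≤ a ℓ ∧ o ℓ ≤ ω}) := by
  have hIcc (j : J) : {k : I | UsesFactor V (r j) k} ⊆ Subtype.val ⁻¹' Set.Icc (a j) (o j) :=
    fun k hk => Set.mem_Icc.2 ⟨(ha j).2 ⟨k.2, hk⟩, (ho j).2 ⟨k.2, hk⟩⟩
  have hdisjoint {n : ℤ} (j : J) (hn : ∃ h : n ∈ I, UsesFactor V (r j) ⟨n, h⟩) :=
    disjoint_preimage_normalClosure_of_usesFactor hU hVli (hcr j) hn
  have hstaggered : IsStaggered (fun S : Set ℤ => factorSubgroup V (Subtype.val ⁻¹' S)) r a o :=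
    { amalgam := isAmalgamFamily_factorSubgroup.preimage Subtype.val
      strictMono_left := fun j k hjk => (hstag j k hjk).1
      strictMono_right := fun j k hjk => (hstag j k hjk).2
      mem := fun j => factorSubgroup_mono (hIcc j) (mem_factorSubgroup_usesFactor (r j))
      left_le_right := fun j => (ho j).2 (ha j).1
      disjoint_left := fun j => hdisjoint j (ha j).1
      disjoint_right := fun j => hdisjoint j (ho j).1 }
  exact hstaggered.mem_normalClosure hwuse hwN
end
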